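/- arXiv:2311.11956 — 5 statements merged into one kernel-verified Lean document; each statement's English description precedes it below -/
import Mathlib

section
/- Let ψ be increasing with continuous positive derivative ψ' on [θ₁,T₁]×-relevant intervals, 0 < μ₁, μ₂ < 1, and let φ, ϕ : [θ₁,T₁]×[θ₂,T₂] → ℝ be continuous. Then ∫_{θ₁}^{T₁}∫_{θ₂}^{T₂} (I_θ^{μ;ψ}φ)(ξ₁,ξ₂) ϕ(ξ₁,ξ₂) dξ₂ dξ₁ = ∫_{θ₁}^{T₁}∫_{θ₂}^{T₂} φ(ξ₁,ξ₂) ψ'(ξ₁)ψ'(ξ₂) (I_T^{μ;ψ}(ϕ/(ψ'·ψ')))(ξ₁,ξ₂) dξ₂ dξ₁, i.e. the left and right two-variable ψ-Riemann–Liouville fractional integrals are adjoint to each other (fractional integration by parts). -/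
open intervalIntegral

/-- The left two-variable `ψ`-Riemann–Liouville fractional integral of order `(μ₁, μ₂)`
with base point `(θ₁, θ₂)`:
`(I_θ^{μ;ψ} f)(ξ₁,ξ₂) = (1/(Γ(μ₁)Γ(μ₂))) ∫_{θ₁}^{ξ₁}∫_{θ₂}^{ξ₂}
  ψ'(s₁)ψ'(s₂)(ψ(ξ₁)−ψ(s₁))^{μ₁−1}(ψ(ξ₂)−ψ(s₂))^{μ₂−1} f(s₁,s₂) ds₂ ds₁`. -/
noncomputable def leftFracInt (ψ ψ' : ℝ → ℝ) (μ₁ μ₂ θ₁ θ₂ : ℝ) (f : ℝ → ℝ → ℝ)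
    (ξ₁ ξ₂ : ℝ) : ℝ :=
  (1 / (Real.Gamma μ₁ * Real.Gamma μ₂)) *
    ∫ s₁ in θ₁..ξ₁, ∫ s₂ in θ₂..ξ₂,
      ψ' s₁ * ψ' s₂ * (ψ ξ₁ - ψ s₁) ^ (μ₁ - 1) * (ψ ξ₂ - ψ s₂) ^ (μ₂ - 1) * f s₁ s₂

/-- The right two-variable `ψ`-Riemann–Liouville fractional integral of order `(μ₁, μ₂)`
with endpoint `(T₁, T₂)`:
`(I_T^{μ;ψ} f)(ξ₁,ξ₂) = (1/(Γ(μ₁)Γ(μ₂))) ∫_{ξ₁}^{T₁}∫_{ξ₂}^{T₂}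
  ψ'(s₁)ψ'(s₂)(ψ(s₁)−ψ(ξ₁))^{μ₁−1}(ψ(s₂)−ψ(ξ₂))^{μ₂−1} f(s₁,s₂) ds₂ ds₁`. -/
noncomputable def rightFracInt (ψ ψ' : ℝ → ℝ) (μ₁ μ₂ T₁ T₂ : ℝ) (f : ℝ → ℝ → ℝ)
    (ξ₁ ξ₂ : ℝ) : ℝ :=
  (1 / (Real.Gamma μ₁ * Real.Gamma μ₂)) *
    ∫ s₁ in ξ₁..T₁, ∫ s₂ in ξ₂..T₂,
      ψ' s₁ * ψ' s₂ * (ψ s₁ - ψ ξ₁) ^ (μ₁ - 1) * (ψ s₂ - ψ ξ₂) ^ (μ₂ - 1) * f s₁ s₂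

open MeasureTheory in
theorem aux_mp {α β γ δ : Type*} [MeasurableSpace α] [MeasurableSpace β] [MeasurableSpace γ]
    [MeasurableSpace δ] (a : Measure α) (b : Measure β) (c : Measure γ) (d : Measure δ)
    [SFinite a] [SFinite b] [SFinite c] [SFinite d] :
    MeasurePreserving (fun p : (α × β) × (γ × δ) => ((p.1.1, p.2.1), (p.1.2, p.2.2)))
      ((a.prod b).prod (c.prod d)) ((a.prod c).prod (b.prod d)) := by
  have h1 := measurePreserving_prodAssoc a b (c.prod d)
  have h2 := (measurePreserving_prodAssoc b c d).symm
  have h3 : MeasurePreserving (Prod.map Prod.swap id) ((b.prod c).prod d) ((c.prod b).prod d) :=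
    Measure.measurePreserving_swap.prod (MeasurePreserving.id d)
  have h4 := measurePreserving_prodAssoc c b d
  have h5 := (MeasurePreserving.id a).prod ((h4.comp h3).comp h2)
  have h6 := (measurePreserving_prodAssoc a c (b.prod d)).symm
  exact (h6.comp h5).comp h1

open MeasureTheory in
theorem aux_swap (a b : Measure ℝ) [SFinite a] [SFinite b] (F : (ℝ × ℝ) × (ℝ × ℝ) → ℝ)
    (hF : Integrable F ((a.prod b).prod (a.prod b))) :
    (∫ x₁, ∫ x₂, ∫ s₁, ∫ s₂, F ((x₁, x₂), (s₁, s₂)) ∂b ∂a ∂b ∂a) =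
      ∫ p, F p ∂((a.prod b).prod (a.prod b)) := by
  rw [integral_prod _ hF]
  have hG := hF.integral_prod_left
  have hae : (fun x => ∫ y, F (x, y) ∂(a.prod b)) =ᵐ[a.prod b]
      fun x => ∫ s₁, ∫ s₂, F (x, (s₁, s₂)) ∂b ∂a := by
    filter_upwards [hF.prod_right_ae] with x hx
    exact integral_prod _ hx
  rw [integral_congr_ae hae, integral_prod _ (hG.congr hae)]

open MeasureTheory in
theorem aux_left (a b x : ℝ) (hx : x ∈ Set.Ioc a b) (g : ℝ → ℝ) :
    (∫ s in a..x, g s) = ∫ s in Set.Ioc a b, if s < x then g s else 0 := by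
  rw [intervalIntegral.integral_of_le hx.1.le, integral_Ioc_eq_integral_Ioo]
  have : (fun s => if s < x then g s else 0) = (Set.Iio x).indicator g := by
    ext s; simp [Set.indicator_apply]
  rw [this, setIntegral_indicator measurableSet_Iio]
  congr 2
  ext s
  simp only [Set.mem_Ioo, Set.mem_inter_iff, Set.mem_Ioc, Set.mem_Iio]
  constructor
  · rintro ⟨h1, h2⟩; exact ⟨⟨h1, h2.le.trans hx.2⟩, h2⟩
  · rintro ⟨h1, h2⟩; exact ⟨h1.1, h2⟩

open MeasureTheory in
theorem aux_right (a b x : ℝ) (hx : x ∈ Set.Ioc a b) (g : ℝ → ℝ) :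
    (∫ s in x..b, g s) = ∫ s in Set.Ioc a b, if x < s then g s else 0 := by
  rw [intervalIntegral.integral_of_le hx.2]
  have : (fun s => if x < s then g s else 0) = (Set.Ioi x).indicator g := by
    ext s; simp [Set.indicator_apply]
  rw [this, setIntegral_indicator measurableSet_Ioi]
  congr 2
  ext s
  simp only [Set.mem_inter_iff, Set.mem_Ioc, Set.mem_Ioi]
  constructor
  · rintro ⟨h1, h2⟩; exact ⟨⟨hx.1.trans h1, h2⟩, h1⟩
  · rintro ⟨h1, h2⟩; exact ⟨h2, h1.2⟩

/-- The truncated kernel. -/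
noncomputable def auxK (ψ : ℝ → ℝ) (μ x s : ℝ) : ℝ :=
  if s < x then (ψ x - ψ s) ^ (μ - 1) else 0

open MeasureTheory in
theorem aux_kernel (a b μ : ℝ) (ψ ψ' : ℝ → ℝ) (hab : a < b) (hμ : 0 < μ) (hμ' : μ < 1)
    (hd : ∀ x ∈ Set.Icc a b, HasDerivAt ψ (ψ' x) x) (hc : ContinuousOn ψ' (Set.Icc a b))
    (hp : ∀ x ∈ Set.Icc a b, 0 < ψ' x) :
    Integrable (fun p : ℝ × ℝ => auxK ψ μ p.1 p.2)
      ((volume.restrict (Set.Ioc a b)).prod (volume.restrict (Set.Ioc a b))) := by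
  have hψc : ContinuousOn ψ (Set.Icc a b) := fun x hx => (hd x hx).continuousAt.continuousWithinAt
  obtain ⟨x₀, hx₀, hmin⟩ := isCompact_Icc.exists_isMinOn (Set.nonempty_Icc.2 hab.le) hc
  set m := ψ' x₀ with hm
  have hm0 : 0 < m := hp x₀ hx₀
  have hmv : ∀ x ∈ Set.Icc a b, ∀ y ∈ Set.Icc a b, x ≤ y → m * (y - x) ≤ ψ y - ψ x := by
    apply Convex.mul_sub_le_image_sub_of_le_deriv (convex_Icc a b) hψc
    · intro x hx
      exact (hd x (interior_subset hx)).differentiableAt.differentiableWithinAt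
    · intro x hx
      rw [(hd x (interior_subset hx)).deriv]
      exact hmin (interior_subset hx)
  have hf : Integrable ((Set.Ioc a b).indicator fun _ : ℝ => (1 : ℝ)) volume := by
    rw [integrable_indicator_iff measurableSet_Ioc]
    exact integrableOn_const (by simp) (by simp)
  have hg : Integrable ((Set.Ioc 0 (b - a)).indicator fun u : ℝ => u ^ (μ - 1)) volume := by
    rw [integrable_indicator_iff measurableSet_Ioc]
    exact (intervalIntegral.intervalIntegrable_rpow' (by linarith)).1
  have hconv := Integrable.convolution_integrand (μ := volume) (ν := volume)
    (ContinuousLinearMap.mul ℝ ℝ) hf hg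
  have hconv' := (hconv.const_mul (m ^ (μ - 1))).mono_measure
    (Measure.prod_mono (Measure.restrict_le_self (s := Set.Ioc a b))
      (Measure.restrict_le_self (s := Set.Ioc a b)))
  have hψm : AEMeasurable ψ (volume.restrict (Set.Ioc a b)) :=
    (hψc.mono Set.Ioc_subset_Icc_self).aemeasurable measurableSet_Ioc
  have hK : AEStronglyMeasurable (fun p : ℝ × ℝ => auxK ψ μ p.1 p.2)
      ((volume.restrict (Set.Ioc a b)).prod (volume.restrict (Set.Ioc a b))) := by
    have h1 : AEMeasurable (fun p : ℝ × ℝ => (ψ p.1 - ψ p.2) ^ (μ - 1))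
        ((volume.restrict (Set.Ioc a b)).prod (volume.restrict (Set.Ioc a b))) :=
      ((hψm.comp_quasiMeasurePreserving Measure.quasiMeasurePreserving_fst).sub
        (hψm.comp_quasiMeasurePreserving Measure.quasiMeasurePreserving_snd)).pow_const _
    have h2 := h1.indicator (measurableSet_lt measurable_snd measurable_fst)
    refine AEMeasurable.aestronglyMeasurable (h2.congr (Filter.Eventually.of_forall ?_))
    intro p
    simp [auxK, Set.indicator_apply]
  refine hconv'.mono' hK ?_
  rw [Measure.prod_restrict]
  filter_upwards [ae_restrict_mem (measurableSet_Ioc.prod measurableSet_Ioc)] with p hpm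
  obtain ⟨h1, h2⟩ := hpm
  simp only [auxK]
  split_ifs with hlt
  · have h3 : p.1 - p.2 ∈ Set.Ioc 0 (b - a) := ⟨by linarith, by linarith [h1.2, h2.1]⟩
    have h4 := hmv p.2 (Set.Ioc_subset_Icc_self h2) p.1 (Set.Ioc_subset_Icc_self h1) hlt.le
    have h5 : 0 < m * (p.1 - p.2) := mul_pos hm0 h3.1
    rw [Real.norm_of_nonneg (Real.rpow_nonneg (h5.le.trans h4) _)]
    simp only [ContinuousLinearMap.mul_apply', Set.indicator_of_mem h2, Set.indicator_of_mem h3,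
      one_mul]
    rw [← Real.mul_rpow hm0.le h3.1.le]
    exact Real.rpow_le_rpow_of_nonpos h5 h4 (by linarith)
  · rw [norm_zero]
    simp only [ContinuousLinearMap.mul_apply']
    refine mul_nonneg (Real.rpow_nonneg hm0.le _) (mul_nonneg ?_ ?_)
    · exact Set.indicator_nonneg (fun _ _ => zero_le_one) _
    · exact Set.indicator_nonneg (fun u hu => Real.rpow_nonneg hu.1.le _) _

open MeasureTheory in
theorem aux_bdd (a₁ b₁ a₂ b₂ : ℝ) (h : ℝ × ℝ → ℝ)
    (hh : ContinuousOn h (Set.Icc a₁ b₁ ×ˢ Set.Icc a₂ b₂)) :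
    AEStronglyMeasurable h
      ((volume.restrict (Set.Ioc a₁ b₁)).prod (volume.restrict (Set.Ioc a₂ b₂))) ∧
    ∃ C, ∀ᵐ p ∂((volume.restrict (Set.Ioc a₁ b₁)).prod (volume.restrict (Set.Ioc a₂ b₂))),
      ‖h p‖ ≤ C := by
  have hsub : Set.Ioc a₁ b₁ ×ˢ Set.Ioc a₂ b₂ ⊆ Set.Icc a₁ b₁ ×ˢ Set.Icc a₂ b₂ :=
    Set.prod_mono Set.Ioc_subset_Icc_self Set.Ioc_subset_Icc_self
  rw [Measure.prod_restrict]
  refine ⟨(hh.mono hsub).aestronglyMeasurable (measurableSet_Ioc.prod measurableSet_Ioc), ?_⟩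
  obtain ⟨C, hC⟩ := (isCompact_Icc.prod isCompact_Icc).exists_bound_of_continuousOn hh
  refine ⟨C, ?_⟩
  filter_upwards [ae_restrict_mem (measurableSet_Ioc.prod measurableSet_Ioc)] with p hp
  exact hC p (hsub hp)

open MeasureTheory in
/-- fractional integration by parts: the left and right two-variable
`ψ`-Riemann–Liouville fractional integrals are adjoint to each other:
`∫_{θ₁}^{T₁}∫_{θ₂}^{T₂} (I_θ^{μ;ψ}φ)(ξ₁,ξ₂) ϕ(ξ₁,ξ₂) dξ₂ dξ₁
  = ∫_{θ₁}^{T₁}∫_{θ₂}^{T₂} φ(ξ₁,ξ₂) ψ'(ξ₁)ψ'(ξ₂) (I_T^{μ;ψ}(ϕ/(ψ'·ψ')))(ξ₁,ξ₂) dξ₂ dξ₁`. -/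
theorem fracInt_integration_by_parts
    (θ₁ T₁ θ₂ T₂ μ₁ μ₂ : ℝ) (ψ ψ' : ℝ → ℝ) (φ ϕ : ℝ → ℝ → ℝ)
    (hT₁ : θ₁ < T₁) (hT₂ : θ₂ < T₂)
    (hμ₁ : 0 < μ₁) (hμ₁' : μ₁ < 1) (hμ₂ : 0 < μ₂) (hμ₂' : μ₂ < 1)
    (hψmono₁ : StrictMonoOn ψ (Set.Icc θ₁ T₁)) (hψmono₂ : StrictMonoOn ψ (Set.Icc θ₂ T₂))
    (hψderiv : ∀ x ∈ Set.Icc θ₁ T₁ ∪ Set.Icc θ₂ T₂, HasDerivAt ψ (ψ' x) x)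
    (hψ'cont : ContinuousOn ψ' (Set.Icc θ₁ T₁ ∪ Set.Icc θ₂ T₂))
    (hψ'pos : ∀ x ∈ Set.Icc θ₁ T₁ ∪ Set.Icc θ₂ T₂, 0 < ψ' x)
    (hφ : ContinuousOn (fun p : ℝ × ℝ => φ p.1 p.2) (Set.Icc θ₁ T₁ ×ˢ Set.Icc θ₂ T₂))
    (hϕ : ContinuousOn (fun p : ℝ × ℝ => ϕ p.1 p.2) (Set.Icc θ₁ T₁ ×ˢ Set.Icc θ₂ T₂)) :
    (∫ ξ₁ in θ₁..T₁, ∫ ξ₂ in θ₂..T₂,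
        leftFracInt ψ ψ' μ₁ μ₂ θ₁ θ₂ φ ξ₁ ξ₂ * ϕ ξ₁ ξ₂) =
      ∫ ξ₁ in θ₁..T₁, ∫ ξ₂ in θ₂..T₂,
        φ ξ₁ ξ₂ * (ψ' ξ₁ * ψ' ξ₂) *
          rightFracInt ψ ψ' μ₁ μ₂ T₁ T₂ (fun s₁ s₂ => ϕ s₁ s₂ / (ψ' s₁ * ψ' s₂)) ξ₁ ξ₂ := by
  have hd₁ : ∀ x ∈ Set.Icc θ₁ T₁, x ∈ Set.Icc θ₁ T₁ ∪ Set.Icc θ₂ T₂ := fun x hx => Or.inl hx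
  have hd₂ : ∀ x ∈ Set.Icc θ₂ T₂, x ∈ Set.Icc θ₁ T₁ ∪ Set.Icc θ₂ T₂ := fun x hx => Or.inr hx
  have hK₁ := aux_kernel θ₁ T₁ μ₁ ψ ψ' hT₁ hμ₁ hμ₁' (fun x hx => hψderiv x (hd₁ x hx))
    (hψ'cont.mono hd₁) (fun x hx => hψ'pos x (hd₁ x hx))
  have hK₂ := aux_kernel θ₂ T₂ μ₂ ψ ψ' hT₂ hμ₂ hμ₂' (fun x hx => hψderiv x (hd₂ x hx))
    (hψ'cont.mono hd₂) (fun x hx => hψ'pos x (hd₂ x hx))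
  have hh : ContinuousOn (fun p : ℝ × ℝ => ψ' p.1 * ψ' p.2 * φ p.1 p.2)
      (Set.Icc θ₁ T₁ ×ˢ Set.Icc θ₂ T₂) := by
    refine ContinuousOn.mul (ContinuousOn.mul ?_ ?_) hφ
    · exact (hψ'cont.mono hd₁).comp continuousOn_fst (fun p hp => hp.1)
    · exact (hψ'cont.mono hd₂).comp continuousOn_snd (fun p hp => hp.2)
  obtain ⟨hm₁, C₁, hC₁⟩ := aux_bdd _ _ _ _ _ hϕ
  obtain ⟨hm₂, C₂, hC₂⟩ := aux_bdd _ _ _ _ _ hh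
  set ν₁ := volume.restrict (Set.Ioc θ₁ T₁) with hν₁
  set ν₂ := volume.restrict (Set.Ioc θ₂ T₂) with hν₂
  have hKK : Integrable (fun p : (ℝ × ℝ) × (ℝ × ℝ) =>
      auxK ψ μ₁ p.1.1 p.2.1 * auxK ψ μ₂ p.1.2 p.2.2) ((ν₁.prod ν₂).prod (ν₁.prod ν₂)) :=
    (aux_mp ν₁ ν₂ ν₁ ν₂).integrable_comp_of_integrable (hK₁.mul_prod hK₂)
  have hb₁ : ∀ᵐ p ∂((ν₁.prod ν₂).prod (ν₁.prod ν₂)), ‖ϕ p.1.1 p.1.2‖ ≤ C₁ :=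
    Measure.quasiMeasurePreserving_fst.ae hC₁
  have hb₂ : ∀ᵐ p ∂((ν₁.prod ν₂).prod (ν₁.prod ν₂)),
      ‖ψ' p.2.1 * ψ' p.2.2 * φ p.2.1 p.2.2‖ ≤ C₂ :=
    Measure.quasiMeasurePreserving_snd.ae hC₂
  have hF1 := hKK.mul_bdd (hm₁.comp_fst (ν := ν₁.prod ν₂)) hb₁
  have hF := hF1.mul_bdd (hm₂.comp_snd (μ := ν₁.prod ν₂)) hb₂
  have key := aux_swap ν₁ ν₂ _ hF
  have key' := aux_swap ν₁ ν₂ _ hF.swap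
  have key' := key'.trans (integral_prod_swap (μ := ν₁.prod ν₂) (ν := ν₁.prod ν₂)
    (fun x : (ℝ × ℝ) × (ℝ × ℝ) => auxK ψ μ₁ x.1.1 x.2.1 * auxK ψ μ₂ x.1.2 x.2.2 * ϕ x.1.1 x.1.2 *
      (ψ' x.2.1 * ψ' x.2.2 * φ x.2.1 x.2.2)))
  have hkey := key.trans key'.symm
  simp only [Function.comp, Prod.swap] at hkey
  simp only [intervalIntegral.integral_of_le hT₁.le, intervalIntegral.integral_of_le hT₂.le]
  set c := 1 / (Real.Gamma μ₁ * Real.Gamma μ₂) with hc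
  refine Eq.trans (b := c * _) ?_ ((congrArg (fun t => c * t) hkey).trans ?_)
  · rw [← MeasureTheory.integral_const_mul]
    refine setIntegral_congr_fun measurableSet_Ioc fun x₁ hx₁ => ?_
    beta_reduce
    rw [← MeasureTheory.integral_const_mul]
    refine setIntegral_congr_fun measurableSet_Ioc fun x₂ hx₂ => ?_
    simp only [leftFracInt]
    rw [aux_left θ₁ T₁ x₁ hx₁, ← hc, mul_assoc, ← MeasureTheory.integral_mul_const]
    congr 1
    refine integral_congr_ae (Filter.Eventually.of_forall fun s₁ => ?_)
    simp only [auxK]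
    split_ifs with h1
    · rw [aux_left θ₂ T₂ x₂ hx₂, ← MeasureTheory.integral_mul_const]
      refine integral_congr_ae (Filter.Eventually.of_forall fun s₂ => ?_)
      beta_reduce
      split_ifs <;> ring
    · simp
  · show c * _ = _
    rw [← MeasureTheory.integral_const_mul]
    refine setIntegral_congr_fun measurableSet_Ioc fun x₁ hx₁ => ?_
    beta_reduce
    rw [← MeasureTheory.integral_const_mul]
    refine setIntegral_congr_fun measurableSet_Ioc fun x₂ hx₂ => ?_
    simp only [rightFracInt]
    rw [aux_right θ₁ T₁ x₁ hx₁, ← hc, mul_left_comm _ c]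
    congr 1
    rw [← MeasureTheory.integral_const_mul]
    refine setIntegral_congr_fun (s := Set.Ioc θ₁ T₁) measurableSet_Ioc fun s₁ hs₁ => ?_
    simp only [auxK]
    split_ifs with h1
    · rw [aux_right θ₂ T₂ x₂ hx₂, ← MeasureTheory.integral_const_mul]
      refine setIntegral_congr_fun (s := Set.Ioc θ₂ T₂) measurableSet_Ioc fun s₂ hs₂ => ?_
      have e1 := (hψ'pos s₁ (hd₁ _ (Set.Ioc_subset_Icc_self hs₁))).ne'
      have e2 := (hψ'pos s₂ (hd₂ _ (Set.Ioc_subset_Icc_self hs₂))).ne'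
      beta_reduce
      split_ifs
      · field_simp
      · ring
    · simp
end

section
/- (Fountain Theorem) Let X be a real Banach space with a biorthogonal system (e_j, e_j*) as in the context, Y_k = span{e_1,…,e_k} and Z_k = closure(span{e_j : j ≥ k}). Let E : X → ℝ be continuously Fréchet differentiable and even (E(−u) = E(u) for all u). Suppose that for each k = 1,2,… there exist ρ_k > r_k > 0 such that (A₂) inf{E(u) : u ∈ Z_k, ‖u‖ = r_k} → +∞ as k → +∞, (A₃) max{E(u) : u ∈ Y_k, ‖u‖ = ρ_k} ≤ 0, and (A₄) E satisfies the Palais–Smale condition. Then E has a sequence of critical points (u_k) (i.e. E'(u_k) = 0) with E(u_k) → +∞. -/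
open Filter Topology

open Classical in
/-- signs alternate along increasing `a`. -/
def FAlt {V : Type*} (a : V → ℕ) (s : V → ℤ) (ε : ℤ) (F : Finset V) : Prop :=
  Set.InjOn a (F : Set V) ∧ ∀ v ∈ F, s v = ε * (-1) ^ (F.filter (fun w => a w < a v)).card

open Classical in
theorem falt_erase_iff {V : Type*} (a : V → ℕ) (s : V → ℤ) (F : Finset V)
    (hinj : Set.InjOn a (F : Set V)) (u : V) (hu : u ∈ F) :
    FAlt a s 1 (F.erase u) ↔ ∀ v ∈ F,
      (a v < a u → s v * (-1) ^ (F.filter (fun w => a w < a v)).card = 1) ∧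
      (a u < a v → s v * (-1) ^ (F.filter (fun w => a w < a v)).card = -1) := by
  have key : ∀ v ∈ F, 
      (a v < a u → (F.filter (fun w => a w < a v)).card
        = ((F.erase u).filter (fun w => a w < a v)).card) ∧
      (a u < a v → (F.filter (fun w => a w < a v)).card
        = ((F.erase u).filter (fun w => a w < a v)).card + 1) := by
    intro v hv
    constructor
    · intro h
      rw [Finset.filter_erase, Finset.erase_eq_of_notMem]
      simp; intro _; omega
    · intro h
      rw [Finset.filter_erase, Finset.card_erase_add_one]
      simp [hu, h]
  have sq : ∀ m : ℕ, ((-1 : ℤ) ^ m) * (-1) ^ m = 1 := by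
    intro m; rw [← mul_pow]; simp
  constructor
  · rintro ⟨_, h2⟩ v hv
    constructor
    · intro h
      rw [h2 v (Finset.mem_erase.2 ⟨by rintro rfl; omega, hv⟩), (key v hv).1 h, one_mul, sq]
    · intro h
      rw [h2 v (Finset.mem_erase.2 ⟨by rintro rfl; omega, hv⟩), (key v hv).2 h, one_mul, pow_succ,
        ← mul_assoc, sq]; simp
  · intro h
    refine ⟨hinj.mono (by simp), ?_⟩
    intro v hv
    obtain ⟨hvu, hv⟩ := Finset.mem_erase.1 hv
    rcases lt_trichotomy (a v) (a u) with h1 | h1 | h1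
    · have := (h v hv).1 h1
      rw [(key v hv).1 h1] at this
      have h3 := sq ((F.erase u).filter (fun w => a w < a v)).card
      rw [one_mul]
      calc s v = s v * ((-1 : ℤ) ^ ((F.erase u).filter (fun w => a w < a v)).card * (-1) ^ ((F.erase u).filter (fun w => a w < a v)).card) := by rw [h3, mul_one]
        _ = _ := by rw [← mul_assoc, this, one_mul]
    · exact absurd (hinj hv hu h1) hvu
    · have := (h v hv).2 h1
      rw [(key v hv).2 h1, pow_succ] at this
      have h3 := sq ((F.erase u).filter (fun w => a w < a v)).card
      rw [one_mul]
      calc s v = s v * ((-1 : ℤ) ^ ((F.erase u).filter (fun w => a w < a v)).card * (-1) ^ ((F.erase u).filter (fun w => a w < a v)).card) := by rw [h3, mul_one]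
        _ = _ := by rw [← mul_assoc]; rw [show s v * (-1) ^ ((F.erase u).filter (fun w => a w < a v)).card = 1 by linarith]; rw [one_mul]

open Classical in
/-- Parity of a finite linear order with a two-valued function. -/
theorem parity_aux {V : Type*} (a : V → ℕ) (t : V → ℤ) (F : Finset V) (hne : F.Nonempty)
    (ht : ∀ v ∈ F, t v = 1 ∨ t v = -1)
    (hinj : Set.InjOn a (F : Set V)) :
    Odd (F.filter (fun u => ∀ v ∈ F, (a v < a u → t v = 1) ∧ (a u < a v → t v = -1))).card ↔
      ((∀ v ∈ F, t v = 1) ∨ (∀ v ∈ F, t v = -1)) := by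
  set P : V → Prop := fun u => ∀ v ∈ F, (a v < a u → t v = 1) ∧ (a u < a v → t v = -1) with hP
  by_cases h1 : ∀ v ∈ F, t v = 1
  · obtain ⟨m, hm, hmax⟩ := F.exists_max_image a hne
    have : F.filter P = {m} := by
      ext u
      simp only [Finset.mem_filter, Finset.mem_singleton, hP]
      constructor
      · rintro ⟨hu, h⟩
        have := hmax u hu
        rcases this.lt_or_eq with h2 | h2
        · have := (h m hm).2 h2
          have := h1 m hm
          omega
        · exact hinj hu hm h2
      · rintro rfl
        refine ⟨hm, fun v hv => ⟨fun _ => h1 v hv, fun h => ?_⟩⟩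
        have := hmax v hv; omega
    rw [this]; exact ⟨fun _ => Or.inl h1, fun _ => by simp⟩
  by_cases h2 : ∀ v ∈ F, t v = -1
  · obtain ⟨m, hm, hmin⟩ := F.exists_min_image a hne
    have : F.filter P = {m} := by
      ext u
      simp only [Finset.mem_filter, Finset.mem_singleton, hP]
      constructor
      · rintro ⟨hu, h⟩
        have := hmin u hu
        rcases this.lt_or_eq with h3 | h3
        · have := (h m hm).1 h3
          have := h2 m hm
          omega
        · exact hinj hu hm h3.symm
      · rintro rfl
        refine ⟨hm, fun v hv => ⟨fun h => ?_, fun _ => h2 v hv⟩⟩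
        have := hmin v hv; omega
    rw [this]; exact ⟨fun _ => Or.inr h2, fun _ => by simp⟩
  refine iff_of_false ?_ (by rintro (h | h) <;> [exact h1 h; exact h2 h])
  rw [Nat.not_odd_iff_even]
  by_cases hex : ∃ u ∈ F, P u
  swap
  · have : F.filter P = ∅ := by
      rw [Finset.filter_eq_empty_iff]; intro u hu hh; exact hex ⟨u, hu, hh⟩
    rw [this]; simp
  -- the two good elements
  push Not at h1 h2
  have hplus : (F.filter (fun v => t v = 1)).Nonempty := by
    obtain ⟨v, hv, h⟩ := h2
    exact ⟨v, by simp [hv, (ht v hv).resolve_right h]⟩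
  have hminus : (F.filter (fun v => t v = -1)).Nonempty := by
    obtain ⟨v, hv, h⟩ := h1
    exact ⟨v, by simp [hv, (ht v hv).resolve_left h]⟩
  obtain ⟨p, hp, hpmax⟩ := Finset.exists_max_image _ a hplus
  obtain ⟨q, hq, hqmin⟩ := Finset.exists_min_image _ a hminus
  simp only [Finset.mem_filter] at hp hq hpmax hqmin
  obtain ⟨u, hu, hPu⟩ := hex
  have hpq : a p < a q := by
    have e1 := hPu p hp.1
    have e2 := hPu q hq.1
    have : a p ≠ a q := fun h => by
      have := hinj hp.1 hq.1 h; subst this; omega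
    by_contra hcon
    have h3 : a p ≤ a u := by
      by_contra h; have := e1.2 (by omega); omega
    have h4 : a u ≤ a q := by
      by_contra h; have := e2.1 (by omega); omega
    omega
  have hne : p ≠ q := by rintro rfl; omega
  have : F.filter P = {p, q} := by
    ext x
    simp only [Finset.mem_filter, Finset.mem_insert, Finset.mem_singleton, hP]
    constructor
    · rintro ⟨hx, h⟩
      rcases ht x hx with h3 | h3
      · left
        have := hpmax x ⟨hx, h3⟩
        rcases this.lt_or_eq with h4 | h4
        · have := (h p hp.1).2 h4; omega
        · exact hinj hx hp.1 h4
      · right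
        have := hqmin x ⟨hx, h3⟩
        rcases this.lt_or_eq with h4 | h4
        · have := (h q hq.1).1 h4; omega
        · exact (hinj hq.1 hx h4).symm
    · rintro (rfl | rfl)
      · refine ⟨hp.1, fun v hv => ⟨fun h => ?_, fun h => ?_⟩⟩
        · rcases ht v hv with h3 | h3
          · exact h3
          · have := hqmin v ⟨hv, h3⟩; omega
        · rcases ht v hv with h3 | h3
          · have := hpmax v ⟨hv, h3⟩; omega
          · exact h3
      · refine ⟨hq.1, fun v hv => ⟨fun h => ?_, fun h => ?_⟩⟩
        · rcases ht v hv with h3 | h3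
          · exact h3
          · have := hqmin v ⟨hv, h3⟩; omega
        · rcases ht v hv with h3 | h3
          · have := hpmax v ⟨hv, h3⟩; omega
          · exact h3
  rw [this, Finset.card_pair hne]; exact even_two

open Classical in
theorem fan_local {V : Type*} (a : V → ℕ) (s : V → ℤ) (F : Finset V) (hne : F.Nonempty)
    (hs : ∀ v ∈ F, s v = 1 ∨ s v = -1)
    (hc : ∀ v ∈ F, ∀ w ∈ F, a v = a w → s v = s w) :
    Odd (F.filter (fun u => FAlt a s 1 (F.erase u))).card ↔ (FAlt a s 1 F ∨ FAlt a s (-1) F) := by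
  by_cases hinj : Set.InjOn a (F : Set V)
  · have h1 := parity_aux a (fun v => s v * (-1) ^ (F.filter (fun w => a w < a v)).card) F hne
      (by
        intro v hv
        rcases hs v hv with h | h <;> rcases neg_one_pow_eq_or ℤ (F.filter (fun w => a w < a v)).card
          with h' | h' <;> simp [h, h']) hinj
    have h2 : F.filter (fun u => FAlt a s 1 (F.erase u)) = (F.filter (fun u => ∀ v ∈ F, 
        (a v < a u → s v * (-1) ^ (F.filter (fun w => a w < a v)).card = 1) ∧ 
        (a u < a v → s v * (-1) ^ (F.filter (fun w => a w < a v)).card = -1))) := by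
      apply Finset.filter_congr
      intro u hu
      exact falt_erase_iff a s F hinj u hu
    rw [h2]
    have h3 : ∀ ε : ℤ, FAlt a s ε F ↔
        ∀ v ∈ F, s v * (-1) ^ (F.filter (fun w => a w < a v)).card = ε := by
      intro ε
      simp only [FAlt, hinj, true_and]
      refine forall₂_congr fun v hv => ?_
      rcases neg_one_pow_eq_or ℤ (F.filter (fun w => a w < a v)).card with h' | h' <;> 
        simp only [h'] <;> constructor <;> intro h <;> linarith
    rw [h3, h3]
    exact h1
  · have hr : ¬ (FAlt a s 1 F ∨ FAlt a s (-1) F) := by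
      rintro (h | h) <;> exact hinj h.1
    simp only [hr, iff_false, Nat.not_odd_iff_even]
    rw [Set.InjOn] at hinj
    push Not at hinj
    obtain ⟨v, hv, w, hw, hvw, hne⟩ := hinj
    simp only [Finset.mem_coe] at hv hw
    have hsub : ∀ u, FAlt a s 1 (F.erase u) → u = v ∨ u = w := by
      intro u hu
      by_contra hcon
      push Not at hcon
      exact hne (hu.1 (by simp [hv, hcon.1.symm]) (by simp [hw, hcon.2.symm]) hvw)
    have hsymm : ∀ v ∈ F, ∀ w ∈ F, a v = a w → v ≠ w → 
        FAlt a s 1 (F.erase v) → FAlt a s 1 (F.erase w) := by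
      intro v hv w hw hvw hne h
      have hcard : ∀ n, ((F.erase w).filter (fun x => a x < n)).card =
          ((F.erase v).filter (fun x => a x < n)).card := by
        intro n
        rw [Finset.filter_erase, Finset.filter_erase]
        by_cases hn : a v < n
        · rw [Finset.card_erase_of_mem (by simp [hw, ← hvw, hn]),
            Finset.card_erase_of_mem (by simp [hv, hn])]
        · rw [Finset.erase_eq_of_notMem (by simp [← hvw]; omega),
            Finset.erase_eq_of_notMem (by simp; omega)]
      constructor
      · intro x hx y hy hxy
        simp only [Finset.coe_erase, Set.mem_sdiff, Finset.mem_coe, Set.mem_singleton_iff] at hx hy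
        by_cases hxv : x = v
        · by_cases hyv : y = v
          · rw [hxv, hyv]
          · exfalso; exact hy.2 (h.1 (by simp [hy.1, hyv]) (by simp [hw, hne.symm])
              (by rw [← hxy, hxv, hvw]))
        · by_cases hyv : y = v
          · exfalso; exact hx.2 (h.1 (by simp [hx.1, hxv]) (by simp [hw, hne.symm])
              (by rw [hxy, hyv, hvw]))
          · exact h.1 (by simp [hx.1, hxv]) (by simp [hy.1, hyv]) hxy
      · intro x hx
        rw [hcard]
        obtain ⟨hxw, hxF⟩ := Finset.mem_erase.1 hx
        by_cases hxv : x = v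
        · subst hxv
          rw [hc x hv w hw hvw, hvw]
          exact h.2 w (by simp [hw, hne.symm])
        · exact h.2 x (by simp [hxF, hxv])
    by_cases hg : FAlt a s 1 (F.erase v)
    · have hg' := hsymm v hv w hw hvw hne hg
      have : F.filter (fun u => FAlt a s 1 (F.erase u)) = {v, w} := by
        ext u
        simp only [Finset.mem_filter, Finset.mem_insert, Finset.mem_singleton]
        constructor
        · exact fun h => hsub u h.2
        · rintro (rfl | rfl)
          · exact ⟨hv, hg⟩
          · exact ⟨hw, hg'⟩
      rw [this, Finset.card_pair hne]; exact even_two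
    · have hg' : ¬ FAlt a s 1 (F.erase w) := fun h => hg (hsymm w hw v hv hvw.symm hne.symm h)
      have : F.filter (fun u => FAlt a s 1 (F.erase u)) = ∅ := by
        rw [Finset.filter_eq_empty_iff]
        intro u _ hu
        rcases hsub u hu with rfl | rfl
        · exact hg hu
        · exact hg' hu
      simp [this]

/-- vertex of a Kuhn simplex -/
def kvert {n : ℕ} (v : Fin (n+1) → ℤ) (π : Equiv.Perm (Fin (n+1))) (j : ℕ) : Fin (n+1) → ℤ :=
  fun i => v i + if (π i : ℕ) < j then 1 else 0

open Classical in
/-- vertices of a Kuhn simplex -/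
noncomputable def kverts {n : ℕ} (τ : (Fin (n+1) → ℤ) × Equiv.Perm (Fin (n+1))) :
    Finset (Fin (n+1) → ℤ) :=
  (Finset.range (n+2)).image (kvert τ.1 τ.2)

theorem kvert_inj {n : ℕ} (v : Fin (n+1) → ℤ) (π : Equiv.Perm (Fin (n+1))) :
    Set.InjOn (kvert v π) (Finset.range (n+2) : Set ℕ) := by
  have key : ∀ j k, j < k → k < n + 2 → kvert v π j ≠ kvert v π k := by
    intro j k hjk hk h
    have := congrFun h (π.symm ⟨j, by omega⟩)
    simp [kvert, hjk] at this
  intro j hj k hk h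
  simp at hj hk
  rcases lt_trichotomy j k with h1 | h1 | h1
  · exact absurd h (key j k h1 hk)
  · exact h1
  · exact absurd h.symm (key k j h1 hj)

theorem kvert_adj {n : ℕ} (v : Fin (n+1) → ℤ) (π : Equiv.Perm (Fin (n+1))) (j k : ℕ) :
    ∀ i, |kvert v π j i - kvert v π k i| ≤ 1 := by
  intro i
  simp only [kvert]
  split_ifs <;> simp

theorem kverts_adj {n : ℕ} (τ : (Fin (n+1) → ℤ) × Equiv.Perm (Fin (n+1))) :
    ∀ x ∈ kverts τ, ∀ y ∈ kverts τ, ∀ i, |x i - y i| ≤ 1 := by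
  intro x hx y hy
  simp only [kverts, Finset.mem_image] at hx hy
  obtain ⟨j, _, rfl⟩ := hx
  obtain ⟨k, _, rfl⟩ := hy
  exact kvert_adj _ _ _ _

theorem kverts_card {n : ℕ} (τ : (Fin (n+1) → ℤ) × Equiv.Perm (Fin (n+1))) :
    (kverts τ).card = n + 2 := by
  rw [kverts, Finset.card_image_of_injOn (kvert_inj _ _), Finset.card_range]

open Classical in
/-- facet pairing -/
noncomputable def kflip {n : ℕ} (x : ((Fin (n+1) → ℤ) × Equiv.Perm (Fin (n+1))) × ℕ) :
    ((Fin (n+1) → ℤ) × Equiv.Perm (Fin (n+1))) × ℕ :=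
  if x.2 = 0 then ((kvert x.1.1 x.1.2 1, x.1.2.trans (finRotate (n+1)).symm), n+1)
  else if h : x.2 < n + 1 then
    ((x.1.1, x.1.2.trans (Equiv.swap ⟨x.2 - 1, by omega⟩ ⟨x.2, h⟩)), x.2)
  else ((fun i => x.1.1 i - if (x.1.2 i : ℕ) = n then 1 else 0, x.1.2.trans (finRotate (n+1))), 0)

theorem finRot_val {n : ℕ} (i : Fin (n+1)) :
    ((finRotate (n+1) i : Fin (n+1)) : ℕ) = if (i : ℕ) = n then 0 else (i : ℕ) + 1 := by
  rw [coe_finRotate]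
  simp [Fin.ext_iff]

theorem finRot_symm_val {n : ℕ} (i : Fin (n+1)) :
    (((finRotate (n+1)).symm i : Fin (n+1)) : ℕ) = if (i : ℕ) = 0 then n else (i : ℕ) - 1 := by
  have h := finRot_val ((finRotate (n+1)).symm i)
  rw [Equiv.apply_symm_apply] at h
  have := ((finRotate (n+1)).symm i).isLt
  split_ifs at h ⊢ <;> omega

theorem swap_val {n : ℕ} (a b i : Fin n) :
    ((Equiv.swap a b i : Fin n) : ℕ) = if (i : ℕ) = a then (b : ℕ) else if (i : ℕ) = b then (a : ℕ) else i := by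
  rw [Equiv.swap_apply_def]
  simp only [Fin.ext_iff]
  split_ifs <;> rfl

theorem kflip_invol {n : ℕ} (x : ((Fin (n+1) → ℤ) × Equiv.Perm (Fin (n+1))) × ℕ) (hx : x.2 < n + 2) :
    kflip (kflip x) = x := by
  obtain ⟨⟨v, π⟩, j⟩ := x
  simp only at hx
  by_cases h0 : j = 0
  · subst h0
    simp only [kflip, if_true]
    simp only [show ¬ (n + 1 = 0) by omega, if_false, lt_irrefl, dite_false]
    ext i
    · simp only [kvert, Equiv.trans_apply, finRot_symm_val]
      have := (π i).isLt
      split_ifs <;> first | omega | simp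
    · simp
    · simp
  by_cases h1 : j < n + 1
  · simp only [kflip, h0, h1, if_false, dite_true]
    ext i
    · simp
    · simp
    · simp
  · have : j = n + 1 := by omega
    subst this
    simp only [kflip, h0, if_false, lt_irrefl, dite_false, if_true]
    ext i
    · simp only [kvert, Equiv.trans_apply, finRot_val]
      have := (π i).isLt
      split_ifs <;> first | omega | simp
    · simp
    · simp

theorem kflip_ne {n : ℕ} (x : ((Fin (n+1) → ℤ) × Equiv.Perm (Fin (n+1))) × ℕ) (hx : x.2 < n + 2) :
    kflip x ≠ x := by
  obtain ⟨⟨v, π⟩, j⟩ := x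
  simp only at hx
  intro h
  by_cases h0 : j = 0
  · subst h0
    simp [kflip] at h
  by_cases h1 : j < n + 1
  · simp only [kflip, h0, h1, if_false, dite_true, Prod.mk.injEq, true_and, and_true] at h
    have := congrArg (fun e => ((e (π.symm ⟨j, h1⟩) : Fin (n+1)) : ℕ)) h
    simp at this
    omega
  · simp [kflip, h0, h1] at h
    omega

theorem kflip_lt {n : ℕ} (x : ((Fin (n+1) → ℤ) × Equiv.Perm (Fin (n+1))) × ℕ) (hx : x.2 < n + 2) :
    (kflip x).2 < n + 2 := by
  simp only [kflip]
  split_ifs <;> simp <;> omega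

open Classical in
/-- facet -/
noncomputable def kfacet {n : ℕ} (x : ((Fin (n+1) → ℤ) × Equiv.Perm (Fin (n+1))) × ℕ) :
    Finset (Fin (n+1) → ℤ) :=
  (kverts x.1).erase (kvert x.1.1 x.1.2 x.2)

open Classical in
theorem kfacet_eq {n : ℕ} (x : ((Fin (n+1) → ℤ) × Equiv.Perm (Fin (n+1))) × ℕ) (hx : x.2 < n + 2) :
    kfacet x = ((Finset.range (n+2)).erase x.2).image (kvert x.1.1 x.1.2) := by
  ext y
  simp only [kfacet, kverts, Finset.mem_erase, Finset.mem_image, Finset.mem_range]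
  constructor
  · rintro ⟨h1, k, hk, rfl⟩
    exact ⟨k, ⟨by rintro rfl; exact h1 rfl, hk⟩, rfl⟩
  · rintro ⟨k, ⟨h1, h2⟩, rfl⟩
    refine ⟨fun h => h1 (kvert_inj x.1.1 x.1.2 (by simpa using h2) (by simpa using hx) h), k, h2, rfl⟩

open Classical in
theorem kfacet_flip_sub {n : ℕ} (x : ((Fin (n+1) → ℤ) × Equiv.Perm (Fin (n+1))) × ℕ) (hx : x.2 < n + 2) :
    kfacet x ⊆ kfacet (kflip x) := by
  rw [kfacet_eq x hx, kfacet_eq _ (kflip_lt x hx)]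
  obtain ⟨⟨v, π⟩, j⟩ := x
  simp only at hx
  intro y hy
  simp only [Finset.mem_erase, Finset.mem_image, Finset.mem_range] at hy ⊢
  obtain ⟨k, ⟨hkj, hk⟩, rfl⟩ := hy
  by_cases h0 : j = 0
  · subst h0
    simp only [kflip, if_true]
    refine ⟨k - 1, ⟨by omega, by omega⟩, ?_⟩
    ext i
    simp only [kvert, Equiv.trans_apply, finRot_symm_val]
    have := (π i).isLt
    split_ifs <;> first | omega | simp
  by_cases h1 : j < n + 1
  · simp only [kflip, h0, h1, if_false, dite_true]
    refine ⟨k, ⟨hkj, hk⟩, ?_⟩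
    ext i
    simp only [kvert, Equiv.trans_apply, swap_val]
    split_ifs <;> first | omega | simp
  · have : j = n + 1 := by omega
    subst this
    simp only [kflip, h0, if_false, lt_irrefl, dite_false]
    refine ⟨k + 1, ⟨by omega, by omega⟩, ?_⟩
    ext i
    simp only [kvert, Equiv.trans_apply, finRot_val]
    have := (π i).isLt
    split_ifs <;> first | omega | simp

theorem kfacet_flip {n : ℕ} (x : ((Fin (n+1) → ℤ) × Equiv.Perm (Fin (n+1))) × ℕ) (hx : x.2 < n + 2) :
    kfacet (kflip x) = kfacet x := by
  apply Finset.Subset.antisymm _ (kfacet_flip_sub x hx)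
  have := kfacet_flip_sub (kflip x) (kflip_lt x hx)
  rwa [kflip_invol x hx] at this

/-- antipode -/
def kanti {n : ℕ} (τ : (Fin (n+1) → ℤ) × Equiv.Perm (Fin (n+1))) :
    (Fin (n+1) → ℤ) × Equiv.Perm (Fin (n+1)) :=
  (fun i => - τ.1 i - 1, τ.2.trans Fin.revPerm)

theorem kanti_invol {n : ℕ} (τ : (Fin (n+1) → ℤ) × Equiv.Perm (Fin (n+1))) :
    kanti (kanti τ) = τ := by
  ext i <;> simp [kanti]

theorem kanti_ne {n : ℕ} (τ : (Fin (n+1) → ℤ) × Equiv.Perm (Fin (n+1))) :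
    kanti τ ≠ τ := by
  intro h
  have := congrFun (congrArg Prod.fst h) 0
  simp only [kanti] at this
  omega

open Classical in
theorem kanti_verts {n : ℕ} (τ : (Fin (n+1) → ℤ) × Equiv.Perm (Fin (n+1))) :
    kverts (kanti τ) = (kverts τ).image (fun v => -v) := by
  have key : ∀ τ : (Fin (n+1) → ℤ) × Equiv.Perm (Fin (n+1)), ∀ j < n + 2,
      kvert (kanti τ).1 (kanti τ).2 j = - kvert τ.1 τ.2 (n + 1 - j) := by
    intro τ j hj
    ext i
    simp only [kvert, kanti, Equiv.trans_apply, Fin.revPerm_apply, Fin.val_rev, Pi.neg_apply]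
    have := (τ.2 i).isLt
    split_ifs <;> omega
  ext y
  simp only [kverts, Finset.mem_image, Finset.mem_range]
  constructor
  · rintro ⟨j, hj, rfl⟩
    exact ⟨_, ⟨n + 1 - j, by omega, rfl⟩, (key τ j hj).symm⟩
  · rintro ⟨_, ⟨j, hj, rfl⟩, rfl⟩
    exact ⟨n + 1 - j, by omega, by rw [key τ _ (by omega), show n + 1 - (n + 1 - j) = j by omega]⟩

theorem fnz_ex {n : ℕ} (v : Fin (n+1) → ℤ) : ∃ i : ℕ, ∀ h : i < n + 1, v ⟨i, h⟩ ≠ 0 :=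
  ⟨n + 1, fun h => absurd h (lt_irrefl _)⟩

open Classical in
/-- first nonzero index -/
noncomputable def fnz {n : ℕ} (v : Fin (n+1) → ℤ) : ℕ := Nat.find (fnz_ex v)

open Classical in
/-- sign of first nonzero coordinate -/
noncomputable def fsg {n : ℕ} (v : Fin (n+1) → ℤ) : ℤ :=
  if h : fnz v < n + 1 then (if 0 < v ⟨fnz v, h⟩ then 1 else -1) else 1

theorem fnz_le {n : ℕ} (v : Fin (n+1) → ℤ) : fnz v ≤ n + 1 :=
  Nat.find_le (fun h => absurd h (lt_irrefl _))

theorem fnz_ne {n : ℕ} (v : Fin (n+1) → ℤ) (h : fnz v < n + 1) : v ⟨fnz v, h⟩ ≠ 0 :=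
  Nat.find_spec (fnz_ex v) h

theorem fnz_below {n : ℕ} (v : Fin (n+1) → ℤ) (i : Fin (n+1)) (h : (i : ℕ) < fnz v) : v i = 0 := by
  have := Nat.find_min (fnz_ex v) h
  push Not at this
  exact this.2

theorem fnz_le_of_ne {n : ℕ} (v : Fin (n+1) → ℤ) (i : Fin (n+1)) (h : v i ≠ 0) : fnz v ≤ i := by
  by_contra hc
  exact h (fnz_below v i (by omega))

theorem fnz_neg {n : ℕ} (v : Fin (n+1) → ℤ) : fnz (-v) = fnz v := by
  unfold fnz
  congr 1
  ext i
  simp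

theorem fnz_lt_of_ne {n : ℕ} (v : Fin (n+1) → ℤ) (h : v ≠ 0) : fnz v < n + 1 := by
  obtain ⟨i, hi⟩ := Function.ne_iff.1 h
  have := fnz_le_of_ne v i hi
  omega

theorem fnz_zero {n : ℕ} : fnz (0 : Fin (n+1) → ℤ) = n + 1 := by
  apply le_antisymm (fnz_le _)
  by_contra h
  exact fnz_ne (0 : Fin (n+1) → ℤ) (by omega) rfl

theorem fsg_zero {n : ℕ} : fsg (0 : Fin (n+1) → ℤ) = 1 := by
  simp [fsg, fnz_zero]

theorem fsg_pm {n : ℕ} (v : Fin (n+1) → ℤ) : fsg v = 1 ∨ fsg v = -1 := by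
  unfold fsg
  split_ifs <;> simp

theorem fsg_neg {n : ℕ} (v : Fin (n+1) → ℤ) (h : v ≠ 0) : fsg (-v) = - fsg v := by
  have h1 := fnz_lt_of_ne v h
  have h2 := fnz_ne v h1
  unfold fsg
  simp only [fnz_neg, h1, dite_true, Pi.neg_apply]
  split_ifs <;> omega

theorem fsg_adj {n : ℕ} (v w : Fin (n+1) → ℤ) (hadj : ∀ i, |v i - w i| ≤ 1) (h : fnz v = fnz w) :
    fsg v = fsg w := by
  unfold fsg
  by_cases h1 : fnz v < n + 1
  · have h2 := fnz_ne v h1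
    have h4 : fnz w < n + 1 := h ▸ h1
    have h3 := fnz_ne w h4
    have h5 : (⟨fnz v, h1⟩ : Fin (n+1)) = ⟨fnz w, h4⟩ := Fin.ext h
    simp only [h1, h4, dite_true]
    rw [h5] at h2 ⊢
    have := hadj ⟨fnz w, h4⟩
    rw [abs_le] at this
    split_ifs <;> omega
  · simp [h1, h ▸ h1]

open Classical in
theorem falt_neg {n : ℕ} (a : (Fin (n+1) → ℤ) → ℕ) (s : (Fin (n+1) → ℤ) → ℤ) (ε : ℤ)
    (F : Finset (Fin (n+1) → ℤ))
    (ha : ∀ v ∈ F, a (-v) = a v) (hs : ∀ v ∈ F, s (-v) = - s v) (h : FAlt a s ε F) :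
    FAlt a s (-ε) (F.image (fun v => -v)) := by
  constructor
  · intro x hx y hy hxy
    simp only [Finset.coe_image, Set.mem_image, Finset.mem_coe] at hx hy
    obtain ⟨x, hx, rfl⟩ := hx
    obtain ⟨y, hy, rfl⟩ := hy
    rw [ha x hx, ha y hy] at hxy
    rw [h.1 hx hy hxy]
  · intro x hx
    simp only [Finset.mem_image] at hx
    obtain ⟨x, hx, rfl⟩ := hx
    rw [hs x hx, h.2 x hx, ha x hx, Finset.filter_image,
      Finset.card_image_of_injective _ neg_injective, neg_mul]
    congr 4
    apply Finset.filter_congr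
    intro w hw
    rw [ha w hw]

/-- the unique alternating simplex at the origin -/
def ktau0 (n : ℕ) : (Fin (n+1) → ℤ) × Equiv.Perm (Fin (n+1)) := (0, Fin.revPerm)

theorem ktau0_fnz (n : ℕ) (j : ℕ) (hj : j < n + 2) :
    fnz (kvert (ktau0 n).1 (ktau0 n).2 j) = n + 1 - j := by
  apply le_antisymm
  · by_cases h : j = 0
    · subst h; exact fnz_le _
    · apply fnz_le_of_ne _ ⟨n + 1 - j, by omega⟩
      simp [kvert, ktau0, Fin.val_rev]
      omega
  · by_contra hc
    have h1 := fnz_le (kvert (ktau0 n).1 (ktau0 n).2 j)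
    have := fnz_ne (kvert (ktau0 n).1 (ktau0 n).2 j) (by omega)
    simp [kvert, ktau0, Fin.val_rev] at this
    simp [kvert, ktau0, Fin.val_rev] at hc
    omega

theorem ktau0_fsg (n : ℕ) (j : ℕ) :
    fsg (kvert (ktau0 n).1 (ktau0 n).2 j) = 1 := by
  unfold fsg
  split_ifs with h1 h2
  · rfl
  · exfalso
    have := fnz_ne _ h1
    revert h2 this
    generalize (⟨_, h1⟩ : Fin (n+1)) = i
    simp only [kvert, ktau0, Pi.zero_apply, zero_add]
    intro h2 h3
    split_ifs at h2 h3 <;> omega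
  · rfl

open Classical in
/-- ktau0 alternates -/
theorem ktau0_alt (n : ℕ) (a : (Fin (n+1) → ℤ) → ℕ) (s : (Fin (n+1) → ℤ) → ℤ)
    (ha : ∀ v ∈ kverts (ktau0 n), a v = n + fnz v)
    (hs : ∀ v ∈ kverts (ktau0 n), s v = fsg v * (-1) ^ (fnz v + (n + 1))) :
    FAlt a s ((-1) ^ (n+1)) (kverts (ktau0 n)) := by
  have ha' : ∀ j < n + 2, a (kvert (ktau0 n).1 (ktau0 n).2 j) = n + (n + 1 - j) := by
    intro j hj
    rw [ha _ (by rw [kverts]; exact Finset.mem_image_of_mem _ (by simpa using hj)), ktau0_fnz n j hj]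
  constructor
  · intro x hx y hy hxy
    simp only [kverts, Finset.coe_image, Set.mem_image, Finset.mem_coe, Finset.mem_range] at hx hy
    obtain ⟨j, hj, rfl⟩ := hx
    obtain ⟨k, hk, rfl⟩ := hy
    rw [ha' j hj, ha' k hk] at hxy
    rw [show j = k by omega]
  · intro x hx
    rw [hs x hx]
    simp only [kverts, Finset.mem_image, Finset.mem_range] at hx
    obtain ⟨j, hj, rfl⟩ := hx
    rw [ktau0_fsg, ktau0_fnz n j hj, one_mul, pow_add, mul_comm]
    congr 2
    rw [kverts, Finset.filter_image, Finset.card_image_of_injOn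
      ((kvert_inj _ _).mono (by intro x; simp; tauto))]
    have : (Finset.range (n+2)).filter (fun k => a (kvert (ktau0 n).1 (ktau0 n).2 k) < a (kvert (ktau0 n).1 (ktau0 n).2 j)) = Finset.Ioo j (n+2) := by
      ext k
      simp only [Finset.mem_filter, Finset.mem_range, Finset.mem_Ioo]
      constructor
      · rintro ⟨h1, h2⟩
        rw [ha' k h1, ha' j hj] at h2
        omega
      · rintro ⟨h1, h2⟩
        rw [ha' k h2, ha' j hj]
        omega
    rw [this, Nat.card_Ioo]
    omega

open Classical in
theorem ktau0_unique (n : ℕ) (a : (Fin (n+1) → ℤ) → ℕ) (s : (Fin (n+1) → ℤ) → ℤ)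
    (τ : (Fin (n+1) → ℤ) × Equiv.Perm (Fin (n+1))) (ε : ℤ) (h0 : 0 ∈ kverts τ)
    (ha : ∀ v ∈ kverts τ, a v = n + fnz v)
    (hs : ∀ v ∈ kverts τ, s v = fsg v * (-1) ^ (fnz v + (n + 1)))
    (h : FAlt a s ε (kverts τ)) : τ = ktau0 n := by
  have himg : (kverts τ).image fnz = Finset.range (n + 2) := by
    apply Finset.eq_of_subset_of_card_le
    · intro k hk
      obtain ⟨v, hv, rfl⟩ := Finset.mem_image.1 hk
      have := fnz_le v
      simp; omega
    · rw [Finset.card_range, Finset.card_image_of_injOn, kverts_card]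
      intro x hx y hy hxy
      exact h.1 hx hy (by rw [ha x hx, ha y hy, hxy])
  have hinj : Set.InjOn fnz (kverts τ : Set (Fin (n+1) → ℤ)) := by
    intro x hx y hy hxy
    exact h.1 hx hy (by rw [ha x hx, ha y hy, hxy])
  have hrank : ∀ v ∈ kverts τ, ((kverts τ).filter (fun w => a w < a v)).card = fnz v := by
    intro v hv
    rw [← Finset.card_image_of_injOn (f := fnz) (hinj.mono (by intro x; simp; tauto))]
    have : ((kverts τ).filter (fun w => a w < a v)).image fnz = Finset.range (fnz v) := by
      ext k
      simp only [Finset.mem_image, Finset.mem_filter, Finset.mem_range]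
      constructor
      · rintro ⟨w, ⟨hw, h1⟩, rfl⟩
        rw [ha w hw, ha v hv] at h1
        omega
      · intro hk
        have : k ∈ (kverts τ).image fnz := by
          rw [himg]; have := fnz_le v; simp; omega
        obtain ⟨w, hw, rfl⟩ := Finset.mem_image.1 this
        exact ⟨w, ⟨hw, by rw [ha w hw, ha v hv]; omega⟩, rfl⟩
    rw [this, Finset.card_range]
  have hε : ε * (-1) ^ (n + 1) = 1 := by
    have h1 := h.2 0 h0
    rw [hrank 0 h0, hs 0 h0, fsg_zero, fnz_zero, one_mul, ← two_mul, pow_mul] at h1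
    simpa using h1.symm
  have hpos : ∀ v ∈ kverts τ, fsg v = 1 := by
    intro v hv
    have h1 := h.2 v hv
    rw [hrank v hv, hs v hv, pow_add] at h1
    rcases neg_one_pow_eq_or ℤ (fnz v) with h2 | h2 <;>
      rcases neg_one_pow_eq_or ℤ (n + 1) with h3 | h3 <;> rw [h2, h3] at h1 <;>
      rw [h3] at hε <;> linarith
  obtain ⟨v, π⟩ := τ
  have hmem : ∀ j < n + 2, kvert v π j ∈ kverts (v, π) := by
    intro j hj
    rw [kverts]; exact Finset.mem_image_of_mem _ (by simpa using hj)
  have hv0 : v = 0 := by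
    by_contra hne
    have h1 := hpos _ (hmem 0 (by omega))
    have h2 : kvert v π 0 = v := by ext i; simp [kvert]
    rw [h2] at h1
    have h3 := fnz_lt_of_ne v hne
    have h4 := fnz_ne v h3
    simp only [fsg, h3, dite_true] at h1
    have h5 : v ⟨fnz v, h3⟩ ≤ 0 := by
      rw [kverts, Finset.mem_image] at h0
      obtain ⟨j, _, hj⟩ := h0
      have := congrFun hj ⟨fnz v, h3⟩
      simp only [kvert, Pi.zero_apply] at this
      split_ifs at this <;> omega
    split_ifs at h1 <;> omega
  subst hv0
  -- strictly decreasing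
  have hlt : ∀ j k, j < k → k < n + 2 → fnz (kvert 0 π k) < fnz (kvert 0 π j) := by
    intro j k hjk hk
    have hne : fnz (kvert 0 π k) ≠ fnz (kvert 0 π j) := by
      intro he
      have := hinj (hmem k hk) (hmem j (by omega)) he
      have := kvert_inj 0 π (by simpa using hk) (by simp; omega) this
      omega
    refine lt_of_le_of_ne ?_ hne
    by_cases h1 : fnz (kvert 0 π j) < n + 1
    · have h2 := fnz_ne _ h1
      apply fnz_le_of_ne _ ⟨fnz (kvert 0 π j), h1⟩
      revert h2
      generalize (⟨fnz (kvert 0 π j), h1⟩ : Fin (n+1)) = i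
      simp only [kvert, Pi.zero_apply, zero_add]
      split_ifs <;> simp
      omega
    · have := fnz_le (kvert 0 π k); omega
  have hub : ∀ j < n + 2, fnz (kvert 0 π j) + j ≤ n + 1 := by
    intro j
    induction j with
    | zero => intro _; have := fnz_le (kvert 0 π 0); omega
    | succ j ih =>
      intro hj
      have := ih (by omega)
      have := hlt j (j+1) (by omega) hj
      omega
  have hlb : ∀ m ≤ n + 1, m ≤ fnz (kvert 0 π (n + 1 - m)) := by
    intro m
    induction m with
    | zero => intro _; omega
    | succ m ih =>
      intro hm
      have := ih (by omega)
      have := hlt (n + 1 - (m+1)) (n + 1 - m) (by omega) (by omega)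
      omega
  have hpi : ∀ i : Fin (n+1), (π i : ℕ) = n - i := by
    intro i
    have hi := i.isLt
    have e1 := hub (n + 1 - i) (by omega)
    have e2 := hlb i (by omega)
    have e3 : fnz (kvert 0 π (n + 1 - i)) = i := by omega
    have e4 : fnz (kvert 0 π (n + 1 - i)) < n + 1 := by omega
    have e5 := fnz_ne _ e4
    have e6 : (⟨_, e4⟩ : Fin (n+1)) = i := Fin.ext e3
    rw [e6] at e5
    simp [kvert] at e5
    have e7 := hlb (i + 1) (by omega)
    have e8 := fnz_below (kvert 0 π (n + 1 - (i+1))) i (by omega)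
    simp [kvert] at e8
    omega
  have : π = Fin.revPerm := by
    ext i
    rw [hpi i]
    simp [Fin.val_rev]
  rw [this]; rfl

open Classical in
theorem kuhn_fan (n : ℕ) (U : Finset (Fin (n+1) → ℤ)) (L : Set (Fin (n+1) → ℤ))
    (al : (Fin (n+1) → ℤ) → ℕ) (sl : (Fin (n+1) → ℤ) → ℤ)
    (h0U : 0 ∈ U) (hUneg : ∀ v ∈ U, -v ∈ U)
    (hal : ∀ v ∈ L, al v < n) (hsl : ∀ v ∈ L, sl v = 1 ∨ sl v = -1)
    (hLneg : ∀ v ∈ L, -v ∈ L) (halneg : ∀ v ∈ L, al (-v) = al v)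
    (hslneg : ∀ v ∈ L, sl (-v) = - sl v)
    (hadj : ∀ v ∈ U, ∀ w ∈ U, v ∈ L → w ∈ L → (∀ i, |v i - w i| ≤ 1) → al v = al w → sl v = sl w)
    (hlink : ∀ v : Fin (n+1) → ℤ, (∀ i, |v i| ≤ 1) → v ∉ L)
    (hbd : ∀ v ∈ U, ∀ w, w ∉ U → (∀ i, |v i - w i| ≤ 1) → v ∈ L) : False := by
  set a : (Fin (n+1) → ℤ) → ℕ := fun v => if v ∈ L then al v else n + fnz v with ha
  set s : (Fin (n+1) → ℤ) → ℤ := fun v => if v ∈ L then sl v else fsg v * (-1) ^ (fnz v + (n + 1)) with hs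
  have hspm : ∀ v, s v = 1 ∨ s v = -1 := by
    intro v
    simp only [hs]
    split_ifs with h
    · exact hsl v h
    · rcases fsg_pm v with h1 | h1 <;> rcases neg_one_pow_eq_or ℤ (fnz v + (n + 1)) with h2 | h2 <;>
        simp [h1, h2]
  have hLneg' : ∀ v, -v ∈ L ↔ v ∈ L := fun v =>
    ⟨fun h => by simpa using hLneg _ h, fun h => hLneg v h⟩
  have haneg : ∀ v, a (-v) = a v := by
    intro v
    simp only [ha, hLneg', fnz_neg]
    split_ifs with h
    · exact halneg v h
    · rfl
  have hsneg : ∀ v, v ≠ 0 → s (-v) = - s v := by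
    intro v hv
    simp only [hs, hLneg', fnz_neg, fsg_neg v hv]
    split_ifs with h
    · exact hslneg v h
    · ring
  have hcomp : ∀ v ∈ U, ∀ w ∈ U, (∀ i, |v i - w i| ≤ 1) → a v = a w → s v = s w := by
    intro v hv w hw hvw h
    simp only [ha, hs] at h ⊢
    by_cases h1 : v ∈ L <;> by_cases h2 : w ∈ L <;> simp only [h1, h2, if_true, if_false] at h ⊢
    · exact hadj v hv w hw h1 h2 hvw h
    · have := hal v h1; omega
    · have := hal w h2; omega
    · have h3 : fnz v = fnz w := by omega
      rw [fsg_adj v w hvw h3, h3]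
  set T : Finset ((Fin (n+1) → ℤ) × Equiv.Perm (Fin (n+1))) :=
    (U ×ˢ Finset.univ).filter (fun τ => kverts τ ⊆ U) with hT
  have hTmem : ∀ τ, τ ∈ T ↔ kverts τ ⊆ U := by
    intro τ
    simp only [hT, Finset.mem_filter, Finset.mem_product, Finset.mem_univ, and_true,
      and_iff_right_iff_imp]
    intro h
    apply h
    rw [kverts, Finset.mem_image]
    exact ⟨0, by simp, by ext i; simp [kvert]⟩
  -- count of facets is even
  have hS : ∑ x ∈ (T ×ˢ Finset.range (n+2)).filter (fun x => FAlt a s 1 (kfacet x)), (1 : ZMod 2) = 0 := by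
    apply Finset.sum_involution (fun x _ => kflip x)
    · intro x _; decide
    · intro x hx _
      simp only [Finset.mem_filter, Finset.mem_product, Finset.mem_range] at hx
      exact kflip_ne x hx.1.2
    · intro x hx
      simp only [Finset.mem_filter, Finset.mem_product, Finset.mem_range] at hx ⊢
      obtain ⟨⟨h1, h2⟩, h3⟩ := hx
      have hf := kfacet_flip x h2
      refine ⟨⟨?_, kflip_lt x h2⟩, by rw [hf]; exact h3⟩
      rw [hTmem] at h1 ⊢
      by_contra hcon
      obtain ⟨w, hw, hwU⟩ := Finset.not_subset.1 hcon
      have hall : ∀ v ∈ kfacet x, v ∈ L := by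
        intro v hv
        have hvU : v ∈ U := h1 (Finset.mem_of_mem_erase hv)
        have hv' : v ∈ kverts (kflip x).1 := by
          rw [← hf] at hv; exact Finset.mem_of_mem_erase hv
        exact hbd v hvU w hwU (kverts_adj _ v hv' w hw)
      have hcard : (kfacet x).card = n + 1 := by
        rw [kfacet_eq x h2, Finset.card_image_of_injOn
          ((kvert_inj _ _).mono (by intro y; simp; tauto)), Finset.card_erase_of_mem (by simpa using h2)]
        simp
      have hle : (kfacet x).card ≤ (Finset.range n).card := by
        apply Finset.card_le_card_of_injOn a _ h3.1
        intro v hv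
        have := hall v hv
        simp only [ha, this, if_true, Finset.coe_range, Set.mem_Iio]
        exact hal v this
      rw [hcard, Finset.card_range] at hle
      omega
    · intro x hx
      simp only [Finset.mem_filter, Finset.mem_product, Finset.mem_range] at hx
      exact kflip_invol x hx.1.2
  have hloc : ∀ τ ∈ T, ∑ j ∈ Finset.range (n+2), (if FAlt a s 1 (kfacet (τ, j)) then (1 : ZMod 2) else 0)
      = if (FAlt a s 1 (kverts τ) ∨ FAlt a s (-1) (kverts τ)) then 1 else 0 := by
    intro τ hτ
    rw [hTmem] at hτ
    have h1 := fan_local a s (kverts τ) (Finset.card_pos.1 (by rw [kverts_card]; omega))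
      (fun v _ => hspm v)
      (fun v hv w hw h => hcomp v (hτ hv) w (hτ hw) (kverts_adj τ v hv w hw) h)
    have h2 : ∑ j ∈ Finset.range (n+2), (if FAlt a s 1 (kfacet (τ, j)) then (1 : ZMod 2) else 0)
        = (((kverts τ).filter (fun u => FAlt a s 1 ((kverts τ).erase u))).card : ZMod 2) := by
      rw [Finset.card_filter]
      push_cast
      conv_rhs => rw [kverts]
      rw [Finset.sum_image (kvert_inj τ.1 τ.2)]
      rfl
    have h1 : Odd (((kverts τ).filter (fun u => FAlt a s 1 ((kverts τ).erase u))).card) ↔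
        (FAlt a s 1 (kverts τ) ∨ FAlt a s (-1) (kverts τ)) := by convert h1
    rw [h2]
    split_ifs with h
    · exact (ZMod.natCast_eq_one_iff_odd).2 (h1.2 h)
    · exact (ZMod.natCast_eq_zero_iff_even).2 (Nat.not_odd_iff_even.1 (fun h' => h (h1.1 h')))
  have hsum : ∑ τ ∈ T, (if (FAlt a s 1 (kverts τ) ∨ FAlt a s (-1) (kverts τ)) then (1 : ZMod 2) else 0) = 0 := by
    rw [← Finset.sum_congr rfl hloc, ← Finset.sum_product', ← Finset.sum_filter]
    exact hS
  rw [← Finset.sum_filter_add_sum_filter_not T (fun τ => 0 ∈ kverts τ)] at hsum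
  have hneg : ∑ τ ∈ T.filter (fun τ => ¬ 0 ∈ kverts τ), (if (FAlt a s 1 (kverts τ) ∨ FAlt a s (-1) (kverts τ)) then (1 : ZMod 2) else 0) = 0 := by
    have himp : ∀ τ : (Fin (n+1) → ℤ) × Equiv.Perm (Fin (n+1)), 0 ∉ kverts τ →
        (FAlt a s 1 (kverts τ) ∨ FAlt a s (-1) (kverts τ)) →
        (FAlt a s 1 (kverts (kanti τ)) ∨ FAlt a s (-1) (kverts (kanti τ))) := by
      intro τ h0 h
      have hs' : ∀ v ∈ kverts τ, s (-v) = - s v := fun v hv => hsneg v (by rintro rfl; exact h0 hv)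
      rw [kanti_verts]
      rcases h with h | h
      · right; exact falt_neg a s 1 _ (fun v _ => haneg v) hs' h
      · left; simpa using falt_neg a s (-1) _ (fun v _ => haneg v) hs' h
    have h0' : ∀ τ : (Fin (n+1) → ℤ) × Equiv.Perm (Fin (n+1)), 0 ∉ kverts τ → 0 ∉ kverts (kanti τ) := by
      intro τ h0 h
      rw [kanti_verts, Finset.mem_image] at h
      obtain ⟨v, hv, h⟩ := h
      rw [neg_eq_zero] at h
      exact h0 (h ▸ hv)
    apply Finset.sum_involution (fun τ _ => kanti τ)
    · intro τ hτ
      simp only [Finset.mem_filter] at hτ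
      have : (FAlt a s 1 (kverts τ) ∨ FAlt a s (-1) (kverts τ)) ↔
        (FAlt a s 1 (kverts (kanti τ)) ∨ FAlt a s (-1) (kverts (kanti τ))) := by
        refine ⟨himp τ hτ.2, fun h => ?_⟩
        have := himp (kanti τ) (h0' τ hτ.2) h
        rwa [kanti_invol] at this
      simp only [← this]
      split_ifs <;> decide
    · intro τ _ _; exact kanti_ne τ
    · intro τ hτ
      simp only [Finset.mem_filter, hTmem] at hτ ⊢
      refine ⟨?_, h0' τ hτ.2⟩
      rw [kanti_verts]
      intro v hv
      obtain ⟨w, hw, rfl⟩ := Finset.mem_image.1 hv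
      exact hUneg w (hτ.1 hw)
    · intro τ _; exact kanti_invol τ
  rw [hneg, add_zero] at hsum
  have hstar : ∀ τ : (Fin (n+1) → ℤ) × Equiv.Perm (Fin (n+1)), 0 ∈ kverts τ → ∀ v ∈ kverts τ, v ∉ L := by
    intro τ h0 v hv
    apply hlink
    intro i
    simpa using kverts_adj τ v hv 0 h0 i
  have h0tau : (0 : Fin (n+1) → ℤ) ∈ kverts (ktau0 n) := by
    rw [kverts, Finset.mem_image]
    exact ⟨0, by simp, by ext i; simp [kvert, ktau0]⟩
  rw [Finset.sum_eq_single (ktau0 n)] at hsum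
  · have h1 : FAlt a s ((-1) ^ (n+1)) (kverts (ktau0 n)) := by
      apply ktau0_alt
      · intro v hv; simp [ha, hstar _ h0tau v hv]
      · intro v hv; simp [hs, hstar _ h0tau v hv]
    have h2 : (FAlt a s 1 (kverts (ktau0 n)) ∨ FAlt a s (-1) (kverts (ktau0 n))) := by
      rcases neg_one_pow_eq_or ℤ (n + 1) with h | h <;> rw [h] at h1
      · exact Or.inl h1
      · exact Or.inr h1
    rw [if_pos h2] at hsum
    exact absurd hsum (by decide)
  · intro τ hτ hne
    simp only [Finset.mem_filter] at hτ
    rw [if_neg]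
    rintro (h | h) <;> refine hne (ktau0_unique n a s τ _ hτ.2 ?_ ?_ h)
    · intro v hv; simp [ha, hstar _ hτ.2 v hv]
    · intro v hv; simp [hs, hstar _ hτ.2 v hv]
    · intro v hv; simp [ha, hstar _ hτ.2 v hv]
    · intro v hv; simp [hs, hstar _ hτ.2 v hv]
  · intro h
    exfalso; apply h
    simp only [Finset.mem_filter, hTmem]
    refine ⟨?_, h0tau⟩
    intro v hv
    by_contra hvU
    have : (0 : Fin (n+1) → ℤ) ∈ L := hbd 0 h0U v hvU (kverts_adj _ 0 h0tau v hv)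
    exact hlink 0 (by simp) this

/-- coordinate, zero outside of range -/
noncomputable def fco {n : ℕ} (y : Fin n → ℝ) (k : ℕ) : ℝ := if h : k < n then y ⟨k, h⟩ else 0

theorem fco_neg {n : ℕ} (y : Fin n → ℝ) (k : ℕ) : fco (-y) k = - fco y k := by
  unfold fco; split_ifs <;> simp

theorem fco_sub_le {n : ℕ} (y z : Fin n → ℝ) (k : ℕ) : |fco y k - fco z k| ≤ ‖y - z‖ := by
  unfold fco
  split_ifs with h
  · exact norm_le_pi_norm (y - z) ⟨k, h⟩
  · simp

theorem fidx_ex (n : ℕ) : ∃ ix : (Fin n → ℝ) → ℕ, (∀ y, y ≠ 0 → ix y < n ∧ |fco y (ix y)| = ‖y‖) ∧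
    ∀ y, ix (-y) = ix y := by
  have h1 : ∀ z : Fin n → ℝ, ∃ k : ℕ, z ≠ 0 → k < n ∧ |fco z k| = ‖z‖ := by
    intro z
    by_cases hz : z = 0
    · exact ⟨0, fun h => absurd hz h⟩
    · obtain ⟨i0, _⟩ := Function.ne_iff.1 hz
      obtain ⟨i, -, hi⟩ := Finset.exists_max_image Finset.univ (fun i => |z i|) ⟨i0, Finset.mem_univ _⟩
      refine ⟨i, fun _ => ⟨i.isLt, ?_⟩⟩
      simp only [fco, i.isLt, dite_true]
      apply le_antisymm
      · exact norm_le_pi_norm z i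
      · rw [pi_norm_le_iff_of_nonneg (abs_nonneg _)]
        intro j; exact hi j (Finset.mem_univ _)
  choose f hf using h1
  have habs : ∀ y : Fin n → ℝ, ‖(fun i => |y i|)‖ = ‖y‖ := by
    intro y
    simp [Pi.norm_def]
  refine ⟨fun y => f (fun i => |y i|), ?_, ?_⟩
  · intro y hy
    have h2 : (fun i => |y i|) ≠ 0 := by
      rw [← norm_ne_zero_iff, habs, norm_ne_zero_iff]; exact hy
    have h3 := hf _ h2
    refine ⟨h3.1, ?_⟩
    rw [habs] at h3
    rw [← h3.2]
    simp [fco, h3.1]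
  · intro y
    simp

theorem borsuk_frontier (n : ℕ) (U : Set (Fin (n+1) → ℝ)) (hUo : IsOpen U)
    (hb : Bornology.IsBounded U) (h0 : 0 ∈ U) (hneg : ∀ x ∈ U, -x ∈ U)
    (g : (Fin (n+1) → ℝ) → (Fin n → ℝ)) (hg : Continuous g) (hodd : ∀ x, g (-x) = - g x) :
    ∃ x ∈ frontier U, g x = 0 := by
  by_contra hcon
  push Not at hcon
  have hg0 : g 0 = 0 := by
    have := hodd 0
    rw [neg_zero] at this
    exact self_eq_neg.1 this
  obtain ⟨R, hR⟩ := hb.subset_closedBall 0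
  have hcomp : IsCompact (frontier U) :=
    (isCompact_closedBall (0 : Fin (n+1) → ℝ) R).of_isClosed_subset isClosed_frontier
      (frontier_subset_closure.trans (closure_minimal hR Metric.isClosed_closedBall))
  obtain ⟨δ₂, hδ₂, hfr⟩ := hcomp.exists_forall_le' (f := fun x => ‖g x‖) hg.norm.continuousOn
    (a := 0) (fun x hx => norm_pos_iff.2 (hcon x hx))
  obtain ⟨δ, hδ, hδ2⟩ : ∃ δ : ℝ, 0 < δ ∧ 2 * δ = δ₂ := ⟨δ₂ / 2, by linarith, by ring⟩
  have huc := (isCompact_closedBall (0 : Fin (n+1) → ℝ) (R + 1)).uniformContinuousOn_of_continuous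
    hg.continuousOn
  rw [Metric.uniformContinuousOn_iff] at huc
  obtain ⟨η, hη, huc⟩ := huc δ hδ
  obtain ⟨ε, hε, hεη, hε1⟩ : ∃ ε : ℝ, 0 < ε ∧ ε < η ∧ ε ≤ 1 :=
    ⟨min (η / 2) 1, by positivity, lt_of_le_of_lt (min_le_left _ _) (by linarith), min_le_right _ _⟩
  have hR0 : 0 ≤ R := by simpa using hR h0
  set pt : (Fin (n+1) → ℤ) → (Fin (n+1) → ℝ) := fun v i => ε * v i with hpt
  have ptneg : ∀ v, pt (-v) = - pt v := by intro v; ext i; simp [hpt]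
  have pt0 : pt 0 = 0 := by ext i; simp [hpt]
  have ptadj : ∀ v w : Fin (n+1) → ℤ, (∀ i, |v i - w i| ≤ 1) → ‖pt v - pt w‖ ≤ ε := by
    intro v w h
    rw [pi_norm_le_iff_of_nonneg hε.le]
    intro i
    have h1 : |((v i : ℝ) - w i)| ≤ 1 := by exact_mod_cast h i
    simp only [hpt, Pi.sub_apply, ← mul_sub, norm_mul, Real.norm_eq_abs, abs_of_pos hε]
    nlinarith
  have hfin : {v | pt v ∈ U}.Finite := by
    obtain ⟨N, hN⟩ := exists_nat_gt (R / ε)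
    apply (Set.finite_Icc (fun _ : Fin (n+1) => -(N : ℤ)) (fun _ => (N : ℤ))).subset
    intro v hv
    have h1 := hR hv
    rw [mem_closedBall_zero_iff] at h1
    have h2 : ∀ i, |v i| ≤ (N : ℤ) := by
      intro i
      have h3 := (norm_le_pi_norm (pt v) i).trans h1
      simp only [hpt, norm_mul, Real.norm_eq_abs, abs_of_pos hε] at h3
      have h4 : |(v i : ℝ)| ≤ R / ε := by rw [le_div_iff₀ hε]; linarith
      have h5 : |(v i : ℝ)| ≤ (N : ℝ) := by linarith
      exact_mod_cast h5
    exact ⟨fun i => (abs_le.1 (h2 i)).1, fun i => (abs_le.1 (h2 i)).2⟩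
  obtain ⟨ix, hix, hixneg⟩ := fidx_ex n
  have hLne : ∀ v, δ ≤ ‖g (pt v)‖ → g (pt v) ≠ 0 := by
    intro v hv h; rw [h, norm_zero] at hv; linarith
  have hUball : ∀ x ∈ U, x ∈ Metric.closedBall (0 : Fin (n+1) → ℝ) (R+1) := fun x hx =>
    Metric.closedBall_subset_closedBall (by linarith) (hR hx)
  refine kuhn_fan n hfin.toFinset {v | δ ≤ ‖g (pt v)‖} (fun v => ix (g (pt v)))
    (fun v => if 0 < fco (g (pt v)) (ix (g (pt v))) then 1 else -1) ?_ ?_ ?_ ?_ ?_ ?_ ?_ ?_ ?_ ?_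
  · simp [pt0, h0]
  · intro v hv
    simp only [Set.Finite.mem_toFinset, Set.mem_ofPred_eq, ptneg] at hv ⊢
    exact hneg _ hv
  · intro v hv
    exact (hix _ (hLne v hv)).1
  · intro v _
    split_ifs <;> simp
  · intro v hv
    simpa [ptneg, hodd] using hv
  · intro v _
    simp [ptneg, hodd, hixneg]
  · intro v hv
    have h1 := (hix _ (hLne v hv)).2
    have h2 : δ ≤ |fco (g (pt v)) (ix (g (pt v)))| := by rw [h1]; exact hv
    simp only [ptneg, hodd, hixneg, fco_neg]
    have h3 : fco (g (pt v)) (ix (g (pt v))) ≠ 0 := by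
      intro h; rw [h, abs_zero] at h2; linarith
    rcases lt_or_gt_of_ne h3 with h | h
    · rw [if_pos (by linarith), if_neg (by linarith)]; rfl
    · rw [if_neg (by linarith), if_pos h]
  · intro v hv w hw hvL hwL hadj hidx
    simp only [Set.Finite.mem_toFinset, Set.mem_ofPred_eq] at hv hw
    have h1 := (hix _ (hLne v hvL)).2
    have h2 : δ ≤ |fco (g (pt v)) (ix (g (pt v)))| := by rw [h1]; exact hvL
    have h1' := (hix _ (hLne w hwL)).2
    have h2' : δ ≤ |fco (g (pt w)) (ix (g (pt w)))| := by rw [h1']; exact hwL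
    rw [← hidx] at h2' ⊢
    have h3 := fco_sub_le (g (pt v)) (g (pt w)) (ix (g (pt v)))
    have h4 := huc (pt v) (hUball _ hv) (pt w) (hUball _ hw)
      (by rw [dist_eq_norm]; exact lt_of_le_of_lt (ptadj v w hadj) hεη)
    rw [dist_eq_norm] at h4
    have h5 := lt_of_le_of_lt h3 h4
    rw [abs_lt] at h5
    rcases le_abs.1 h2 with h6 | h6 <;> rcases le_abs.1 h2' with h7 | h7
    · rw [if_pos (by linarith), if_pos (by linarith)]
    · linarith
    · linarith
    · rw [if_neg (by linarith), if_neg (by linarith)]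
  · intro v hv hvL
    have h1 : ‖pt v - pt 0‖ ≤ ε := ptadj v 0 (by simpa using hv)
    rw [pt0, sub_zero] at h1
    have h4 := huc (pt v) (by rw [mem_closedBall_zero_iff]; linarith) 0 (by simp; linarith)
      (by rw [dist_zero_right]; linarith)
    rw [hg0, dist_zero_right] at h4
    have : δ ≤ ‖g (pt v)‖ := hvL
    linarith
  · intro v hv w hw hadj
    simp only [Set.Finite.mem_toFinset, Set.mem_ofPred_eq] at hv hw ⊢
    have hseg : (segment ℝ (pt v) (pt w) ∩ frontier U).Nonempty := by
      by_contra hempty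
      rw [Set.not_nonempty_iff_eq_empty] at hempty
      have hcl : ∀ x ∈ segment ℝ (pt v) (pt w), x ∉ U → x ∉ closure U := by
        intro x hx hxU hxc
        have : x ∈ segment ℝ (pt v) (pt w) ∩ frontier U := ⟨hx, by rw [hUo.frontier_eq]; exact ⟨hxc, hxU⟩⟩
        rw [hempty] at this
        exact this
      obtain ⟨x, _, hx1, hx2⟩ := (convex_segment (𝕜 := ℝ) (pt v) (pt w)).isPreconnected U (closure U)ᶜ hUo
        isClosed_closure.isOpen_compl
        (by
          intro x hx
          by_cases hxU : x ∈ U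
          · exact Or.inl hxU
          · exact Or.inr (hcl x hx hxU))
        ⟨pt v, left_mem_segment _ _ _, hv⟩
        ⟨pt w, right_mem_segment _ _ _, hcl _ (right_mem_segment _ _ _) hw⟩
      exact hx2 (subset_closure hx1)
    obtain ⟨z, hz, hzf⟩ := hseg
    have h1 : ‖pt v - z‖ ≤ ε := by
      rw [norm_sub_rev]
      refine (norm_sub_le_of_mem_segment hz).trans ?_
      rw [norm_sub_rev]
      exact ptadj v w hadj
    have hzR : z ∈ Metric.closedBall (0 : Fin (n+1) → ℝ) (R+1) := by
      have := closure_minimal hR Metric.isClosed_closedBall (frontier_subset_closure hzf)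
      exact Metric.closedBall_subset_closedBall (by linarith) this
    have h4 := huc (pt v) (hUball _ hv) z hzR
      (by rw [dist_eq_norm]; linarith)
    have h5 := hfr z hzf
    rw [dist_eq_norm] at h4
    have h6 := norm_sub_norm_le (g z) (g (pt v))
    rw [norm_sub_rev] at h6
    linarith

theorem ekeland_weak {M : Type*} [MetricSpace M] [CompleteSpace M] (φ : M → ℝ)
    (hφ : LowerSemicontinuous φ) (b : ℝ) (hb : ∀ x, b ≤ φ x) (α : ℝ) (hα : 0 < α) (x0 : M) :
    ∃ x, φ x ≤ φ x0 ∧ ∀ y, φ x ≤ φ y + α * dist x y := by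
  set S : M → Set M := fun x => {y | φ y + α * dist x y ≤ φ x} with hS
  have hSself : ∀ x, x ∈ S x := by intro x; simp [hS]
  have hStrans : ∀ x y z, y ∈ S x → z ∈ S y → z ∈ S x := by
    intro x y z h1 h2
    have h1 : φ y + α * dist x y ≤ φ x := h1
    have h2 : φ z + α * dist y z ≤ φ y := h2
    change φ z + α * dist x z ≤ φ x
    have := dist_triangle x y z
    nlinarith
  have hclosed : ∀ x, IsClosed (S x) := by
    intro x
    have h1 : LowerSemicontinuous (fun y => φ y + α * dist x y) :=
      hφ.add (by fun_prop : Continuous fun y => α * dist x y).lowerSemicontinuous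
    exact h1.isClosed_preimage (φ x)
  have hstep : ∀ (n : ℕ) (x : M), ∃ z ∈ S x, ∀ y ∈ S x, φ z ≤ φ y + (1/2 : ℝ) ^ n := by
    intro n x
    have hne : (φ '' S x).Nonempty := ⟨_, x, hSself x, rfl⟩
    have hbd : BddBelow (φ '' S x) := ⟨b, by rintro _ ⟨y, _, rfl⟩; exact hb y⟩
    obtain ⟨_, ⟨z, hz, rfl⟩, hlt⟩ := exists_lt_of_csInf_lt hne
      (show sInf (φ '' S x) < sInf (φ '' S x) + (1/2 : ℝ) ^ n by
        have : (0 : ℝ) < (1/2 : ℝ) ^ n := by positivity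
        linarith)
    refine ⟨z, hz, fun y hy => ?_⟩
    have := csInf_le hbd ⟨y, hy, rfl⟩
    linarith
  choose N hN1 hN2 using hstep
  let x : ℕ → M := fun n => Nat.rec x0 (fun n y => N n y) n
  have hx0 : x 0 = x0 := rfl
  have hxs : ∀ n, x (n+1) = N n (x n) := fun n => rfl
  have hmem : ∀ n m, x (n + m) ∈ S (x n) := by
    intro n m
    induction m with
    | zero => exact hSself _
    | succ m ih => exact hStrans _ _ _ ih (by rw [← add_assoc, hxs]; exact hN1 _ _)
  have hcau : CauchySeq (fun n => x (n + 1)) := by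
    apply cauchySeq_of_le_geometric (1/2 : ℝ) (1/α) (by norm_num)
    intro n
    have h1 : φ (x (n + 1 + 1)) + α * dist (x (n+1)) (x (n+1+1)) ≤ φ (x (n+1)) := hmem (n+1) 1
    have h2 : φ (x (n+1)) ≤ φ (x (n+1+1)) + (1/2 : ℝ) ^ n := by
      rw [hxs n]; exact hN2 n (x n) _ (hmem n 2)
    rw [div_mul_eq_mul_div, le_div_iff₀ hα]
    linarith
  obtain ⟨z, hz⟩ := cauchySeq_tendsto_of_complete hcau
  have hz' : Tendsto x atTop (𝓝 z) := (tendsto_add_atTop_iff_nat 1).1 hz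
  have hzS : ∀ n, z ∈ S (x n) := by
    intro n
    apply (hclosed (x n)).mem_of_tendsto hz'
    filter_upwards [eventually_ge_atTop n] with m hm
    obtain ⟨k, rfl⟩ := Nat.exists_eq_add_of_le hm
    exact hmem n k
  have hle : ∀ n, φ z ≤ φ (x n) := by
    intro n
    have : φ z + α * dist (x n) z ≤ φ (x n) := hzS n
    have : 0 ≤ α * dist (x n) z := by positivity
    linarith
  refine ⟨z, hle 0, fun y => ?_⟩
  by_contra hcon
  push Not at hcon
  have hyS : ∀ n, y ∈ S (x n) := fun n => hStrans _ _ _ (hzS n) hcon.le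
  have h1 : ∀ n, φ z ≤ φ y + (1/2 : ℝ) ^ n := by
    intro n
    refine (hle (n+1)).trans ?_
    rw [hxs]; exact hN2 n (x n) y (hyS n)
  have h2 : φ z ≤ φ y + 0 := by
    refine ge_of_tendsto' (Tendsto.const_add (φ y) (tendsto_pow_atTop_nhds_zero_of_lt_one (r := (1/2 : ℝ)) (by norm_num) (by norm_num))) h1
  have : 0 ≤ α * dist z y := by positivity
  linarith

section
variable {X : Type*} [NormedAddCommGroup X] [NormedSpace ℝ X]

theorem mem_Z_of_coords (e : ℕ → X) (estar : ℕ → (X →L[ℝ] ℝ))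
    (hdense : Dense (Submodule.span ℝ (Set.range e) : Set X))
    (hbiorth : ∀ i j, estar i (e j) = if i = j then (1 : ℝ) else 0) (k : ℕ) (u : X)
    (hu : ∀ j < k, estar j u = 0) :
    u ∈ closure (Submodule.span ℝ (e '' {j | k ≤ j}) : Set X) := by
  set Q : X →L[ℝ] X := ContinuousLinearMap.id ℝ X - ∑ j ∈ Finset.range k, (estar j).smulRight (e j) with hQ
  have hQu : Q u = u := by
    simp only [hQ, ContinuousLinearMap.sub_apply, ContinuousLinearMap.id_apply,
      ContinuousLinearMap.sum_apply, ContinuousLinearMap.smulRight_apply]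
    rw [Finset.sum_eq_zero, sub_zero]
    intro j hj
    rw [hu j (by simpa using hj), zero_smul]
  have hmaps : ∀ w ∈ (Submodule.span ℝ (Set.range e) : Set X), 
      Q w ∈ (Submodule.span ℝ (e '' {j | k ≤ j}) : Set X) := by
    intro w hw
    refine Submodule.span_induction (p := fun w _ => Q w ∈ (Submodule.span ℝ (e '' {j | k ≤ j}))) ?_ ?_ ?_ ?_ hw
    · rintro _ ⟨i, rfl⟩
      simp only [hQ, ContinuousLinearMap.sub_apply, ContinuousLinearMap.id_apply,
        ContinuousLinearMap.sum_apply, ContinuousLinearMap.smulRight_apply, hbiorth, ite_smul,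
        one_smul, zero_smul, Finset.sum_ite_eq', Finset.mem_range]
      split_ifs with h
      · simp
      · rw [sub_zero]
        exact Submodule.subset_span ⟨i, not_lt.1 h, rfl⟩
    · simp
    · intro x y _ _ hx hy; rw [map_add]; exact Submodule.add_mem _ hx hy
    · intro c x _ hx; rw [map_smul]; exact Submodule.smul_mem _ _ hx
  rw [← hQu]
  exact map_mem_closure Q.continuous (hdense u) hmaps

/-- linear parametrisation of `Y_k` -/
noncomputable def ypar (e : ℕ → X) (k : ℕ) : (Fin (k+1) → ℝ) →L[ℝ] X :=
  ∑ i : Fin (k+1), (ContinuousLinearMap.proj (R := ℝ) i).smulRight (e i)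

theorem ypar_apply (e : ℕ → X) (k : ℕ) (c : Fin (k+1) → ℝ) : ypar e k c = ∑ i, c i • e i := by
  simp [ypar]

theorem ypar_coord (e : ℕ → X) (estar : ℕ → (X →L[ℝ] ℝ))
    (hbiorth : ∀ i j, estar i (e j) = if i = j then (1 : ℝ) else 0) (k : ℕ) (c : Fin (k+1) → ℝ)
    (i : Fin (k+1)) : estar i (ypar e k c) = c i := by
  rw [ypar_apply, map_sum]
  simp only [map_smul, hbiorth, smul_eq_mul, mul_ite, mul_one, mul_zero, Fin.val_inj]
  simp

theorem ypar_mem (e : ℕ → X) (k : ℕ) (c : Fin (k+1) → ℝ) :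
    ypar e k c ∈ Submodule.span ℝ (e '' {j | j ≤ k}) := by
  rw [ypar_apply]
  refine Submodule.sum_mem _ fun i _ => Submodule.smul_mem _ _ (Submodule.subset_span ⟨i, ?_, rfl⟩)
  exact Nat.lt_succ_iff.1 i.isLt

theorem ypar_bdd (e : ℕ → X) (estar : ℕ → (X →L[ℝ] ℝ))
    (hbiorth : ∀ i j, estar i (e j) = if i = j then (1 : ℝ) else 0) (k : ℕ) (ρ : ℝ) :
    Bornology.IsBounded {c : Fin (k+1) → ℝ | ‖ypar e k c‖ ≤ ρ} := by
  rw [isBounded_iff_forall_norm_le]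
  refine ⟨∑ i : Fin (k+1), ‖estar i‖ * |ρ|, fun c hc => ?_⟩
  have hc : ‖ypar e k c‖ ≤ ρ := hc
  rw [pi_norm_le_iff_of_nonneg (by positivity)]
  intro i
  rw [← ypar_coord e estar hbiorth k c i]
  refine ((estar i).le_opNorm _).trans ?_
  refine le_trans ?_ (Finset.single_le_sum (f := fun i : Fin (k+1) => ‖estar i‖ * |ρ|) (fun i _ => by positivity) (Finset.mem_univ i))
  exact mul_le_mul_of_nonneg_left (hc.trans (le_abs_self _)) (norm_nonneg _)

theorem intersection_lemma (e : ℕ → X) (estar : ℕ → (X →L[ℝ] ℝ))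
    (hdense : Dense (Submodule.span ℝ (Set.range e) : Set X))
    (hbiorth : ∀ i j, estar i (e j) = if i = j then (1 : ℝ) else 0) (k : ℕ) (r ρ : ℝ)
    (hr : 0 < r) (hrρ : r < ρ) (G : (Fin (k+1) → ℝ) → X) (hG : Continuous G)
    (hodd : ∀ c, G (-c) = - G c) (hbd : ∀ c, ‖ypar e k c‖ = ρ → G c = ypar e k c) :
    ∃ c, ‖ypar e k c‖ ≤ ρ ∧ ‖G c‖ = r ∧
      G c ∈ closure (Submodule.span ℝ (e '' {j | k ≤ j}) : Set X) := by
  have hG0 : G 0 = 0 := by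
    have := hodd 0
    rw [neg_zero] at this
    have h2 : (2 : ℝ) • G 0 = 0 := by
      rw [two_smul]; nth_rw 2 [this]; simp
    simpa using h2
  set U : Set (Fin (k+1) → ℝ) := {c | ‖ypar e k c‖ < ρ ∧ ‖G c‖ < r} with hU
  have hy : Continuous fun c => ‖ypar e k c‖ := (ypar e k).continuous.norm
  obtain ⟨c, hc, hgc⟩ := borsuk_frontier k U
    ((isOpen_lt hy continuous_const).inter (isOpen_lt hG.norm continuous_const))
    ((ypar_bdd e estar hbiorth k ρ).subset (fun c hc => le_of_lt hc.1))
    (by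
      change ‖ypar e k 0‖ < ρ ∧ ‖G 0‖ < r
      rw [hG0]; simp; exact ⟨hr.trans hrρ, hr⟩)
    (by
      intro c hc
      have hc : ‖ypar e k c‖ < ρ ∧ ‖G c‖ < r := hc
      change ‖ypar e k (-c)‖ < ρ ∧ ‖G (-c)‖ < r
      rw [hodd, map_neg, norm_neg, norm_neg]; exact hc)
    (fun c j => estar j (G c))
    (continuous_pi fun j => (estar j).continuous.comp hG)
    (by intro c; ext j; simp [hodd])
  have hopen : IsOpen U := (isOpen_lt hy continuous_const).inter (isOpen_lt hG.norm continuous_const)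
  rw [hopen.frontier_eq] at hc
  have hcl : ‖ypar e k c‖ ≤ ρ ∧ ‖G c‖ ≤ r := by
    have hsub : U ⊆ {c | ‖ypar e k c‖ ≤ ρ} ∩ {c | ‖G c‖ ≤ r} := fun c hc => ⟨le_of_lt hc.1, le_of_lt hc.2⟩
    exact closure_minimal hsub ((isClosed_le hy continuous_const).inter
      (isClosed_le hG.norm continuous_const)) hc.1
  have hlt : ‖ypar e k c‖ < ρ := by
    refine lt_of_le_of_ne hcl.1 fun h => ?_
    have h1 := hbd c h
    rw [← h1] at h
    linarith [hcl.2]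
  refine ⟨c, hcl.1, ?_, ?_⟩
  · refine le_antisymm hcl.2 ?_
    by_contra hcon
    exact hc.2 ⟨hlt, not_le.1 hcon⟩
  · apply mem_Z_of_coords e estar hdense hbiorth
    intro j hj
    exact congrFun hgc ⟨j, hj⟩

end

theorem pseudo_field {X : Type*} [NormedAddCommGroup X] [NormedSpace ℝ X]
    (E : X → ℝ) (E' : X → (X →L[ℝ] ℝ)) (hEc : Continuous E) (hE'cont : Continuous E')
    (heven : ∀ u, E (-u) = E u) (hE'odd : ∀ u, E' (-u) = - E' u)
    (M C δ : ℝ) (hδ : 0 < δ) (hlow : ∀ u, M ≤ E u → E u ≤ C → δ ≤ ‖E' u‖) :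
    ∃ V : X → X, Continuous V ∧ (∀ u, V (-u) = - V u) ∧ (∀ u, ‖V u‖ ≤ 1) ∧
      (∀ u, E u ≤ M → V u = 0) ∧ (∀ u, E u ≤ C → 0 ≤ E' u (V u)) ∧
      (∀ u, M + 1 ≤ E u → E u ≤ C → δ / 2 ≤ E' u (V u)) := by
  obtain ⟨V0, hV0⟩ := exists_continuous_forall_mem_convex_of_local_const (X := X) (E := X)
    (t := fun u => {h | ‖h‖ ≤ 1 ∧ (M ≤ E u → E u ≤ C → δ / 2 < E' u h)})
    (by
      intro u x hx y hy p q hp hq hpq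
      refine ⟨?_, fun h1 h2 => ?_⟩
      · have := convex_closedBall (0 : X) 1 (by simpa using hx.1) (by simpa using hy.1) hp hq hpq
        simpa using this
      · have e1 := hx.2 h1 h2
        have e2 := hy.2 h1 h2
        rw [map_add, map_smul, map_smul, smul_eq_mul, smul_eq_mul]
        have hq' : q = 1 - p := by linarith
        subst hq'
        rcases hp.eq_or_lt with h | h
        · subst h; simpa using e2
        · nlinarith)
    (by
      intro u
      by_cases hu : M ≤ E u ∧ E u ≤ C
      · have h1 := hlow u hu.1 hu.2
        obtain ⟨h, hh1, hh2⟩ := (E' u).exists_lt_apply_of_lt_opNorm (show δ / 2 < ‖E' u‖ by linarith)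
        obtain ⟨h', hn, hh'⟩ : ∃ h' : X, ‖h'‖ ≤ 1 ∧ δ / 2 < E' u h' := by
          rw [Real.norm_eq_abs, lt_abs] at hh2
          rcases hh2 with h2 | h2
          · exact ⟨h, hh1.le, h2⟩
          · exact ⟨-h, by rw [norm_neg]; exact hh1.le, by rw [map_neg]; exact h2⟩
        refine ⟨h', ?_⟩
        have hc : Continuous fun y => E' y h' := by fun_prop
        filter_upwards [hc.continuousAt.eventually_const_lt hh'] with y hy
        exact ⟨hn, fun _ _ => hy⟩
      · refine ⟨0, ?_⟩
        rw [not_and_or, not_le, not_le] at hu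
        rcases hu with hu | hu
        · filter_upwards [hEc.continuousAt.eventually_lt_const hu] with y hy
          exact ⟨by simp, fun h => absurd hy (not_lt.2 h)⟩
        · filter_upwards [hEc.continuousAt.eventually_const_lt hu] with y hy
          exact ⟨by simp, fun _ h => absurd hy (not_lt.2 h)⟩)
  set χ : X → ℝ := fun u => min 1 (max 0 (E u - M)) with hχ
  have hχ0 : ∀ u, 0 ≤ χ u := fun u => le_min zero_le_one (le_max_left _ _)
  have hχ1 : ∀ u, χ u ≤ 1 := fun u => min_le_left _ _
  have hV1 : ∀ u, ‖V0 u‖ ≤ 1 := fun u => (hV0 u).1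
  have hV2 : ∀ u, M ≤ E u → E u ≤ C → δ / 2 < E' u (V0 u) := fun u => (hV0 u).2
  have hdir : ∀ u, M ≤ E u → E u ≤ C → δ / 2 ≤ E' u ((1/2 : ℝ) • (V0 u - V0 (-u))) := by
    intro u h1 h2
    have e1 := hV2 u h1 h2
    have e2 := hV2 (-u) (by rwa [heven]) (by rwa [heven])
    rw [hE'odd, neg_apply] at e2
    rw [map_smul, map_sub, smul_eq_mul]
    linarith
  have hχz : ∀ u, E u ≤ M → χ u = 0 := by
    intro u h
    simp only [hχ]
    rw [max_eq_left (by linarith)]; simp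
  have hχo : ∀ u, M + 1 ≤ E u → χ u = 1 := by
    intro u h
    simp only [hχ]
    rw [max_eq_right (by linarith), min_eq_left (by linarith)]
  refine ⟨fun u => χ u • ((1/2 : ℝ) • (V0 u - V0 (-u))), ?_, ?_, ?_, ?_, ?_, ?_⟩
  · have : Continuous χ := by fun_prop
    fun_prop
  · intro u
    have : χ (-u) = χ u := by simp only [hχ, heven]
    simp only [this, neg_neg]
    rw [← smul_neg, ← smul_neg, neg_sub]
  · intro u
    rw [norm_smul, norm_smul, Real.norm_of_nonneg (hχ0 u)]
    have h1 := norm_sub_le (V0 u) (V0 (-u))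
    have h2 := hV1 u
    have h3 := hV1 (-u)
    have h4 : ‖(1/2 : ℝ)‖ * ‖V0 u - V0 (-u)‖ ≤ 1 := by
      rw [Real.norm_of_nonneg (by norm_num)]; linarith
    have h5 : 0 ≤ ‖(1/2 : ℝ)‖ * ‖V0 u - V0 (-u)‖ := by positivity
    exact mul_le_one₀ (hχ1 u) h5 h4
  · intro u h
    change χ u • ((1/2 : ℝ) • (V0 u - V0 (-u))) = 0
    rw [hχz u h, zero_smul]
  · intro u h
    rw [map_smul, smul_eq_mul]
    by_cases h1 : M ≤ E u
    · exact mul_nonneg (hχ0 u) (by have := hdir u h1 h; linarith)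
    · rw [hχz u (by linarith), zero_mul]
  · intro u h1 h2
    change δ / 2 ≤ E' u (χ u • ((1/2 : ℝ) • (V0 u - V0 (-u))))
    rw [hχo u h1, one_smul]
    exact hdir u (by linarith) h2

/-- uniform descent on compact families -/
theorem descent_step {X : Type*} [NormedAddCommGroup X] [NormedSpace ℝ X]
    {K : Type*} [TopologicalSpace K] [CompactSpace K]
    (E : X → ℝ) (E' : X → (X →L[ℝ] ℝ)) (hE : ∀ u, HasFDerivAt E (E' u) u) (hE'cont : Continuous E')
    (V : X → X) (hV : Continuous V) (γ : C(K, X)) (κ : ℝ) (hκ : 0 < κ) :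
    ∃ t0 > 0, ∀ t, 0 ≤ t → t ≤ t0 → ∀ c : K,
      E (γ c - t • V (γ c)) ≤ E (γ c) - t * (E' (γ c) (V (γ c)) - κ) := by
  have hcont : Continuous fun z : ℝ × K => E' (γ z.2 - z.1 • V (γ z.2)) (V (γ z.2)) - E' (γ z.2) (V (γ z.2)) := by
    have h1 : Continuous fun z : ℝ × K => V (γ z.2) := by fun_prop
    have h2 : Continuous fun z : ℝ × K => E' (γ z.2 - z.1 • V (γ z.2)) := by fun_prop
    have h3 : Continuous fun z : ℝ × K => E' (γ z.2) := by fun_prop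
    exact (h2.clm_apply h1).sub (h3.clm_apply h1)
  have hev := (isCompact_univ (X := K)).eventually_forall_of_forall_eventually (x₀ := (0 : ℝ))
    (P := fun s c => -κ < E' (γ c - s • V (γ c)) (V (γ c)) - E' (γ c) (V (γ c)))
    (by
      intro c _
      apply hcont.continuousAt.eventually_const_lt
      simpa using hκ)
  obtain ⟨t1, ht1, hball⟩ := Metric.eventually_nhds_iff.1 hev
  refine ⟨t1 / 2, by linarith, ?_⟩
  intro t ht0 htt c
  set u := γ c
  set v := V u
  have hder : ∀ s : ℝ, HasDerivAt (fun s : ℝ => E (u - s • v) + s * (E' u v - κ))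
      (E' (u - s • v) (-v) + (E' u v - κ)) s := by
    intro s
    have h1 : HasDerivAt (fun s : ℝ => u - s • v) (-v) s := by
      simpa using ((hasDerivAt_id s).smul_const v).const_sub u
    have h2 := (hE (u - s • v)).comp_hasDerivAt s h1
    have h3 : HasDerivAt (fun s : ℝ => s * (E' u v - κ)) (E' u v - κ) s := by
      simpa using (hasDerivAt_id s).mul_const (E' u v - κ)
    exact h2.add h3
  have hanti : AntitoneOn (fun s : ℝ => E (u - s • v) + s * (E' u v - κ)) (Set.Icc 0 t) := by
    apply antitoneOn_of_deriv_nonpos (convex_Icc 0 t)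
    · exact fun s _ => (hder s).continuousAt.continuousWithinAt
    · exact fun s _ => (hder s).differentiableAt.differentiableWithinAt
    · intro s hs
      rw [interior_Icc] at hs
      rw [(hder s).deriv, map_neg]
      have := hball (y := s) (by rw [Real.dist_eq, sub_zero, abs_of_pos hs.1]; linarith [hs.2]) c (Set.mem_univ _)
      linarith
  have := hanti (Set.left_mem_Icc.2 ht0) (Set.right_mem_Icc.2 ht0) ht0
  simp only [zero_smul, sub_zero, zero_mul, add_zero] at this
  linarith

theorem fountain_level
    {X : Type*} [NormedAddCommGroup X] [NormedSpace ℝ X] [CompleteSpace X]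
    (e : ℕ → X) (estar : ℕ → (X →L[ℝ] ℝ))
    (hdense : Dense (Submodule.span ℝ (Set.range e) : Set X))
    (hbiorth : ∀ i j, estar i (e j) = if i = j then (1 : ℝ) else 0)
    (E : X → ℝ) (E' : X → (X →L[ℝ] ℝ))
    (hE : ∀ u, HasFDerivAt E (E' u) u) (hE'cont : Continuous E')
    (heven : ∀ u, E (-u) = E u)
    (k : ℕ) (r ρ : ℝ) (hr : 0 < r) (hrρ : r < ρ) (M : ℝ) (hM : 0 ≤ M)
    (hA2 : ∀ u : X,
      u ∈ closure (Submodule.span ℝ (e '' {j | k ≤ j}) : Set X) → ‖u‖ = r → M + 2 ≤ E u)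
    (hA3 : ∀ u : X, u ∈ Submodule.span ℝ (e '' {j | j ≤ k}) → ‖u‖ = ρ → E u ≤ 0)
    (hPS : ∀ C : ℝ, ∃ δ > 0, ∀ u, M ≤ E u → E u ≤ C → δ ≤ ‖E' u‖) : False := by
  have hEc : Continuous E := continuous_iff_continuousAt.2 fun u => (hE u).continuousAt
  have hρ : 0 < ρ := hr.trans hrρ
  have hE'odd : ∀ u, E' (-u) = - E' u := by
    intro u
    have h1 : HasFDerivAt (fun u => E (-u)) ((E' (-u)).comp (-ContinuousLinearMap.id ℝ X)) u :=
      (hE (-u)).comp u (hasFDerivAt_id u).neg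
    have h2 : (fun u => E (-u)) = E := funext heven
    rw [h2] at h1
    have h3 := h1.unique (hE u)
    rw [← h3]
    ext x; simp
  let Kset : Set (Fin (k+1) → ℝ) := {c | ‖ypar e k c‖ ≤ ρ}
  have hKcomp : IsCompact Kset :=
    Metric.isCompact_of_isClosed_isBounded
      (isClosed_le (ypar e k).continuous.norm continuous_const) (ypar_bdd e estar hbiorth k ρ)
  haveI : CompactSpace Kset := isCompact_iff_compactSpace.1 hKcomp
  have h0K : (0 : Fin (k+1) → ℝ) ∈ Kset := by
    change ‖ypar e k 0‖ ≤ ρ; simpa using hρ.le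
  haveI : Nonempty Kset := ⟨⟨0, h0K⟩⟩
  have hnegK : ∀ c ∈ Kset, -c ∈ Kset := by
    intro c hc
    change ‖ypar e k (-c)‖ ≤ ρ
    rw [map_neg, norm_neg]; exact hc
  let Γ : Set C(Kset, X) := {γ | (∀ c : Kset, γ ⟨-c.1, hnegK _ c.2⟩ = - γ c) ∧
    ∀ c : Kset, ‖ypar e k c.1‖ = ρ → γ c = ypar e k c.1}
  have hev : ∀ c : Kset, Continuous fun γ : C(Kset, X) => γ c := fun c => by fun_prop
  have hΓclosed : IsClosed Γ := by
    have hΓeq : Γ = (⋂ c : Kset, {γ : C(Kset, X) | γ ⟨-c.1, hnegK _ c.2⟩ = - γ c}) ∩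
        ⋂ c : Kset, ⋂ _ : ‖ypar e k c.1‖ = ρ, {γ : C(Kset, X) | γ c = ypar e k c.1} := by
      ext γ
      simp only [Γ, Set.mem_inter_iff, Set.mem_iInter, Set.mem_setOf_eq]
    rw [hΓeq]
    exact (isClosed_iInter fun c => isClosed_eq (hev _) (hev _).neg).inter
      (isClosed_iInter fun c => isClosed_iInter fun _ => isClosed_eq (hev _) continuous_const)
  haveI : CompleteSpace Γ := hΓclosed.completeSpace_coe
  let φ : Γ → ℝ := fun γ => ⨆ c : Kset, E (γ.1 c)
  have hbdd : ∀ γ : C(Kset, X), BddAbove (Set.range fun c : Kset => E (γ c)) := fun γ =>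
    (isCompact_range (hEc.comp γ.continuous)).bddAbove
  have hφle : ∀ (γ : Γ) (c : Kset), E (γ.1 c) ≤ φ γ := fun γ c => le_ciSup (hbdd γ.1) c
  have hφlsc : LowerSemicontinuous φ := by
    apply lowerSemicontinuous_ciSup
    · intro γ; exact hbdd γ.1
    · intro c
      exact (hEc.comp ((hev c).comp continuous_subtype_val)).lowerSemicontinuous
  -- retraction
  have hpmem : ∀ c : Fin (k+1) → ℝ, (ρ / max ρ ‖ypar e k c‖) • c ∈ Kset := by
    intro c
    change ‖ypar e k ((ρ / max ρ ‖ypar e k c‖) • c)‖ ≤ ρ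
    have hmax : 0 < max ρ ‖ypar e k c‖ := lt_max_of_lt_left hρ
    rw [map_smul, norm_smul, Real.norm_of_nonneg (by positivity), div_mul_eq_mul_div,
      div_le_iff₀ hmax]
    exact mul_le_mul_of_nonneg_left (le_max_right _ _) hρ.le
  let p : (Fin (k+1) → ℝ) → Kset := fun c => ⟨_, hpmem c⟩
  have hpcont : Continuous p := by
    apply Continuous.subtype_mk
    have h1 : Continuous fun c => max ρ ‖ypar e k c‖ := by fun_prop
    exact (continuous_const.div h1 (fun c => (lt_max_of_lt_left hρ).ne')).smul continuous_id
  have hpneg : ∀ c, p (-c) = ⟨-(p c).1, hnegK _ (p c).2⟩ := by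
    intro c
    apply Subtype.ext
    simp [p]
  have hpid : ∀ c, ‖ypar e k c‖ ≤ ρ → (p c).1 = c := by
    intro c hc
    simp only [p]
    rw [max_eq_left hc, div_self hρ.ne', one_smul]
  have hφlow : ∀ γ : Γ, M + 2 ≤ φ γ := by
    intro γ
    obtain ⟨c, hc1, hc2, hc3⟩ := intersection_lemma e estar hdense hbiorth k r ρ hr hrρ
      (fun c => γ.1 (p c)) (γ.1.continuous.comp hpcont)
      (by intro c; rw [hpneg]; exact γ.2.1 (p c))
      (by
        intro c hc
        have h1 := hpid c hc.le
        have h2 := γ.2.2 (p c) (by rw [h1]; exact hc)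
        rw [h2, h1])
    exact (hA2 _ hc3 hc2).trans (hφle γ (p c))
  let γ0 : Γ := ⟨⟨fun c => ypar e k c.1, by fun_prop⟩, by
    refine ⟨fun c => ?_, fun c _ => rfl⟩
    simp⟩
  obtain ⟨δ, hδ, hlow⟩ := hPS (φ γ0)
  obtain ⟨γ, hγ0, hγ⟩ := ekeland_weak φ hφlsc (M + 2) hφlow (δ / 4) (by linarith) γ0
  obtain ⟨V, hVc, hVodd, hV1, hVz, hVn, hVd⟩ := pseudo_field E E' hEc hE'cont heven hE'odd M (φ γ0) δ hδ hlow
  obtain ⟨t0, ht0, hstep⟩ := descent_step E E' hE hE'cont V hVc γ.1 (δ / 8) (by linarith)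
  obtain ⟨t, ht, htt0, htδ⟩ : ∃ t : ℝ, 0 < t ∧ t ≤ t0 ∧ t * δ ≤ 1 := by
    refine ⟨min t0 (1 / δ), by positivity, min_le_left _ _, ?_⟩
    calc min t0 (1/δ) * δ ≤ 1 / δ * δ := mul_le_mul_of_nonneg_right (min_le_right _ _) hδ.le
      _ = 1 := by field_simp
  let γt : Γ := ⟨⟨fun c => γ.1 c - t • V (γ.1 c), by fun_prop⟩, by
    refine ⟨fun c => ?_, fun c hc => ?_⟩
    · change γ.1 _ - t • V (γ.1 _) = -(γ.1 c - t • V (γ.1 c))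
      rw [γ.2.1 c, hVodd, smul_neg]; abel
    · change γ.1 c - t • V (γ.1 c) = _
      rw [γ.2.2 c hc, hVz, smul_zero, sub_zero]
      exact (hA3 _ (ypar_mem e k _) hc).trans hM⟩
  have hdist : dist γ γt ≤ t := by
    rw [Subtype.dist_eq, ContinuousMap.dist_le ht.le]
    intro c
    change dist (γ.1 c) (γ.1 c - t • V (γ.1 c)) ≤ t
    rw [dist_eq_norm, sub_sub_cancel, norm_smul, Real.norm_of_nonneg ht.le]
    have := hV1 (γ.1 c)
    nlinarith
  have hφt : φ γt ≤ φ γ - t * (3 * δ / 8) := by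
    apply ciSup_le
    intro c
    change E (γ.1 c - t • V (γ.1 c)) ≤ _
    have h1 := hstep t ht.le htt0 c
    have h2 := hφle γ c
    have h3 := hφlow γ
    by_cases h : M + 1 ≤ E (γ.1 c)
    · have h4 := hVd (γ.1 c) h (by linarith)
      nlinarith
    · have h4 := hVn (γ.1 c) (by linarith)
      have h5 := mul_nonneg ht.le h4
      nlinarith
  have h1 := hγ γt
  have h2 : δ / 4 * dist γ γt ≤ δ / 4 * t := mul_le_mul_of_nonneg_left hdist (by linarith)
  have h3 : 0 < t * δ := by positivity
  nlinarith


/-- Fountain Theorem: Let `X` be a real reflexive separable Banach space with a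
biorthogonal system `(e_j, e_j*)` whose spans are dense in `X` and `X*` respectively, let
`Y_k = span{e_j : j ≤ k}` and `Z_k = closure (span{e_j : j ≥ k})`. Let `E : X → ℝ` be `C¹`
and even. If there exist `ρ_k > r_k > 0` such that
`(A₂)` `inf{E u : u ∈ Z_k, ‖u‖ = r_k} → +∞`,
`(A₃)` `max{E u : u ∈ Y_k, ‖u‖ = ρ_k} ≤ 0`, and
`(A₄)` `E` satisfies the Palais–Smale condition,
then `E` has a sequence of critical points `(u_k)` with `E (u_k) → +∞`. -/
theorem fountain_theorem
    {X : Type*} [NormedAddCommGroup X] [NormedSpace ℝ X] [CompleteSpace X]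
    [TopologicalSpace.SeparableSpace X]
    (hreflexive : Function.Surjective (NormedSpace.inclusionInDoubleDual ℝ X))
    (e : ℕ → X) (estar : ℕ → (X →L[ℝ] ℝ))
    (hdense : Dense (Submodule.span ℝ (Set.range e) : Set X))
    (hdense' : Dense (Submodule.span ℝ (Set.range estar) : Set (X →L[ℝ] ℝ)))
    (hbiorth : ∀ i j, estar i (e j) = if i = j then (1 : ℝ) else 0)
    (E : X → ℝ) (E' : X → (X →L[ℝ] ℝ))
    (hE : ∀ u, HasFDerivAt E (E' u) u) (hE'cont : Continuous E')
    (heven : ∀ u, E (-u) = E u)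
    (r ρ : ℕ → ℝ) (hr : ∀ k, 0 < r k) (hrρ : ∀ k, r k < ρ k)
    -- (A₂): inf{E u : u ∈ Z_k, ‖u‖ = r_k} → +∞ as k → +∞
    (hA2 : ∀ M : ℝ, ∃ K : ℕ, ∀ k ≥ K, ∀ u : X,
      u ∈ closure (Submodule.span ℝ (e '' {j | k ≤ j}) : Set X) → ‖u‖ = r k → M ≤ E u)
    -- (A₃): max{E u : u ∈ Y_k, ‖u‖ = ρ_k} ≤ 0
    (hA3 : ∀ k : ℕ, ∀ u : X,
      u ∈ Submodule.span ℝ (e '' {j | j ≤ k}) → ‖u‖ = ρ k → E u ≤ 0)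
    -- (A₄): Palais–Smale condition
    (hPS : ∀ u : ℕ → X, (∃ C : ℝ, ∀ m, |E (u m)| ≤ C) →
      Tendsto (fun m => ‖E' (u m)‖) atTop (𝓝 0) →
      ∃ (v : X) (σ : ℕ → ℕ), StrictMono σ ∧ Tendsto (u ∘ σ) atTop (𝓝 v)) :
    ∃ u : ℕ → X, (∀ k, E' (u k) = 0) ∧ Tendsto (fun k => E (u k)) atTop atTop := by
  have hEc : Continuous E := continuous_iff_continuousAt.2 fun u => (hE u).continuousAt
  have main : ∀ M : ℝ, ∃ u, E' u = 0 ∧ M ≤ E u := by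
    intro M0
    by_contra hcon
    push Not at hcon
    obtain ⟨M, hM0, hMM⟩ : ∃ M : ℝ, 0 ≤ M ∧ M0 ≤ M := ⟨max 0 M0, le_max_left _ _, le_max_right _ _⟩
    obtain ⟨k, hk⟩ := hA2 (M + 2)
    refine fountain_level e estar hdense hbiorth E E' hE hE'cont heven k (r k) (ρ k) (hr k) (hrρ k)
      M hM0 (hk k le_rfl) (hA3 k) ?_
    intro C
    by_contra hno
    push Not at hno
    choose u hu1 hu2 hu3 using fun m : ℕ => hno (1 / ((m : ℝ) + 1)) (by positivity)
    have htend : Tendsto (fun m => ‖E' (u m)‖) atTop (𝓝 0) :=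
      squeeze_zero (fun m => norm_nonneg _) (fun m => (hu3 m).le) tendsto_one_div_add_atTop_nhds_zero_nat
    obtain ⟨v, σ, hσ, hv⟩ := hPS u ⟨C, fun m => by
      rw [abs_of_nonneg (hM0.trans (hu1 m))]; exact hu2 m⟩ htend
    have h1 : Tendsto (fun m => ‖E' (u (σ m))‖) atTop (𝓝 0) := htend.comp hσ.tendsto_atTop
    have h2 : Tendsto (fun m => ‖E' (u (σ m))‖) atTop (𝓝 ‖E' v‖) :=
      ((hE'cont.norm).tendsto v).comp hv
    have h3 : ‖E' v‖ = 0 := tendsto_nhds_unique h2 h1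
    have h4 : Tendsto (fun m => E (u (σ m))) atTop (𝓝 (E v)) := (hEc.tendsto v).comp hv
    have h5 : M ≤ E v := ge_of_tendsto' h4 fun m => hu1 (σ m)
    have h6 := hcon v (norm_eq_zero.1 h3)
    linarith
  choose u hu1 hu2 using fun m : ℕ => main (m : ℝ)
  exact ⟨u, hu1, tendsto_atTop_mono hu2 tendsto_natCast_atTop_atTop⟩
end

section
/- (Dual Fountain Theorem) Let X be a real Banach space with a biorthogonal system (e_j, e_j*) as in the context, Y_k = span{e_1,…,e_k} and Z_k = closure(span{e_j : j ≥ k}). Let E : X → ℝ be continuously Fréchet differentiable and even. Suppose there is k₀ > 0 such that for each k ≥ k₀ there exist ρ_k > r_k > 0 with: (B₁) inf{E(u) : u ∈ Z_k, ‖u‖ = ρ_k} ≥ 0; (B₂) b_k := max{E(u) : u ∈ Y_k, ‖u‖ = r_k} < 0; (B₃) d_k := inf{E(u) : u ∈ Z_k, ‖u‖ ≤ ρ_k} → 0 as k → +∞; (B₄) E satisfies the (PS)_c* condition with respect to (Y_n) for every c ∈ [d_{k₀}, 0). Then E has a sequence of critical points whose critical values are negative and converge to 0. -/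
open Filter Topology

open Filter Topology

namespace DFT

/-- cells of the cubical grid: odd coordinates are edges, even coordinates are points -/
abbrev Cell (d : ℕ) := Fin d → ℤ

abbrev Chain (d : ℕ) := Cell d → ZMod 2

def bd {d : ℕ} (c : Chain d) : Chain d := fun x =>
  ∑ i, if Even (x i) then c (x + Pi.single i 1) + c (x - Pi.single i 1) else 0

def nu {d : ℕ} (c : Chain d) : Chain d := fun x => c (-x)

def Cof {d : ℕ} (x y : Cell d) : Prop :=
  ∃ i, Even (x i) ∧ (y = x + Pi.single i 1 ∨ y = x - Pi.single i 1)

open Classical in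
noncomputable def tr {d : ℕ} (B : Set (Cell d)) (c : Chain d) : Chain d := fun x => if x ∈ B then c x else 0

lemma z2 (a : ZMod 2) : a + a = 0 := CharTwo.add_self_eq_zero a

variable {d : ℕ}

lemma bd_add (c c' : Chain d) : bd (c + c') = bd c + bd c' := by
  funext x
  simp only [bd, Pi.add_apply, ← Finset.sum_add_distrib]
  refine Finset.sum_congr rfl fun i _ => ?_
  split_ifs
  · ring
  · simp

lemma bd_zero : bd (0 : Chain d) = 0 := by
  funext x
  simp [bd]

lemma nu_add (c c' : Chain d) : nu (c + c') = nu c + nu c' := rfl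

lemma nu_nu (c : Chain d) : nu (nu c) = c := by
  funext x; simp [nu]

lemma bd_nu (c : Chain d) : bd (nu c) = nu (bd c) := by
  funext x
  simp only [bd, nu]
  refine Finset.sum_congr rfl fun i _ => ?_
  simp only [Pi.neg_apply, even_neg]
  split_ifs
  · rw [add_comm]
    congr 2 <;> abel
  · rfl

lemma bd_congr {c c' : Chain d} {x : Cell d} (h : ∀ y, Cof x y → c y = c' y) :
    bd c x = bd c' x := by
  simp only [bd]
  refine Finset.sum_congr rfl fun i _ => ?_
  split_ifs with hi
  · rw [h _ ⟨i, hi, Or.inl rfl⟩, h _ ⟨i, hi, Or.inr rfl⟩]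
  · rfl

lemma bd_bd (c : Chain d) : bd (bd c) = 0 := by
  funext x
  have key : bd (bd c) x = ∑ i, ∑ j, if (i ≠ j ∧ Even (x i) ∧ Even (x j)) then
      (c (x + Pi.single i 1 + Pi.single j 1) + c (x + Pi.single i 1 - Pi.single j 1)
      + (c (x - Pi.single i 1 + Pi.single j 1) + c (x - Pi.single i 1 - Pi.single j 1))) else 0 := by
    simp only [bd]
    refine Finset.sum_congr rfl fun i _ => ?_
    by_cases hi : Even (x i)
    · rw [if_pos hi, ← Finset.sum_add_distrib]
      refine Finset.sum_congr rfl fun j _ => ?_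
      by_cases hij : i = j
      · subst hij
        have h1 : ¬ Even ((x + Pi.single i 1 : Cell d) i) := by
          simp [hi]
        have h2 : ¬ Even ((x - Pi.single i 1 : Cell d) i) := by
          simp [hi]
        rw [if_neg h1, if_neg h2]
        simp
      · have h1 : (x + Pi.single i 1 : Cell d) j = x j := by
          simp [Ne.symm hij]
        have h2 : (x - Pi.single i 1 : Cell d) j = x j := by
          simp [Ne.symm hij]
        rw [h1, h2]
        by_cases hj : Even (x j)
        · simp [hi, hj, hij]
        · simp [hj]
    · simp [hi]
  rw [key]
  rw [← Finset.sum_product']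
  simp only [Pi.zero_apply]
  refine Finset.sum_involution (fun p _ => (p.2, p.1)) ?_ ?_ ?_ ?_
  · rintro ⟨i, j⟩ _
    simp only
    by_cases h : (i ≠ j ∧ Even (x i) ∧ Even (x j))
    · have h' : (j ≠ i ∧ Even (x j) ∧ Even (x i)) := ⟨h.1.symm, h.2.2, h.2.1⟩
      rw [if_pos h, if_pos h']
      have e1 : x + Pi.single j 1 + Pi.single i 1 = x + Pi.single i 1 + Pi.single j 1 := by abel
      have e2 : x + Pi.single j 1 - Pi.single i 1 = x - Pi.single i 1 + Pi.single j 1 := by abel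
      have e3 : x - Pi.single j 1 + Pi.single i 1 = x + Pi.single i 1 - Pi.single j 1 := by abel
      have e4 : x - Pi.single j 1 - Pi.single i 1 = x - Pi.single i 1 - Pi.single j 1 := by abel
      rw [e1, e2, e3, e4]
      generalize c (x + Pi.single i 1 + Pi.single j 1) = a1
      generalize c (x + Pi.single i 1 - Pi.single j 1) = a2
      generalize c (x - Pi.single i 1 + Pi.single j 1) = a3
      generalize c (x - Pi.single i 1 - Pi.single j 1) = a4
      revert a1 a2 a3 a4
      decide
    · have h' : ¬ (j ≠ i ∧ Even (x j) ∧ Even (x i)) := fun h' => h ⟨h'.1.symm, h'.2.2, h'.2.1⟩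
      rw [if_neg h, if_neg h', add_zero]
  · rintro ⟨i, j⟩ _ hne heq
    apply hne
    have : j = i := congrArg Prod.fst heq
    simp [this]
  · simp
  · simp

lemma tr_add (B : Set (Cell d)) (c c' : Chain d) : tr B (c + c') = tr B c + tr B c' := by
  funext x
  simp only [tr, Pi.add_apply]
  split_ifs <;> simp

lemma tr_zero (B : Set (Cell d)) : tr B (0 : Chain d) = 0 := by
  funext x
  simp [tr]

/-- the commutator of restriction and boundary -/
noncomputable def kk (B : Set (Cell d)) (c : Chain d) : Chain d := bd (tr B c) + tr B (bd c)

lemma kk_add (B : Set (Cell d)) (c c' : Chain d) : kk B (c + c') = kk B c + kk B c' := by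
  simp only [kk, tr_add, bd_add]
  abel

lemma bd_kk (B : Set (Cell d)) (c : Chain d) : bd (kk B c) = kk B (bd c) := by
  simp only [kk, bd_add, bd_bd, tr_zero]
  simp

def UpSet (B : Set (Cell d)) : Prop := ∀ x y, Cof x y → x ∈ B → y ∈ B

lemma kk_supp {B : Set (Cell d)} (hB : UpSet B) {c : Chain d} {x : Cell d} (h : kk B c x ≠ 0) :
    x ∉ B ∧ ∃ y, Cof x y ∧ y ∈ B ∧ c y ≠ 0 := by
  have hx : x ∉ B := by
    intro hx
    apply h
    have : bd (tr B c) x = bd c x := by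
      apply bd_congr
      intro y hy
      simp [tr, hB x y hy hx]
    simp only [kk, Pi.add_apply, this]
    simp only [tr, if_pos hx]
    exact z2 _
  refine ⟨hx, ?_⟩
  by_contra hcon
  push Not at hcon
  apply h
  have : bd (tr B c) x = bd 0 x := by
    apply bd_congr
    intro y hy
    simp only [tr, Pi.zero_apply]
    split_ifs with hyB
    · exact hcon y hy hyB
    · rfl
  simp only [kk, Pi.add_apply, this, bd_zero]
  simp [tr, hx]

open Classical in
noncomputable def par (x : Cell d) : ZMod 2 := if ∀ i, Even (x i) then 1 else 0

noncomputable def eps (c : Chain d) : ZMod 2 := ∑ᶠ x, par x * c x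

def FinS (c : Chain d) : Prop := (Function.support c).Finite

lemma FinS.add {c c' : Chain d} (h : FinS c) (h' : FinS c') : FinS (c + c') :=
  (h.union h').subset (Function.support_add c c')

lemma FinS.nu {c : Chain d} (h : FinS c) : FinS (nu c) := by
  have : Function.support (DFT.nu c) = (fun x => -x) ⁻¹' (Function.support c) := rfl
  unfold FinS
  rw [this]
  exact h.preimage (neg_injective.injOn)

lemma FinS.tr {c : Chain d} (h : FinS c) (B : Set (Cell d)) : FinS (tr B c) := by
  refine h.subset ?_
  intro x hx
  simp only [Function.mem_support, DFT.tr] at hx ⊢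
  intro h0
  apply hx
  simp [h0]

lemma FinS.shift {c : Chain d} (h : FinS c) (v : Cell d) : FinS (fun x => c (x + v)) := by
  have : Function.support (fun x => c (x + v)) = (fun x => x + v) ⁻¹' (Function.support c) := rfl
  unfold FinS
  rw [this]
  exact h.preimage ((add_left_injective v).injOn)

lemma FinS.bd {c : Chain d} (h : FinS c) : FinS (bd c) := by
  have : Function.support (DFT.bd c) ⊆ ⋃ i : Fin d,
      (Function.support (fun x => c (x + Pi.single i 1)) ∪
        Function.support (fun x => c (x + -Pi.single i 1))) := by
    intro x hx
    by_contra hcon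
    simp only [Set.mem_iUnion, Set.mem_union, Function.mem_support] at hcon
    push Not at hcon
    apply hx
    simp only [DFT.bd]
    apply Finset.sum_eq_zero
    intro i _
    have h2 := hcon i
    rw [← sub_eq_add_neg] at h2
    simp [h2]
  refine (Set.finite_iUnion fun i => ?_).subset this
  exact (h.shift _).union (h.shift _)

lemma FinS.par {c : Chain d} (h : FinS c) : (Function.support fun x => par x * c x).Finite := by
  refine h.subset ?_
  intro x hx
  simp only [Function.mem_support] at hx ⊢
  exact right_ne_zero_of_mul hx

lemma eps_add {c c' : Chain d} (h : FinS c) (h' : FinS c') : eps (c + c') = eps c + eps c' := by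
  unfold eps
  rw [← finsum_add_distrib h.par h'.par]
  simp [mul_add]

lemma eps_nu (c : Chain d) : eps (nu c) = eps c := by
  unfold eps
  rw [← finsum_comp_equiv (Equiv.neg (Cell d)) (f := fun x => par x * c x)]
  refine finsum_congr fun x => ?_
  simp [par, nu]

lemma eps_bd {c : Chain d} (h : FinS c) : eps (bd c) = 0 := by
  unfold eps
  have h1 : ∀ x : Cell d, par x * bd c x =
      ∑ i : Fin d, (par x * c (x + Pi.single i 1) + par x * c (x + - Pi.single i 1)) := by
    intro x
    simp only [bd, Finset.mul_sum]
    refine Finset.sum_congr rfl fun i _ => ?_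
    by_cases hx : ∀ i, Even (x i)
    · simp [par, hx, sub_eq_add_neg]
    · simp [par, hx]
  rw [finsum_congr h1, finsum_sum_comm]
  · apply Finset.sum_eq_zero
    intro i _
    rw [finsum_add_distrib (h.shift _).par (h.shift _).par]
    have e1 : ∑ᶠ x : Cell d, par x * c (x + Pi.single i 1) =
        ∑ᶠ x : Cell d, par (x - Pi.single i 1) * c x := by
      refine Eq.trans (finsum_congr fun x => ?_)
        (finsum_comp_equiv (Equiv.addRight (Pi.single i (1:ℤ) : Cell d))
        (f := fun x : Cell d => par (x - Pi.single i 1) * c x))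
      simp
    have e2 : ∑ᶠ x : Cell d, par x * c (x + - Pi.single i 1) =
        ∑ᶠ x : Cell d, par (x + Pi.single i 1) * c x := by
      refine Eq.trans (finsum_congr fun x => ?_)
        (finsum_comp_equiv (Equiv.addRight (- Pi.single i (1:ℤ) : Cell d))
        (f := fun x : Cell d => par (x + Pi.single i 1) * c x))
      simp
    rw [e1, e2]
    have e3 : ∀ x : Cell d, par (x - Pi.single i 1) = par (x + Pi.single i 1) := by
      intro x
      unfold par
      congr 1
      apply propext
      refine forall_congr' fun j => ?_
      simp only [Pi.sub_apply, Pi.add_apply]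
      rw [Int.even_sub, Int.even_add]
    simp only [e3]
    exact z2 _
  · intro i _
    exact ((h.shift _).par.union (h.shift _).par).subset (Function.support_add _ _)

theorem key (m : ℕ) : ∀ (A : Set (Cell d)) (_ : A.Finite)
    (_ : ∀ x y, Cof x y → y ∈ A → x ∈ A) (_ : ∀ x ∈ A, -x ∈ A)
    (B : ℕ → Set (Cell d)) (_ : ∀ j < m, UpSet (B j))
    (_ : ∀ j < m, ∀ x ∈ A, x ∈ B j → -x ∉ B j)
    (_ : ∀ x ∈ A, ∃ j < m, x ∈ B j ∨ -x ∈ B j)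
    (C : ℕ → Chain d) (_ : ∀ i ≤ m, ∀ x, C i x ≠ 0 → x ∈ A)
    (_ : ∀ i < m, bd (C (i+1)) = C i + nu (C i)), eps (C 0) = 0 := by
  induction m with
  | zero =>
    intro A _ _ _ B _ _ hcov C hC _
    have : C 0 = 0 := by
      funext x
      by_contra h
      obtain ⟨j, hj, _⟩ := hcov x (hC 0 le_rfl x h)
      omega
    simp [this, eps]
  | succ m ih =>
    intro A hfin hface hsym B hup hdis hcov C hC hbd
    set b := B m with hb
    set b' : Set (Cell d) := {x | -x ∈ b} with hb'
    set N : Set (Cell d) := {x | x ∉ b ∧ -x ∉ b} with hN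
    have hbup : UpSet b := hup m (by omega)
    have cofneg : ∀ {x y : Cell d}, Cof x y → Cof (-x) (-y) := by
      rintro x y ⟨i, hi, h⟩
      refine ⟨i, by simpa using hi, ?_⟩
      rcases h with h | h
      · right; rw [h]; abel
      · left; rw [h]; abel
    have hCfin : ∀ i ≤ m + 1, FinS (C i) := fun i hi => hfin.subset fun x hx => hC i hi x hx
    -- pointwise decomposition
    have hdec : ∀ c : Chain d, (∀ x, c x ≠ 0 → x ∈ A) → tr b c + tr b' c + tr N c = c := by
      intro c hc
      funext x
      by_cases h0 : c x = 0
      · simp [tr, h0]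
      · have hxA := hc x h0
        have hd : x ∈ b → -x ∉ b := hdis m (by omega) x hxA
        by_cases h1 : x ∈ b
        · have h2 := hd h1
          simp [tr, b', N, h1, h2]
        · by_cases h2 : -x ∈ b
          · simp [tr, b', N, h1, h2]
          · simp [tr, b', N, h1, h2]
    have trnu : ∀ c : Chain d, tr b (nu c) = nu (tr b' c) := by
      intro c; funext x
      have : -x ∈ b' ↔ x ∈ b := by
        change - -x ∈ b ↔ _
        rw [neg_neg]
      simp only [tr, nu]
      split_ifs <;> first | rfl | (exfalso; tauto)
    have trN : ∀ c : Chain d, tr N (nu c) = nu (tr N c) := by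
      intro c; funext x
      have : -x ∈ N ↔ x ∈ N := by
        change (_ ∧ - -x ∉ b) ↔ (_ ∧ _)
        rw [neg_neg, and_comm]
      simp only [tr, nu]
      split_ifs <;> first | rfl | (exfalso; tauto)
    have hAnu : ∀ c : Chain d, (∀ x, c x ≠ 0 → x ∈ A) → (∀ x, nu c x ≠ 0 → x ∈ A) := by
      intro c hc x hx
      have := hsym _ (hc _ hx)
      simpa using this
    have hAbd : ∀ c : Chain d, (∀ x, c x ≠ 0 → x ∈ A) → (∀ x, bd c x ≠ 0 → x ∈ A) := by
      intro c hc x hx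
      by_contra hxA
      apply hx
      have : bd c x = bd 0 x := by
        apply bd_congr
        intro y hy
        by_contra h
        exact hxA (hface x y hy (hc y h))
      rw [this, bd_zero]; rfl
    have c2 : ∀ c : Chain d, c + c = 0 := fun c => by funext x; exact z2 _
    -- kk b' c = kk b c + bd (tr N c) + tr N (bd c)
    have hkk : ∀ c : Chain d, (∀ x, c x ≠ 0 → x ∈ A) →
        kk b (nu c) = nu (kk b c) + nu (bd (tr N c)) + nu (tr N (bd c)) := by
      intro c hc
      have h1 : kk b (nu c) = nu (kk b' c) := by
        simp only [kk, trnu, bd_nu, nu_add]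
      have h2 : kk b' c + kk b c + (bd (tr N c) + tr N (bd c)) = 0 := by
        have e1 := congrArg bd (hdec c hc)
        have e2 := hdec (bd c) (hAbd c hc)
        simp only [bd_add] at e1
        simp only [kk]
        calc _ = (bd (tr b c) + bd (tr b' c) + bd (tr N c)) +
            (tr b (bd c) + tr b' (bd c) + tr N (bd c)) := by abel
          _ = bd c + bd c := by rw [e1, e2]
          _ = 0 := c2 _
      have h3 : kk b' c = kk b c + bd (tr N c) + tr N (bd c) := by
        have h4 := congrArg (· + (kk b c + bd (tr N c) + tr N (bd c))) h2
        simp only [zero_add] at h4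
        rw [← h4]
        calc kk b' c = kk b' c + (kk b c + kk b c) + (bd (tr N c) + bd (tr N c)) +
              (tr N (bd c) + tr N (bd c)) := by simp only [c2, add_zero]
          _ = _ := by abel
      rw [h1, h3]; simp only [nu_add]
    let C' : ℕ → Chain d := fun i => kk b (C (i+1)) + nu (tr N (C i))
    have hC'0 : eps (C' 0) = eps (C 0) := by
      have f0 := hCfin 0 (by omega)
      have f1 := hCfin 1 (by omega)
      have e : C' 0 = bd (tr b (C 1)) + tr b (C 0) + nu (tr b' (C 0)) + nu (tr N (C 0)) := by
        have := hbd 0 (by omega)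
        simp only [C', kk, zero_add] at this ⊢
        rw [this, tr_add, trnu]; abel
      rw [e, eps_add (((f1.tr _).bd.add (f0.tr _)).add (f0.tr _).nu) (f0.tr _).nu,
        eps_add ((f1.tr _).bd.add (f0.tr _)) (f0.tr _).nu,
        eps_add (f1.tr _).bd (f0.tr _), eps_nu, eps_nu, eps_bd (f1.tr _), zero_add,
        ← eps_add (f0.tr _) (f0.tr _), ← eps_add ((f0.tr _).add (f0.tr _)) (f0.tr _),
        hdec _ (hC 0 (by omega))]
    rw [← hC'0]
    refine ih (A ∩ N) (hfin.subset Set.inter_subset_left) ?_ ?_ B (fun j hj => hup j (by omega))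
      (fun j hj x hx => hdis j (by omega) x hx.1) ?_ C' ?_ ?_
    · rintro x y hxy ⟨hyA, hy1, hy2⟩
      exact ⟨hface x y hxy hyA, fun h => hy1 (hbup x y hxy h),
        fun h => hy2 (hbup _ _ (cofneg hxy) h)⟩
    · rintro x ⟨hxA, h1, h2⟩
      exact ⟨hsym x hxA, h2, by simpa using h1⟩
    · rintro x ⟨hxA, h1, h2⟩
      obtain ⟨j, hj, h⟩ := hcov x hxA
      refine ⟨j, ?_, h⟩
      rcases Nat.lt_succ_iff_lt_or_eq.mp hj with h' | h'
      · exact h'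
      · subst h'
        rcases h with h | h
        · exact absurd h h1
        · exact absurd h h2
    · intro i hi x hx
      by_cases hk : kk b (C (i+1)) x = 0
      · have : nu (tr N (C i)) x ≠ 0 := by
          intro h; apply hx; simp [C', hk, h]
        simp only [nu, tr] at this
        have hxN : -x ∈ N := by
          by_contra h; simp [h] at this
        simp only [hxN, if_true] at this
        have hxA := hsym _ (hC i (by omega) _ this)
        rw [neg_neg] at hxA
        exact ⟨hxA, by simpa using hxN.2, hxN.1⟩
      · obtain ⟨h1, y, hxy, hyb, hy⟩ := kk_supp hbup hk
        have hyA := hC (i+1) (by omega) y hy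
        exact ⟨hface x y hxy hyA, h1, fun h =>
          hdis m (by omega) y hyA hyb (hbup _ _ (cofneg hxy) h)⟩
    · intro i hi
      have e1 := hbd (i+1) (by omega)
      have e0 := hbd i (by omega)
      simp only [C']
      rw [bd_add, bd_kk, e1, kk_add, hkk _ (hC (i+1) (by omega)), bd_nu, e0, tr_add, trN]
      simp only [nu_add, nu_nu]
      calc _ = kk b (C (i+1)) + nu (kk b (C (i+1))) + (nu (bd (tr N (C (i+1)))) +
            nu (bd (tr N (C (i+1))))) + (nu (tr N (C i)) + tr N (C i)) := by abel
        _ = _ := by rw [c2]; abel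

end DFT
open Filter Topology

namespace DFT
variable {d : ℕ}

open Classical in
/-- the full grid in the first `i` coordinates -/
noncomputable def MM (i : ℕ) : Chain d := fun x =>
  if (∀ j : Fin d, ((j : ℕ) < i → Odd (x j)) ∧ (i ≤ (j : ℕ) → x j = 0)) then 1 else 0

open Classical in
/-- half of the grid in the first `i+1` coordinates -/
noncomputable def HH (i : ℕ) : Chain d := fun x =>
  if (∀ j : Fin d, ((j : ℕ) ≤ i → Odd (x j)) ∧ ((j : ℕ) = i → 0 < x j) ∧ (i < (j : ℕ) → x j = 0))
  then 1 else 0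

lemma MM_succ (i : ℕ) (hi : i < d) : (MM (i+1) : Chain d) = HH i + nu (HH i) := by
  funext x
  simp only [MM, HH, nu, Pi.add_apply, Pi.neg_apply, odd_neg]
  by_cases h : (∀ j : Fin d, ((j : ℕ) < i + 1 → Odd (x j)) ∧ (i + 1 ≤ (j : ℕ) → x j = 0))
  · rw [if_pos h]
    have hodd := (h ⟨i, hi⟩).1 (by simp)
    have hne : x ⟨i, hi⟩ ≠ 0 := by
      intro h0; rw [h0] at hodd; simp at hodd
    rcases lt_or_gt_of_ne hne with hlt | hlt
    · rw [if_neg, if_pos, zero_add]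
      · intro j
        refine ⟨fun hj => (h j).1 (by omega), fun hj => ?_, fun hj => ?_⟩
        · have : j = ⟨i, hi⟩ := Fin.ext hj
          subst this; omega
        · rw [(h j).2 (by omega)]; rfl
      · intro hcon
        have := (hcon ⟨i, hi⟩).2.1 rfl
        omega
    · rw [if_pos, if_neg, add_zero]
      · intro hcon
        have := (hcon ⟨i, hi⟩).2.1 rfl
        omega
      · intro j
        refine ⟨fun hj => (h j).1 (by omega), fun hj => ?_, fun hj => ?_⟩
        · have : j = ⟨i, hi⟩ := Fin.ext hj
          subst this; omega
        · rw [(h j).2 (by omega)]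
  · rw [if_neg h, if_neg, if_neg, add_zero]
    · intro hcon
      apply h
      intro j
      refine ⟨fun hj => (hcon j).1 (by omega), fun hj => ?_⟩
      have := (hcon j).2.2 (by omega)
      omega
    · intro hcon
      apply h
      intro j
      exact ⟨fun hj => (hcon j).1 (by omega), fun hj => (hcon j).2.2 (by omega)⟩

lemma bd_HH (i : ℕ) (hi : i < d) : bd (HH i : Chain d) = MM i := by
  funext x
  have key : ∀ l : Fin d, (if Even (x l) then (HH i : Chain d) (x + Pi.single l 1) +
      HH i (x - Pi.single l 1) else 0) = if l = ⟨i, hi⟩ then MM i x else 0 := by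
    intro l
    by_cases hl : Even (x l)
    · rw [if_pos hl]
      have hp : ∀ j, (x + Pi.single l 1 : Cell d) j = if j = l then x j + 1 else x j := by
        intro j
        by_cases h : j = l
        · subst h; simp
        · simp [h]
      have hm : ∀ j, (x - Pi.single l 1 : Cell d) j = if j = l then x j - 1 else x j := by
        intro j
        by_cases h : j = l
        · subst h; simp
        · simp [h]
      by_cases hli : l = ⟨i, hi⟩
      · rw [if_pos hli]
        have hlv : (l : ℕ) = i := by rw [hli]
        by_cases hM : (∀ j : Fin d, ((j : ℕ) < i → Odd (x j)) ∧ (i ≤ (j : ℕ) → x j = 0))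
        · have h0 : x l = 0 := (hM l).2 (by omega)
          have e1 : (HH i : Chain d) (x + Pi.single l 1) = 1 := by
            rw [HH, if_pos]
            intro j
            rw [hp]
            by_cases h : j = l
            · subst h; simp [h0, hlv]
            · have : (j : ℕ) ≠ i := fun h' => h (Fin.ext (by omega))
              rw [if_neg h]
              exact ⟨fun _ => (hM j).1 (by omega), fun _ => by omega,
                fun _ => (hM j).2 (by omega)⟩
          have e2 : (HH i : Chain d) (x - Pi.single l 1) = 0 := by
            rw [HH, if_neg]
            intro hcon
            have := (hcon l).2.1 hlv
            rw [hm, if_pos rfl] at this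
            omega
          rw [e1, e2, MM, if_pos hM, add_zero]
        · rw [MM, if_neg hM]
          have e : (HH i : Chain d) (x + Pi.single l 1) = HH i (x - Pi.single l 1) := by
            unfold HH
            congr 1
            apply propext
            constructor
            · intro h j
              by_cases hj : j = l
              · subst hj
                have h2 := (h j).2.1 hlv
                rw [hp, if_pos rfl] at h2
                rw [hm, if_pos rfl]
                have hne : x j ≠ 0 := by
                  intro h0
                  apply hM
                  intro j'
                  have h3 := h j'
                  rw [hp] at h3
                  by_cases hjj : j' = j
                  · subst hjj; exact ⟨fun _ => by omega, fun _ => h0⟩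
                  · rw [if_neg hjj] at h3
                    have : (j' : ℕ) ≠ i := fun h' => hjj (Fin.ext (by omega))
                    exact ⟨fun _ => h3.1 (by omega), fun _ => h3.2.2 (by omega)⟩
                refine ⟨fun _ => hl.sub_odd odd_one, fun _ => ?_, fun _ => by omega⟩
                obtain ⟨q, hq⟩ := hl
                omega
              · have h3 := h j
                rw [hp, if_neg hj] at h3
                rw [hm, if_neg hj]
                exact h3
            · intro h j
              by_cases hj : j = l
              · subst hj
                have h2 := (h j).2.1 hlv
                rw [hm, if_pos rfl] at h2
                rw [hp, if_pos rfl]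
                exact ⟨fun _ => hl.add_odd odd_one, fun _ => by omega, fun _ => by omega⟩
              · have h3 := h j
                rw [hm, if_neg hj] at h3
                rw [hp, if_neg hj]
                exact h3
          rw [e]; exact z2 _
      · rw [if_neg hli]
        have hlv : (l : ℕ) ≠ i := fun h => hli (Fin.ext h)
        have e : (HH i : Chain d) (x + Pi.single l 1) = HH i (x - Pi.single l 1) := by
          unfold HH
          congr 1
          apply propext
          refine forall_congr' fun j => ?_
          rw [hp, hm]
          by_cases hj : j = l
          · subst hj
            rw [if_pos rfl, if_pos rfl]
            have o1 : Odd (x j + 1) := hl.add_odd odd_one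
            have o2 : Odd (x j - 1) := hl.sub_odd odd_one
            have n1 : x j + 1 ≠ 0 := by
              intro h0; rw [h0] at o1; simp at o1
            have n2 : x j - 1 ≠ 0 := by
              intro h0; rw [h0] at o2; simp at o2
            simp [o1, o2, n1, n2, hlv]
          · rw [if_neg hj, if_neg hj]
        rw [e]; exact z2 _
    · rw [if_neg hl]
      split_ifs with h
      · rw [MM, if_neg]
        intro hcon
        apply hl
        rw [(hcon l).2 (by rw [h])]
        simp
      · rfl
  simp only [bd]
  rw [Finset.sum_congr rfl fun l _ => key l]
  simp

/-- closed cube of a cell -/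
def cube (h : ℝ) (x : Cell d) : Set (Fin d → ℝ) :=
  {p | ∀ i, |p i - h * x i| ≤ if Odd (x i) then h else 0}

lemma cube_cof {h : ℝ} (hh : 0 < h) {x y : Cell d} (hxy : Cof x y) : cube h x ⊆ cube h y := by
  obtain ⟨i, hi, hy⟩ := hxy
  intro p hp j
  by_cases hj : j = i
  · subst hj
    have h1 := hp j
    rw [if_neg (by simpa using hi)] at h1
    have h2 : p j = h * x j := by
      have := abs_nonpos_iff.mp h1
      linarith
    rcases hy with hy | hy
    · have e : y j = x j + 1 := by rw [hy]; simp
      have o : Odd (y j) := by rw [e]; exact hi.add_odd odd_one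
      rw [if_pos o, h2, e, abs_le]
      push_cast
      constructor <;> nlinarith
    · have e : y j = x j - 1 := by rw [hy]; simp
      have o : Odd (y j) := by rw [e]; exact hi.sub_odd odd_one
      rw [if_pos o, h2, e, abs_le]
      push_cast
      constructor <;> nlinarith
  · have e : y j = x j := by
      rcases hy with hy | hy <;> rw [hy] <;> simp [hj]
    rw [e]; exact hp j

lemma cube_neg {h : ℝ} {x : Cell d} {p : Fin d → ℝ} (hp : p ∈ cube h x) : -p ∈ cube h (-x) := by
  intro i
  have := hp i
  simp only [Pi.neg_apply, odd_neg, Int.cast_neg]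
  rw [← abs_neg]
  convert this using 2
  ring

lemma cube_dist {h : ℝ} (hh : 0 < h) {x : Cell d} {p q : Fin d → ℝ} (hp : p ∈ cube h x)
    (hq : q ∈ cube h x) : dist p q ≤ 2 * h := by
  rw [dist_pi_le_iff (by positivity)]
  intro i
  rw [Real.dist_eq]
  have h1 : |p i - h * x i| ≤ h := (hp i).trans (by split_ifs <;> linarith)
  have h2 : |q i - h * x i| ≤ h := (hq i).trans (by split_ifs <;> linarith)
  rw [abs_le] at *
  constructor <;> linarith

lemma cube_center {h : ℝ} (hh : 0 < h) (x : Cell d) : (fun i => h * x i) ∈ cube h x := by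
  intro i
  simp only [sub_self, abs_zero]
  split_ifs <;> linarith

lemma finite_cells {h R : ℝ} (hh : 0 < h) (S : Set (Cell d))
    (hS : ∀ x ∈ S, ∃ p ∈ cube h x, ‖p‖ ≤ R) : S.Finite := by
  let N : ℤ := ⌈(R + h) / h⌉
  refine (Set.finite_Icc (fun _ => -N : Cell d) (fun _ => N)).subset ?_
  intro x hx
  obtain ⟨p, hp, hR⟩ := hS x hx
  have key : ∀ i, |x i| ≤ N := by
    intro i
    have h1 : |p i - h * x i| ≤ h := (hp i).trans (by split_ifs <;> linarith)
    have h2 : |p i| ≤ R := (norm_le_pi_norm p i).trans hR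
    have h3 : |h * x i| ≤ R + h := by
      rw [abs_le] at *
      constructor <;> linarith
    rw [abs_mul, abs_of_pos hh] at h3
    have h4 : |(x i : ℝ)| ≤ (R + h) / h := by
      rw [le_div_iff₀ hh]; linarith
    have h5 : ((|x i| : ℤ) : ℝ) ≤ N := by
      push_cast
      exact h4.trans (Int.le_ceil _)
    exact_mod_cast h5
  exact ⟨fun i => (abs_le.mp (key i)).1, fun i => (abs_le.mp (key i)).2⟩

/-- A Borsuk-Ulam type theorem on symmetric neighbourhoods of the origin. -/
theorem borsuk (m : ℕ) (f : (Fin (m+1) → ℝ) → (Fin m → ℝ)) (g : (Fin (m+1) → ℝ) → ℝ)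
    (hf : Continuous f) (hg : Continuous g) (hfo : ∀ x, f (-x) = - f x) (hge : ∀ x, g (-x) = g x)
    (h0 : g 0 < 0) (R : ℝ) (hR : ∀ x, g x ≤ 0 → ‖x‖ ≤ R) : ∃ x, f x = 0 ∧ g x = 0 := by
  by_contra hno
  push Not at hno
  have hR0 : 0 ≤ R := by simpa using hR 0 h0.le
  set D := Metric.closedBall (0 : Fin (m+1) → ℝ) (R+1) with hD
  have hDc : IsCompact D := isCompact_closedBall _ _
  obtain ⟨p0, hp0, hmin⟩ := hDc.exists_isMinOn (f := fun p => max ‖f p‖ |g p|)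
    ⟨0, by simp [hD]; linarith⟩ (by fun_prop)
  set μ := max ‖f p0‖ |g p0| with hμ
  have hμ0 : 0 < μ := by
    by_cases h : f p0 = 0
    · exact lt_max_of_lt_right (abs_pos.mpr (hno p0 h))
    · exact lt_max_of_lt_left (norm_pos_iff.mpr h)
  have hmin' : ∀ p ∈ D, |g p| < μ → μ ≤ ‖f p‖ := by
    intro p hp hgp
    have : μ ≤ max ‖f p‖ |g p| := hmin hp
    rcases le_max_iff.mp this with h | h
    · exact h
    · linarith
  have uf := hDc.uniformContinuousOn_of_continuous hf.continuousOn
  have ug := hDc.uniformContinuousOn_of_continuous hg.continuousOn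
  rw [Metric.uniformContinuousOn_iff] at uf ug
  obtain ⟨δ1, hδ1, uf⟩ := uf μ hμ0
  obtain ⟨δ2, hδ2, ug⟩ := ug μ hμ0
  obtain ⟨h, hh, hhδ1, hhδ2, hh1⟩ : ∃ h : ℝ, 0 < h ∧ 2 * h < δ1 ∧ 2 * h < δ2 ∧ 2 * h ≤ 1 := by
    refine ⟨min (min (δ1/4) (δ2/4)) (1/4), by positivity, ?_, ?_, ?_⟩
    · have : min (min (δ1/4) (δ2/4)) (1/4) ≤ δ1/4 := (min_le_left _ _).trans (min_le_left _ _)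
      linarith
    · have : min (min (δ1/4) (δ2/4)) (1/4) ≤ δ2/4 := (min_le_left _ _).trans (min_le_right _ _)
      linarith
    · have : min (min (δ1/4) (δ2/4)) (1/4) ≤ 1/4 := min_le_right _ _
      linarith
  let U : Set (Cell (m+1)) := {x | ∃ p ∈ cube h x, g p < 0}
  have hUup : UpSet U := by
    rintro x y hxy ⟨p, hp, hgp⟩
    exact ⟨p, cube_cof hh hxy hp, hgp⟩
  have hUneg : ∀ x, -x ∈ U ↔ x ∈ U := by
    have : ∀ x, x ∈ U → -x ∈ U := by
      rintro x ⟨p, hp, hgp⟩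
      exact ⟨-p, cube_neg hp, by rwa [hge]⟩
    intro x
    refine ⟨fun hx => ?_, this x⟩
    have := this _ hx
    rwa [neg_neg] at this
  have hUfin : U.Finite := finite_cells hh U (R := R) fun x ⟨p, hp, hgp⟩ => ⟨p, hp, hR p hgp.le⟩
  let A : Set (Cell (m+1)) := {x | ∀ p ∈ cube h x, p ∈ D ∧ μ ≤ ‖f p‖}
  let B : ℕ → Set (Cell (m+1)) := fun j =>
    {x | ∃ hj : j < m, ∃ p ∈ cube h x, μ / 2 < f p ⟨j, hj⟩}
  let C : ℕ → Chain (m+1) := fun i => kk U (HH i)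
  have c2 : ∀ c : Chain (m+1), c + c = 0 := fun c => by funext x; exact z2 _
  have trnu : ∀ c : Chain (m+1), tr U (nu c) = nu (tr U c) := by
    intro c; funext x
    have := hUneg x
    simp only [tr, nu]
    split_ifs <;> first | rfl | (exfalso; tauto)
  have hfinal := key m A ?_ ?_ ?_ B ?_ ?_ ?_ C ?_ ?_
  · have trfin : ∀ c : Chain (m+1), FinS (tr U c) := by
      intro c
      refine hUfin.subset fun x hx => ?_
      by_contra hxU
      apply hx
      simp [tr, hxU]
    have e1 : eps (C 0) = eps (tr U (MM 0 : Chain (m+1))) := by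
      simp only [C, kk]
      rw [eps_add (trfin _).bd (trfin _), eps_bd (trfin _), bd_HH 0 (by omega), zero_add]
    have h0U : (0 : Cell (m+1)) ∈ U := by
      refine ⟨_, cube_center hh 0, ?_⟩
      convert h0
      simp
    have e2 : eps (tr U (MM 0 : Chain (m+1))) = 1 := by
      unfold eps
      rw [finsum_eq_single _ (0 : Cell (m+1))]
      · simp [par, tr, MM, h0U]
      · intro x hx
        have : (MM 0 : Chain (m+1)) x = 0 := by
          rw [MM, if_neg]
          intro hcon
          apply hx
          funext j
          exact (hcon j).2 (Nat.zero_le _)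
        simp [tr, this]
    rw [e1, e2] at hfinal
    exact one_ne_zero hfinal
  · refine finite_cells hh A (R := R + 1) fun x hx => ⟨_, cube_center hh x, ?_⟩
    have := (hx _ (cube_center hh x)).1
    simpa [hD] using this
  · intro x y hxy hy p hp
    exact hy p (cube_cof hh hxy hp)
  · intro x hx p hp
    have h1 := cube_neg hp
    rw [neg_neg] at h1
    obtain ⟨h2, h3⟩ := hx _ h1
    refine ⟨by simpa [hD] using h2, ?_⟩
    rwa [hfo, norm_neg] at h3
  · rintro j hj x y hxy ⟨hj, p, hp, hfp⟩
    exact ⟨hj, p, cube_cof hh hxy hp, hfp⟩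
  · rintro j hj x hx ⟨_, p, hp, hfp⟩ ⟨_, q, hq, hfq⟩
    have hq' := cube_neg hq
    rw [neg_neg] at hq'
    have h1 := uf p (hx p hp).1 (-q) (hx _ hq').1 ((cube_dist hh hp hq').trans_lt hhδ1)
    have h2 := (dist_le_pi_dist (f p) (f (-q)) ⟨j, hj⟩).trans_lt h1
    rw [hfo, Real.dist_eq, abs_lt, Pi.neg_apply] at h2
    linarith [h2.2]
  · intro x hx
    have h1 := (hx _ (cube_center hh x)).2
    set p : Fin (m+1) → ℝ := fun i => h * x i with hp
    have hpc : p ∈ cube h x := cube_center hh x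
    obtain ⟨j, hj⟩ : ∃ j, μ / 2 < |f p j| := by
      by_contra hcon
      push Not at hcon
      have : ‖f p‖ ≤ μ / 2 := (pi_norm_le_iff_of_nonneg (half_pos hμ0).le).mpr hcon
      linarith
    refine ⟨j, j.2, ?_⟩
    rcases lt_abs.mp hj with h2 | h2
    · exact Or.inl ⟨j.2, p, hpc, h2⟩
    · refine Or.inr ⟨j.2, -p, cube_neg hpc, ?_⟩
      rw [hfo]; exact h2
  · intro i hi x hx
    obtain ⟨hxU, y, hxy, ⟨q, hq, hgq⟩, _⟩ := kk_supp hUup hx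
    intro p hp
    have hpq := cube_dist hh (cube_cof hh hxy hp) hq
    have hqR := hR q hgq.le
    have hpD : p ∈ D := by
      rw [hD, mem_closedBall_zero_iff]
      have : ‖p‖ ≤ ‖q‖ + dist p q := by
        rw [dist_eq_norm]
        calc ‖p‖ = ‖q + (p - q)‖ := by congr 1; abel
          _ ≤ _ := norm_add_le _ _
      linarith
    have hqD : q ∈ D := by
      rw [hD, mem_closedBall_zero_iff]; linarith
    refine ⟨hpD, hmin' p hpD ?_⟩
    have hgp : 0 ≤ g p := by
      by_contra hcon
      exact hxU ⟨p, hp, not_le.mp hcon⟩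
    have h1 := ug p hpD q hqD (hpq.trans_lt hhδ2)
    rw [Real.dist_eq, abs_lt] at h1
    rw [abs_of_nonneg hgp]
    linarith [h1.2]
  · intro i hi
    have h1 : bd (C (i+1)) = kk U (MM (i+1)) := by
      simp only [C]; rw [bd_kk, bd_HH _ (by omega)]
    have h2 : kk U (nu (HH i)) = nu (kk U (HH i)) := by
      simp only [kk, trnu, bd_nu, nu_add]
    rw [h1, MM_succ i (by omega), kk_add, h2]

end DFT
open Filter Topology

namespace DFT

open scoped RealInnerProductSpace in
lemma deform {H : Type*} [NormedAddCommGroup H] [InnerProductSpace ℝ H] [ProperSpace H]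
    (F : H → ℝ) (w : H → H) (hF : ∀ x, HasFDerivAt F (innerSL ℝ (w x)) x) (hw : Continuous w)
    (hwo : ∀ x, w (-x) = - w x) (hFe : ∀ x, F (-x) = F x) (κ : ℝ) (hκ : 0 < κ) (a b b' : ℝ)
    (hbb : b < b') (hs : ∀ x, a ≤ F x → F x ≤ b' → κ ≤ ‖w x‖) (R0 : ℝ) :
    ∃ η : H → H, Continuous η ∧ (∀ x, η (-x) = - η x) ∧ (∀ x, b' ≤ F x → η x = x) ∧
      ∀ x, ‖x‖ ≤ R0 → a ≤ F x → b ≤ F (η x) := by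
  have hFc : Continuous F := continuous_iff_continuousAt.mpr fun x => (hF x).continuousAt
  set R := R0 + (2/κ) * |b' - a| with hRdef
  set D := Metric.closedBall (0 : H) (R+1) with hD
  have hDc : IsCompact D := isCompact_closedBall _ _
  obtain ⟨Mw, hMw⟩ := hDc.exists_bound_of_continuousOn hw.continuousOn
  have uw := hDc.uniformContinuousOn_of_continuous hw.continuousOn
  rw [Metric.uniformContinuousOn_iff] at uw
  obtain ⟨δ, hδ, uw⟩ := uw (κ/2) (by positivity)
  set M := |Mw| + 1 with hM
  have hM0 : 0 < M := by positivity
  have hMw' : ∀ x ∈ D, ‖w x‖ ≤ M := fun x hx =>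
    (hMw x hx).trans ((le_abs_self _).trans (by linarith))
  obtain ⟨s, hs0, hs1, hs2⟩ : ∃ s : ℝ, 0 < s ∧ s * M < δ ∧ s * M ≤ 1 := by
    refine ⟨min (δ / 2) 1 / M, by positivity, ?_, ?_⟩
    · rw [div_mul_cancel₀ _ hM0.ne']
      have := min_le_left (δ/2) 1
      linarith
    · rw [div_mul_cancel₀ _ hM0.ne']
      exact min_le_right _ _
  let χ : H → ℝ := fun x => max 0 (min 1 ((b' - F x) / (b' - b)))
  have hχc : Continuous χ := by fun_prop
  have hχ0 : ∀ x, 0 ≤ χ x := fun x => le_max_left _ _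
  have hχ1 : ∀ x, χ x ≤ 1 := fun x => max_le zero_le_one (min_le_left _ _)
  have hb0 : 0 < b' - b := by linarith
  have hχb : ∀ x, F x ≤ b → χ x = 1 := by
    intro x hx
    have : 1 ≤ (b' - F x) / (b' - b) := by
      rw [le_div_iff₀ hb0]; linarith
    simp only [χ]
    rw [min_eq_left this]; simp
  have hχb' : ∀ x, b' ≤ F x → χ x = 0 := by
    intro x hx
    have : (b' - F x) / (b' - b) ≤ 0 := div_nonpos_of_nonpos_of_nonneg (by linarith) hb0.le
    simp only [χ]
    exact max_eq_left ((min_le_right _ _).trans this)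
  have hχe : ∀ x, χ (-x) = χ x := fun x => by simp only [χ, hFe]
  let st : H → H := fun x => x + (s * χ x) • w x
  have hstc : Continuous st := by fun_prop
  have hsto : ∀ x, st (-x) = - st x := by
    intro x
    simp only [st, hχe, hwo, smul_neg, neg_add]
  have hstb : ∀ x, b' ≤ F x → st x = x := by
    intro x hx
    simp [st, hχb' x hx]
  have gain : ∀ x, ‖x‖ ≤ R → a ≤ F x → F x ≤ b' →
      F x + s * χ x * ‖w x‖ ^ 2 / 2 ≤ F (st x) := by
    intro x hxR hxa hxb
    have hwx := hs x hxa hxb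
    set t := s * χ x with ht
    have ht0 : 0 ≤ t := mul_nonneg hs0.le (hχ0 x)
    have hts : t ≤ s := by
      have := mul_le_mul_of_nonneg_left (hχ1 x) hs0.le
      linarith
    have hxD : x ∈ D := by
      rw [hD, mem_closedBall_zero_iff]; linarith
    have hdisp : ‖t • w x‖ ≤ s * M := by
      rw [norm_smul, Real.norm_of_nonneg ht0]
      exact mul_le_mul hts (hMw' x hxD) (norm_nonneg _) hs0.le
    have hconv : Convex ℝ (D ∩ Metric.ball x δ) :=
      (convex_closedBall _ _).inter (convex_ball _ _)
    have hyD : st x ∈ D ∩ Metric.ball x δ := by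
      refine ⟨?_, ?_⟩
      · rw [hD, mem_closedBall_zero_iff]
        have := norm_add_le x (t • w x)
        simp only [st, ← ht]; linarith
      · rw [Metric.mem_ball, dist_eq_norm]
        simp only [st, ← ht, add_sub_cancel_left]
        linarith
    have hmv := hconv.norm_image_sub_le_of_norm_hasFDerivWithin_le' (f := F)
      (f' := fun z => innerSL ℝ (w z)) (φ := innerSL ℝ (w x)) (C := κ/2)
      (fun z _ => (hF z).hasFDerivWithinAt) (fun z hz => by
        rw [← map_sub, innerSL_apply_norm, ← dist_eq_norm]
        exact (uw z hz.1 x hxD hz.2).le) ⟨hxD, Metric.mem_ball_self hδ⟩ hyD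
    have e1 : st x - x = t • w x := by simp [st, ← ht]
    rw [e1, innerSL_apply_apply, inner_smul_right, real_inner_self_eq_norm_sq, norm_smul,
      Real.norm_of_nonneg ht0, Real.norm_eq_abs, abs_le] at hmv
    have h2 : κ / 2 * (t * ‖w x‖) ≤ t * ‖w x‖ ^ 2 / 2 := by
      have := mul_le_mul_of_nonneg_left hwx (mul_nonneg ht0 (norm_nonneg (w x)))
      nlinarith
    linarith [hmv.1]
  have inv : ∀ x, ‖x‖ ≤ R0 → a ≤ F x → ∀ j : ℕ, F x ≤ F (st^[j] x) ∧
      ‖st^[j] x - x‖ ≤ (2/κ) * (F (st^[j] x) - F x) ∧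
      (b ≤ F (st^[j] x) ∨ F x + j * (s * κ^2/2) ≤ F (st^[j] x)) := by
    intro x hx hxa j
    induction j with
    | zero => simp
    | succ j ih =>
      obtain ⟨h1, h2, h3⟩ := ih
      rw [Function.iterate_succ_apply']
      set v := st^[j] x with hv
      by_cases hvb : b' ≤ F v
      · rw [hstb v hvb]
        exact ⟨h1, h2, Or.inl (by linarith)⟩
      · push Not at hvb
        have hκ2 : 0 < 2/κ := by positivity
        have hvR : ‖v‖ ≤ R := by
          have e : ‖v‖ ≤ ‖x‖ + ‖v - x‖ := by
            calc ‖v‖ = ‖x + (v - x)‖ := by congr 1; abel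
              _ ≤ _ := norm_add_le _ _
          have : (2/κ) * (F v - F x) ≤ (2/κ) * |b' - a| :=
            mul_le_mul_of_nonneg_left (by linarith [le_abs_self (b' - a)]) hκ2.le
          linarith
        have hg := gain v hvR (by linarith) hvb.le
        have hwv := hs v (by linarith) hvb.le
        have ht0 : 0 ≤ s * χ v := mul_nonneg hs0.le (hχ0 v)
        have hg0 : 0 ≤ s * χ v * ‖w v‖ ^ 2 / 2 := by positivity
        refine ⟨by linarith, ?_, ?_⟩
        · have e : ‖st v - x‖ ≤ ‖v - x‖ + s * χ v * ‖w v‖ := by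
            calc ‖st v - x‖ = ‖(v - x) + (s * χ v) • w v‖ := by
                  congr 1; simp only [st]; abel
              _ ≤ _ := norm_add_le _ _
              _ = _ := by rw [norm_smul, Real.norm_of_nonneg ht0]
          have e2 : s * χ v * ‖w v‖ ≤ (2/κ) * (F (st v) - F v) := by
            have : s * χ v * ‖w v‖ * κ ≤ 2 * (F (st v) - F v) := by
              have := mul_le_mul_of_nonneg_left hwv (mul_nonneg ht0 (norm_nonneg (w v)))
              nlinarith
            rw [div_mul_eq_mul_div, le_div_iff₀ hκ]
            exact this
          have e3 : (2/κ) * (F (st v) - F x) =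
            (2/κ) * (F v - F x) + (2/κ) * (F (st v) - F v) := by ring
          linarith
        · by_cases hvb2 : b ≤ F v
          · left; linarith
          · right
            push Not at hvb2
            rw [hχb v hvb2.le] at hg
            have h4 := h3.resolve_left (by linarith)
            have h5 : κ^2 ≤ ‖w v‖^2 := pow_le_pow_left₀ hκ.le hwv 2
            have h6 := mul_le_mul_of_nonneg_left h5 hs0.le
            push_cast
            linarith
  obtain ⟨J, hJ⟩ := exists_nat_gt ((b - a) / (s * κ^2/2))
  have hp : 0 < s * κ^2/2 := by positivity
  rw [div_lt_iff₀ hp] at hJ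
  refine ⟨st^[J], hstc.iterate J, ?_, ?_, ?_⟩
  · intro x
    have : ∀ j : ℕ, st^[j] (-x) = - st^[j] x := by
      intro j
      induction j with
      | zero => rfl
      | succ j ih => rw [Function.iterate_succ_apply', Function.iterate_succ_apply', ih, hsto]
    exact this J
  · intro x hx
    exact Function.iterate_fixed (hstb x hx) J
  · intro x hx hxa
    rcases (inv x hx hxa J).2.2 with h | h <;> linarith

theorem ps_point
    {X : Type*} [NormedAddCommGroup X] [NormedSpace ℝ X]
    (e : ℕ → X) (estar : ℕ → (X →L[ℝ] ℝ))
    (hbiorth : ∀ i j, estar i (e j) = if i = j then (1 : ℝ) else 0)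
    (E : X → ℝ) (E' : X → (X →L[ℝ] ℝ))
    (hE : ∀ u, HasFDerivAt E (E' u) u) (hE'cont : Continuous E')
    (heven : ∀ u, E (-u) = E u) (k m : ℕ) (r ρ : ℝ) (hr : 0 < r) (hrρ : r < ρ)
    (b d : ℝ) (hb0 : b < 0)
    (hB1 : ∀ u : X, u ∈ Submodule.span ℝ (e '' {j | k ≤ j}) → ‖u‖ = ρ → 0 ≤ E u)
    (hb : ∀ u : X, u ∈ Submodule.span ℝ (e '' {j | j ≤ k}) → ‖u‖ = r → E u ≤ b)
    (hd : ∀ u : X, u ∈ Submodule.span ℝ (e '' {j | k ≤ j}) → ‖u‖ ≤ ρ → d ≤ E u)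
    (κ : ℝ) (hκ : 0 < κ) :
    ∃ u ∈ Submodule.span ℝ (e '' {i | i ≤ k + m}), d ≤ E u ∧ E u ≤ b / 2 ∧
      ‖(E' u).comp (Submodule.span ℝ (e '' {i | i ≤ k + m})).subtypeL‖ ≤ κ := by
  by_contra hcon
  push Not at hcon
  let Lm : EuclideanSpace ℝ (Fin (k + m + 1)) →L[ℝ] X := ∑ i : Fin (k + m + 1), (EuclideanSpace.proj i : EuclideanSpace ℝ (Fin (k + m + 1)) →L[ℝ] ℝ).smulRight (e i)
  have hLm : ∀ x : EuclideanSpace ℝ (Fin (k + m + 1)), Lm x = ∑ i : Fin (k + m + 1), x i • e i := by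
    intro x; simp [Lm]
  have hcoord : ∀ (x : EuclideanSpace ℝ (Fin (k + m + 1))) (i : Fin (k + m + 1)), estar i (Lm x) = x i := by
    intro x i
    rw [hLm, map_sum]
    simp only [map_smul, hbiorth, smul_eq_mul, mul_ite, mul_one, mul_zero]
    rw [Finset.sum_eq_single i]
    · simp
    · intro j _ hj
      rw [if_neg]
      intro h; exact hj (Fin.ext h.symm)
    · simp
  have hinj : LinearMap.ker (Lm : EuclideanSpace ℝ (Fin (k + m + 1)) →ₗ[ℝ] X) = ⊥ := by
    rw [LinearMap.ker_eq_bot']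
    intro x hx
    ext i
    rw [← hcoord x i]
    have : Lm x = 0 := hx
    rw [this]; simp
  obtain ⟨K, hK0, hK⟩ := (Lm : EuclideanSpace ℝ (Fin (k + m + 1)) →ₗ[ℝ] X).exists_antilipschitzWith hinj
  have hKx : ∀ x : EuclideanSpace ℝ (Fin (k + m + 1)), ‖x‖ ≤ K * ‖Lm x‖ := by
    intro x
    have := hK.le_mul_dist x 0
    simpa using this
  have hKpos : (0 : ℝ) < K := by exact_mod_cast hK0
  have hmem : ∀ x : EuclideanSpace ℝ (Fin (k + m + 1)), Lm x ∈ Submodule.span ℝ (e '' {i | i ≤ k + m}) := by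
    intro x
    rw [hLm]
    refine Submodule.sum_mem _ fun i _ => Submodule.smul_mem _ _ (Submodule.subset_span ?_)
    exact ⟨i, by have := i.2; simp only [Set.mem_ofPred_eq]; omega, rfl⟩
  have hsurj : ∀ y ∈ Submodule.span ℝ (e '' {i | i ≤ k + m}), ∃ x : EuclideanSpace ℝ (Fin (k + m + 1)), Lm x = y := by
    intro y hy
    have : Submodule.span ℝ (e '' {i | i ≤ k + m}) ≤ LinearMap.range (Lm : EuclideanSpace ℝ (Fin (k + m + 1)) →ₗ[ℝ] X) := by
      rw [Submodule.span_le]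
      rintro _ ⟨i, hi, rfl⟩
      refine ⟨EuclideanSpace.single ⟨i, by simp only [Set.mem_ofPred_eq] at hi; omega⟩ 1, ?_⟩
      change Lm _ = _
      rw [hLm, Finset.sum_eq_single ⟨i, by simp only [Set.mem_ofPred_eq] at hi; omega⟩]
      · simp
      · intro j _ hj; simp [hj]
      · simp
    exact this hy
  let F : EuclideanSpace ℝ (Fin (k + m + 1)) → ℝ := fun x => E (Lm x)
  let w : EuclideanSpace ℝ (Fin (k + m + 1)) → EuclideanSpace ℝ (Fin (k + m + 1)) := fun x => WithLp.toLp 2 (fun i : Fin (k+m+1) => E' (Lm x) (e i))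
  have hinner : ∀ x y : EuclideanSpace ℝ (Fin (k + m + 1)), inner ℝ (w x) y = E' (Lm x) (Lm y) := by
    intro x y
    rw [hLm y, map_sum]
    simp [w, PiLp.inner_apply]
  have hF : ∀ x, HasFDerivAt F (innerSL ℝ (w x)) x := by
    intro x
    have h1 := (hE (Lm x)).comp x Lm.hasFDerivAt
    have h2 : innerSL ℝ (w x) = (E' (Lm x)).comp Lm :=
      ContinuousLinearMap.ext fun y => hinner x y
    rw [h2]
    exact h1
  have hE'odd : ∀ u, E' (-u) = - E' u := by
    intro u
    have h1 : HasFDerivAt (fun v : X => E (-v)) ((E' (-u)).comp (-(ContinuousLinearMap.id ℝ X))) u :=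
      (hE (-u)).comp u (hasFDerivAt_id u).neg
    simp only [heven] at h1
    have h2 := h1.unique (hE u)
    rw [← h2]
    ext v; simp
  have hw : Continuous w := by
    refine (PiLp.continuous_toLp 2 _).comp (continuous_pi fun i => ?_)
    exact (hE'cont.comp Lm.continuous).clm_apply continuous_const
  have hwo : ∀ x, w (-x) = - w x := by
    intro x
    ext i
    simp [w, hE'odd]
  have hFe : ∀ x, F (-x) = F x := by
    intro x; simp [F, heven]
  have hs : ∀ x, d ≤ F x → F x ≤ b/2 → κ / K ≤ ‖w x‖ := by
    intro x h1 h2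
    have h3 := hcon (Lm x) (hmem x) h1 h2
    have h4 : ‖(E' (Lm x)).comp (Submodule.span ℝ (e '' {i | i ≤ k + m})).subtypeL‖ ≤
        ‖w x‖ * K := by
      refine ContinuousLinearMap.opNorm_le_bound _ (by positivity) ?_
      rintro ⟨y, hy⟩
      obtain ⟨z, rfl⟩ := hsurj y hy
      change ‖E' (Lm x) (Lm z)‖ ≤ ‖w x‖ * K * ‖Lm z‖
      rw [← hinner]
      calc _ ≤ ‖w x‖ * ‖z‖ := norm_inner_le_norm _ _
        _ ≤ ‖w x‖ * (K * ‖Lm z‖) := mul_le_mul_of_nonneg_left (hKx z) (norm_nonneg _)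
        _ = _ := by ring
    rw [div_le_iff₀ hKpos]
    linarith
  obtain ⟨η, hηc, hηo, hηid, hηb⟩ := deform F w hF hw hwo hFe (κ / K) (by positivity) d (3*b/4) (b/2)
    (by linarith) hs (K * ρ)
  let ι : (Fin (m+1) → ℝ) → EuclideanSpace ℝ (Fin (k + m + 1)) := fun u => WithLp.toLp 2
    (fun i : Fin (k+m+1) => if h : k ≤ (i : ℕ) then u ⟨i - k, by omega⟩ else 0)
  have hιc : Continuous ι := by
    refine (PiLp.continuous_toLp 2 _).comp (continuous_pi fun i => ?_)
    by_cases h : k ≤ (i : ℕ)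
    · simp only [h, dite_true]; exact continuous_apply _
    · simp only [h, dite_false]; exact continuous_const
  have hιo : ∀ u, ι (-u) = - ι u := by
    intro u
    ext i
    by_cases h : k ≤ (i : ℕ)
    · simp [ι, h]
    · simp [ι, h]
  have hιn : ∀ u, ‖u‖ ≤ ‖ι u‖ := by
    intro u
    rw [pi_norm_le_iff_of_nonneg (norm_nonneg _)]
    intro j
    have h1 := PiLp.norm_apply_le (ι u) ⟨k + j, by omega⟩
    have h2 : (ι u) ⟨k + j, by omega⟩ = u j := by
      simp [ι]
    rwa [h2] at h1
  have hιmem : ∀ u, Lm (ι u) ∈ Submodule.span ℝ (e '' {j | k ≤ j}) := by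
    intro u
    rw [hLm]
    refine Submodule.sum_mem _ fun i _ => ?_
    by_cases h : k ≤ (i : ℕ)
    · exact Submodule.smul_mem _ _ (Submodule.subset_span ⟨i, h, rfl⟩)
    · have : (ι u) i = 0 := by simp [ι, h]
      rw [this, zero_smul]; exact Submodule.zero_mem _
  let γ : (Fin (m+1) → ℝ) → EuclideanSpace ℝ (Fin (k + m + 1)) := fun u => if ‖Lm (ι u)‖ ≤ ρ then η (ι u) else ι u
  have hγc : Continuous γ := by
    refine Continuous.if_le (hηc.comp hιc) hιc (Lm.continuous.comp hιc).norm continuous_const ?_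
    intro u hu
    refine hηid _ ?_
    have := hB1 _ (hιmem u) hu
    change b/2 ≤ E (Lm (ι u))
    linarith
  have hγo : ∀ u, γ (-u) = - γ u := by
    intro u
    simp only [γ, hιo, map_neg, norm_neg, hηo]
    split_ifs <;> rfl
  have hγ0 : γ 0 = 0 := by
    have h1 := hγo 0
    rw [neg_zero] at h1
    have h2 : (2 : ℝ) • γ 0 = 0 := by
      rw [two_smul]; nth_rewrite 2 [h1]; exact add_neg_cancel _
    exact (smul_eq_zero.mp h2).resolve_left two_ne_zero
  have hin : ∀ u, ‖Lm (γ u)‖ ≤ r → ‖Lm (ι u)‖ ≤ ρ := by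
    intro u hu
    by_contra h
    simp only [γ, h, if_false] at hu
    linarith
  obtain ⟨u, hu1, hu2⟩ := borsuk m (fun u j => γ u ⟨k + 1 + j, by omega⟩)
    (fun u => ‖Lm (γ u)‖ - r)
    (continuous_pi fun j => (EuclideanSpace.proj (⟨k+1+j, by omega⟩ : Fin (k+m+1)) :
      EuclideanSpace ℝ (Fin (k+m+1)) →L[ℝ] ℝ).continuous.comp hγc)
    ((Lm.continuous.comp hγc).norm.sub continuous_const)
    (fun u => by funext j; simp [hγo]) (fun u => by simp [hγo]) (by simp [hγ0, hr]) (K * ρ)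
    (fun u hu => by
      have h1 := hin u (by linarith)
      exact (hιn u).trans ((hKx _).trans (mul_le_mul_of_nonneg_left h1 hKpos.le)))
  have hun : ‖Lm (γ u)‖ = r := by linarith
  have hY : Lm (γ u) ∈ Submodule.span ℝ (e '' {j | j ≤ k}) := by
    rw [hLm]
    refine Submodule.sum_mem _ fun i _ => ?_
    by_cases h : (i : ℕ) ≤ k
    · exact Submodule.smul_mem _ _ (Submodule.subset_span ⟨i, h, rfl⟩)
    · have h2 := congrFun hu1 ⟨i - (k+1), by omega⟩
      have h3 : (⟨k + 1 + (i - (k+1)), by omega⟩ : Fin (k+m+1)) = i := Fin.ext (by simp; omega)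
      simp only [h3, Pi.zero_apply] at h2
      rw [h2, zero_smul]; exact Submodule.zero_mem _
  have h1 := hb _ hY hun
  have h2 := hin u hun.le
  have h3 : γ u = η (ι u) := by simp only [γ, h2, if_true]
  have h4 := hηb (ι u) ((hKx _).trans (mul_le_mul_of_nonneg_left h2 hKpos.le))
    (hd _ (hιmem u) h2)
  rw [← h3] at h4
  change 3*b/4 ≤ E (Lm (γ u)) at h4
  linarith

end DFT
open Filter Topology
/-- Dual Fountain Theorem: Let `X` be a real reflexive separable Banach space
with a biorthogonal system `(e_j, e_j*)` whose spans are dense in `X` and `X*`, let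
`Y_k = span{e_j : j ≤ k}` and `Z_k = closure (span{e_j : j ≥ k})`. Let `E : X → ℝ` be `C¹`
and even. Suppose there is `k₀` such that for each `k ≥ k₀` there are `ρ_k > r_k > 0` with:
`(B₁)` `inf{E u : u ∈ Z_k, ‖u‖ = ρ_k} ≥ 0`;
`(B₂)` `b_k := max{E u : u ∈ Y_k, ‖u‖ = r_k} < 0`;
`(B₃)` `d_k := inf{E u : u ∈ Z_k, ‖u‖ ≤ ρ_k} → 0`;
`(B₄)` `E` satisfies the `(PS)_c^*` condition w.r.t. `(Y_n)` for every `c ∈ [d_{k₀}, 0)`.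
Then `E` has a sequence of critical points whose (negative) critical values converge to `0`. -/
theorem dual_fountain_theorem
    {X : Type*} [NormedAddCommGroup X] [NormedSpace ℝ X] [CompleteSpace X]
    [TopologicalSpace.SeparableSpace X]
    (hreflexive : Function.Surjective (NormedSpace.inclusionInDoubleDual ℝ X))
    (e : ℕ → X) (estar : ℕ → (X →L[ℝ] ℝ))
    (hdense : Dense (Submodule.span ℝ (Set.range e) : Set X))
    (hdense' : Dense (Submodule.span ℝ (Set.range estar) : Set (X →L[ℝ] ℝ)))
    (hbiorth : ∀ i j, estar i (e j) = if i = j then (1 : ℝ) else 0)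
    (E : X → ℝ) (E' : X → (X →L[ℝ] ℝ))
    (hE : ∀ u, HasFDerivAt E (E' u) u) (hE'cont : Continuous E')
    (heven : ∀ u, E (-u) = E u)
    (k₀ : ℕ) (r ρ : ℕ → ℝ) (hr : ∀ k ≥ k₀, 0 < r k) (hrρ : ∀ k ≥ k₀, r k < ρ k)
    (b d : ℕ → ℝ)
    -- (B₁): inf{E u : u ∈ Z_k, ‖u‖ = ρ_k} ≥ 0
    (hB1 : ∀ k ≥ k₀, ∀ u : X,
      u ∈ closure (Submodule.span ℝ (e '' {j | k ≤ j}) : Set X) → ‖u‖ = ρ k → 0 ≤ E u)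
    -- b_k is the maximum of E on {u ∈ Y_k : ‖u‖ = r_k}
    (hb : ∀ k ≥ k₀, IsLUB {y : ℝ | ∃ u : X,
      u ∈ Submodule.span ℝ (e '' {j | j ≤ k}) ∧ ‖u‖ = r k ∧ E u = y} (b k))
    -- (B₂): b_k < 0
    (hB2 : ∀ k ≥ k₀, b k < 0)
    -- d_k is the infimum of E on {u ∈ Z_k : ‖u‖ ≤ ρ_k}
    (hd : ∀ k ≥ k₀, IsGLB {y : ℝ | ∃ u : X,
      u ∈ closure (Submodule.span ℝ (e '' {j | k ≤ j}) : Set X) ∧ ‖u‖ ≤ ρ k ∧ E u = y} (d k))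
    -- (B₃): d_k → 0 as k → +∞
    (hB3 : Tendsto d atTop (𝓝 0))
    -- (B₄): (PS)_c^* condition w.r.t. (Y_n) for every c ∈ [d_{k₀}, 0)
    (hB4 : ∀ c : ℝ, d k₀ ≤ c → c < 0 →
      ∀ (nj : ℕ → ℕ) (u : ℕ → X), Tendsto nj atTop atTop →
        (∀ j, u j ∈ Submodule.span ℝ (e '' {i | i ≤ nj j})) →
        Tendsto (fun j => E (u j)) atTop (𝓝 c) →
        Tendsto (fun j =>
          ‖(E' (u j)).comp (Submodule.span ℝ (e '' {i | i ≤ nj j})).subtypeL‖)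
          atTop (𝓝 0) →
        ∃ (v : X) (σ : ℕ → ℕ), StrictMono σ ∧ Tendsto (u ∘ σ) atTop (𝓝 v) ∧ E' v = 0) :
    ∃ u : ℕ → X, (∀ k, E' (u k) = 0) ∧ (∀ k, E (u k) < 0) ∧
      Tendsto (fun k => E (u k)) atTop (𝓝 0) := by
  have hEc : Continuous E := continuous_iff_continuousAt.mpr fun x => (hE x).continuousAt
  have hd0 : d k₀ < 0 := by
    have hne : e k₀ ≠ 0 := by
      intro h
      have := hbiorth k₀ k₀
      simp [h] at this
    have hn : ‖e k₀‖ ≠ 0 := norm_ne_zero_iff.mpr hne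
    have hr0 := hr k₀ le_rfl
    have hnorm : ‖(r k₀ / ‖e k₀‖) • e k₀‖ = r k₀ := by
      rw [norm_smul, Real.norm_of_nonneg (by positivity), div_mul_cancel₀ _ hn]
    have h1 := (hb k₀ le_rfl).1 ⟨(r k₀ / ‖e k₀‖) • e k₀, Submodule.smul_mem _ _
      (Submodule.subset_span ⟨k₀, le_refl k₀, rfl⟩), hnorm, rfl⟩
    have h2 := (hd k₀ le_rfl).1 ⟨(r k₀ / ‖e k₀‖) • e k₀, subset_closure (Submodule.smul_mem _ _
      (Submodule.subset_span ⟨k₀, le_refl k₀, rfl⟩)), hnorm.trans_le (hrρ k₀ le_rfl).le, rfl⟩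
    have h3 := hB2 k₀ le_rfl
    linarith
  obtain ⟨k₁, hk₁⟩ := eventually_atTop.mp ((hB3.eventually (lt_mem_nhds hd0)).and
    (eventually_ge_atTop k₀))
  have main : ∀ k, k₁ ≤ k → ∃ v : X, E' v = 0 ∧ d k ≤ E v ∧ E v ≤ b k / 2 := by
    intro k hk
    obtain ⟨hdk, hkk⟩ := hk₁ k hk
    have hps := fun n : ℕ => DFT.ps_point e estar hbiorth E E' hE hE'cont heven k n (r k) (ρ k)
      (hr k hkk) (hrρ k hkk) (b k) (d k) (hB2 k hkk)
      (fun u hu h => hB1 k hkk u (subset_closure hu) h)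
      (fun u hu h => (hb k hkk).1 ⟨u, hu, h, rfl⟩)
      (fun u hu h => (hd k hkk).1 ⟨u, subset_closure hu, h, rfl⟩)
      (1 / ((n : ℝ) + 1)) (by positivity)
    choose u hu1 hu2 hu3 hu4 using hps
    obtain ⟨c, hc, φ, hφ, hlim⟩ := (isCompact_Icc (a := d k) (b := b k / 2)).tendsto_subseq
      (x := fun n => E (u n)) (fun n => ⟨hu2 n, hu3 n⟩)
    have hbk := hB2 k hkk
    obtain ⟨v, σ, hσ, hv, hv0⟩ := hB4 c (by linarith [hc.1]) (by linarith [hc.2])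
      (fun j => k + φ j) (fun j => u (φ j))
      (tendsto_atTop_mono (fun j => Nat.le_add_left _ _) hφ.tendsto_atTop)
      (fun j => hu1 (φ j)) hlim
      (squeeze_zero (fun j => ContinuousLinearMap.opNorm_nonneg _) (fun j => hu4 (φ j))
        (tendsto_one_div_add_atTop_nhds_zero_nat.comp hφ.tendsto_atTop))
    have h1 : Tendsto (fun j => E (u (φ (σ j)))) atTop (𝓝 (E v)) := (hEc.tendsto v).comp hv
    have h2 : Tendsto (fun j => E (u (φ (σ j)))) atTop (𝓝 c) := hlim.comp hσ.tendsto_atTop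
    have h3 := tendsto_nhds_unique h1 h2
    exact ⟨v, hv0, h3 ▸ hc.1, h3 ▸ hc.2⟩
  choose! v hv0 hv1 hv2 using main
  have hneg : ∀ j, E (v (k₁ + j)) < 0 := by
    intro j
    have h1 := hv2 (k₁ + j) (Nat.le_add_right _ _)
    have h2 := hB2 (k₁ + j) (hk₁ _ (Nat.le_add_right _ _)).2
    linarith
  refine ⟨fun j => v (k₁ + j), fun j => hv0 _ (Nat.le_add_right _ _), hneg, ?_⟩
  refine tendsto_of_tendsto_of_tendsto_of_le_of_le
    (hB3.comp (tendsto_atTop_mono (fun j => Nat.le_add_left j k₁) tendsto_id))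
    tendsto_const_nhds (fun j => hv1 _ (Nat.le_add_right _ _)) (fun j => (hneg j).le)
end

section
/- Let κ ≥ 2. For all real numbers x, y, one has (|x|^{κ−2}x − |y|^{κ−2}y)(x − y) ≥ (1/2)^κ |x − y|^κ. -/
/-- For `κ ≥ 2` and all real `x, y`,
`(|x|^{κ-2}x - |y|^{κ-2}y)(x - y) ≥ (1/2)^κ |x - y|^κ`.
Powers are real powers (`Real.rpow`); `|x| ^ (κ - 2) * x = 0` when `x = 0`. -/
theorem plaplacian_monotonicity_inequality_two_le
    (κ : ℝ) (hκ : 2 ≤ κ) (x y : ℝ) :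
    (1 / 2 : ℝ) ^ κ * |x - y| ^ κ ≤
      (|x| ^ (κ - 2) * x - |y| ^ (κ - 2) * y) * (x - y) := by
  have hs : 0 ≤ κ - 2 := by linarith
  have ht : 0 ≤ 1 / 2 * |x - y| := by positivity
  have e1 : (1 / 2 : ℝ) ^ κ * |x - y| ^ κ
      = (1 / 2 * |x - y|) ^ (κ - 2) * ((x - y) ^ 2 / 4) := by
    rw [← Real.mul_rpow (by norm_num) (abs_nonneg _)]
    have h := Real.rpow_add_of_nonneg ht hs (by norm_num : (0 : ℝ) ≤ 2)
    rw [sub_add_cancel] at h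
    rw [h, Real.rpow_two, mul_pow, sq_abs]
    ring
  have ha : 0 ≤ |x| ^ (κ - 2) := by positivity
  have hb : 0 ≤ |y| ^ (κ - 2) := by positivity
  have hadd : |x - y| ≤ |x| + |y| := abs_sub x y
  have hle : (1 / 2 * |x - y|) ^ (κ - 2) ≤ |x| ^ (κ - 2) + |y| ^ (κ - 2) := by
    rcases le_total |x| |y| with h | h
    · have := Real.rpow_le_rpow ht (by linarith : 1 / 2 * |x - y| ≤ |y|) hs
      linarith
    · have := Real.rpow_le_rpow ht (by linarith : 1 / 2 * |x - y| ≤ |x|) hs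
      linarith
  have hmono : 0 ≤ (|x| ^ (κ - 2) - |y| ^ (κ - 2)) * (x ^ 2 - y ^ 2) := by
    rcases le_total |x| |y| with h | h
    · have h1 := Real.rpow_le_rpow (abs_nonneg x) h hs
      exact mul_nonneg_of_nonpos_of_nonpos (by linarith) (by linarith [sq_le_sq.2 h])
    · have h1 := Real.rpow_le_rpow (abs_nonneg y) h hs
      exact mul_nonneg (by linarith) (by linarith [sq_le_sq.2 h])
  rw [e1]
  have h3 := mul_le_mul_of_nonneg_right hle (by positivity : 0 ≤ (x - y) ^ 2 / 4)
  have h4 := mul_nonneg (add_nonneg ha hb) (sq_nonneg (x - y))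
  linarith
end

section
/- Let M : [0,∞) → ℝ be continuous with M(t) ≥ m₀ for some m₀ > 0 and all t ≥ 0, let 0 < ω < 1, and set M̂(t) = ∫₀ᵗ M(s) ds. Assume M̂(t) ≥ (1−ω) M(t) t for all t > 0. Then the function t ↦ M̂(t)/t^{1/(1−ω)} is nonincreasing on (0,∞); in particular, for every t₀ > 0 and all t ≥ t₀, M̂(t) ≤ (M̂(t₀)/t₀^{1/(1−ω)}) · t^{1/(1−ω)}. -/
/-- Let `M : [0,∞) → ℝ` be continuous with `M(t) ≥ m₀ > 0`, let `0 < ω < 1`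
and `M̂(t) = ∫₀ᵗ M(s) ds`. If `M̂(t) ≥ (1-ω) M(t) t` for all `t > 0`, then
`t ↦ M̂(t) / t^{1/(1-ω)}` is nonincreasing on `(0,∞)`; in particular for every `t₀ > 0`
and all `t ≥ t₀`, `M̂(t) ≤ (M̂(t₀)/t₀^{1/(1-ω)}) t^{1/(1-ω)}`. -/
theorem primitive_over_power_antitone
    (M : ℝ → ℝ) (m₀ ω : ℝ)
    (hMc : ContinuousOn M (Set.Ici 0)) (hm₀ : 0 < m₀)
    (hlow : ∀ t ≥ (0 : ℝ), m₀ ≤ M t)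
    (hω₀ : 0 < ω) (hω₁ : ω < 1)
    (hC₁ : ∀ t > (0 : ℝ), (1 - ω) * M t * t ≤ ∫ s in (0 : ℝ)..t, M s) :
    AntitoneOn (fun t : ℝ => (∫ s in (0 : ℝ)..t, M s) / t ^ (1 / (1 - ω))) (Set.Ioi 0) ∧
      ∀ t₀ > (0 : ℝ), ∀ t ≥ t₀,
        (∫ s in (0 : ℝ)..t, M s) ≤
          ((∫ s in (0 : ℝ)..t₀, M s) / t₀ ^ (1 / (1 - ω))) * t ^ (1 / (1 - ω)) := by
  have hω : 0 < 1 - ω := by linarith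
  have hder : ∀ t > (0 : ℝ), HasDerivAt (fun t : ℝ => ∫ s in (0 : ℝ)..t, M s) (M t) t := by
    intro t ht
    refine intervalIntegral.integral_hasDerivAt_right ?_ ?_ ?_
    · apply ContinuousOn.intervalIntegrable
      apply hMc.mono
      rw [Set.uIcc_of_le ht.le]
      exact Set.Icc_subset_Ici_self
    · exact ContinuousOn.stronglyMeasurableAtFilter isOpen_Ioi
        (hMc.mono Set.Ioi_subset_Ici_self) t ht
    · exact hMc.continuousAt (Ici_mem_nhds ht)
  have hq : ∀ t > (0 : ℝ), HasDerivAt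
      (fun t : ℝ => (∫ s in (0 : ℝ)..t, M s) / t ^ (1 / (1 - ω)))
      ((M t * t ^ (1 / (1 - ω)) - (∫ s in (0 : ℝ)..t, M s) *
        ((1 / (1 - ω)) * t ^ (1 / (1 - ω) - 1))) / (t ^ (1 / (1 - ω))) ^ 2) t := by
    intro t ht
    exact (hder t ht).div (Real.hasDerivAt_rpow_const (Or.inl ht.ne'))
      (Real.rpow_pos_of_pos ht _).ne'
  have hanti : AntitoneOn (fun t : ℝ => (∫ s in (0 : ℝ)..t, M s) / t ^ (1 / (1 - ω)))
      (Set.Ioi 0) := by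
    apply antitoneOn_of_deriv_nonpos (convex_Ioi 0)
    · exact fun t ht => (hq t ht).continuousAt.continuousWithinAt
    · rw [interior_Ioi]
      exact fun t ht => (hq t ht).differentiableAt.differentiableWithinAt
    · rw [interior_Ioi]
      intro t ht
      have ht' : 0 < t := ht
      rw [(hq t ht).deriv]
      apply div_nonpos_of_nonpos_of_nonneg _ (sq_nonneg _)
      have h1 : t ^ (1 / (1 - ω)) = t ^ (1 / (1 - ω) - 1) * t := by
        rw [Real.rpow_sub_one ht'.ne', div_mul_cancel₀ _ ht'.ne']
      have h2 : M t * t ≤ (∫ s in (0 : ℝ)..t, M s) * (1 / (1 - ω)) := by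
        rw [mul_one_div, le_div_iff₀ hω]
        linarith [hC₁ t ht]
      have h3 := mul_le_mul_of_nonneg_right h2 (Real.rpow_pos_of_pos ht' (1 / (1 - ω) - 1)).le
      rw [h1]
      linarith
  refine ⟨hanti, fun t₀ ht₀ t ht => ?_⟩
  have htp : 0 < t := lt_of_lt_of_le ht₀ ht
  have h := hanti (Set.mem_Ioi.2 ht₀) (Set.mem_Ioi.2 htp) ht
  exact (div_le_iff₀ (Real.rpow_pos_of_pos htp _)).1 h
end
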